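/- arXiv:2009.02712 — 2 statements merged into one kernel-verified Lean document; each statement's English description precedes it below -/
import Mathlib

section
/- Let 0 < ρ₀ < 1, λ > 0, t₀ ≥ 2, and set B₁ = 43, B₂ = 4.6. Then for every ρ ∈ [ρ₀, 1), the function ρ ↦ E_ρ(−λ t₀^ρ) is differentiable at ρ and its derivative satisfies d/dρ E_ρ(−λ t₀^ρ) < −1/(λ t₀^ρ) + (B₁/ρ + B₂ ln t₀)/(λ t₀^ρ)². -/
open Set Real

/-- The Mittag-Leffler function `E_ρ(z) = ∑_{k=0}^∞ z^k / Γ(ρk + 1)`. -/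
noncomputable def mittagLeffler (ρ z : ℝ) : ℝ := ∑' k : ℕ, z ^ k / Real.Gamma (ρ * k + 1)

/-! ### Gamma and digamma facts -/

lemma ml_gamma_lower (y M : ℝ) (hy : 0 ≤ y) (hM : 0 < M) :
    M ^ y * Real.exp (-(M + 1)) ≤ Real.Gamma (y + 1) := by
  rw [Real.Gamma_eq_integral (by linarith)]
  have hIntgr := Real.GammaIntegral_convergent (s := y + 1) (by linarith)
  have h1 : ∫ x in Set.Ioc M (M+1), M ^ y * Real.exp (-(M + 1)) = M ^ y * Real.exp (-(M + 1)) := by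
    rw [MeasureTheory.setIntegral_const]
    simp
  rw [← h1]
  calc _ ≤ ∫ x in Set.Ioc M (M+1), Real.exp (-x) * x ^ (y + 1 - 1) := by
        apply MeasureTheory.setIntegral_mono_on
        · exact MeasureTheory.integrable_const _
        · exact hIntgr.mono_set (fun x hx => lt_trans hM hx.1)
        · exact measurableSet_Ioc
        · intro x hx
          rw [mul_comm]
          apply mul_le_mul
          · exact Real.exp_le_exp.2 (by linarith [hx.2])
          · rw [add_sub_cancel_right]
            exact Real.rpow_le_rpow hM.le hx.1.le hy
          · positivity
          · positivity
    _ ≤ _ := by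
        apply MeasureTheory.setIntegral_mono_set hIntgr
        · filter_upwards [MeasureTheory.self_mem_ae_restrict measurableSet_Ioi] with x hx
          have : (0:ℝ) < x := hx
          simp only [Pi.zero_apply]
          positivity
        · exact Filter.Eventually.of_forall (fun x hx => lt_trans hM hx.1)

/-- real digamma function -/
noncomputable def mlPsi (y : ℝ) : ℝ := deriv Real.Gamma y / Real.Gamma y

lemma ml_gamma_diff {y : ℝ} (hy : 0 < y) : DifferentiableAt ℝ Real.Gamma y :=
  Real.differentiableAt_Gamma (fun m => by have : (0:ℝ) ≤ m := m.cast_nonneg; linarith)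

lemma ml_gamma_hasDeriv {y : ℝ} (hy : 0 < y) :
    HasDerivAt Real.Gamma (mlPsi y * Real.Gamma y) y := by
  have h := (ml_gamma_diff hy).hasDerivAt
  have : mlPsi y * Real.Gamma y = deriv Real.Gamma y := by
    unfold mlPsi
    field_simp [(Real.Gamma_pos_of_pos hy).ne']
  rwa [this]

lemma mlPsi_mono : MonotoneOn mlPsi (Set.Ioi 0) := by
  have hd : ∀ x ∈ Set.Ioi (0:ℝ), HasDerivAt (Real.log ∘ Real.Gamma) (mlPsi x) x := by
    intro x hx
    have h := (ml_gamma_hasDeriv hx).log (Real.Gamma_pos_of_pos hx).ne'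
    have e : mlPsi x * Real.Gamma x / Real.Gamma x = mlPsi x := by
      field_simp [(Real.Gamma_pos_of_pos hx).ne']
    rw [e] at h
    exact h
  have h := Real.convexOn_log_Gamma.monotoneOn_deriv (fun x hx => (hd x hx).differentiableAt)
  intro x hx y hy hxy
  have := h hx hy hxy
  rwa [(hd x hx).deriv, (hd y hy).deriv] at this

lemma mlPsi_add_one {y : ℝ} (hy : 0 < y) : mlPsi (y + 1) = mlPsi y + 1 / y := by
  have h1 := ml_gamma_hasDeriv (show 0 < y + 1 by linarith)
  have h2 : HasDerivAt (fun z => Real.Gamma (z + 1)) (mlPsi (y+1) * Real.Gamma (y+1)) y := by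
    simpa using h1.comp_add_const y 1
  have h3 : HasDerivAt (fun z => z * Real.Gamma z) (1 * Real.Gamma y + y * (mlPsi y * Real.Gamma y)) y :=
    (hasDerivAt_id y).mul (ml_gamma_hasDeriv hy)
  have h4 : (fun z => Real.Gamma (z + 1)) =ᶠ[nhds y] (fun z => z * Real.Gamma z) := by
    filter_upwards [lt_mem_nhds hy] with z hz
    exact Real.Gamma_add_one hz.ne'
  have h5 := (h3.congr_of_eventuallyEq h4).unique h2
  rw [Real.Gamma_add_one hy.ne'] at h5
  have hg := Real.Gamma_pos_of_pos hy
  have : mlPsi (y+1) * y = 1 + y * mlPsi y := by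
    apply mul_right_cancel₀ hg.ne'
    linarith
  field_simp
  linarith

lemma mlPsi_one : mlPsi 1 = - Real.eulerMascheroniConstant := by
  rw [Real.eulerMascheroniConstant_eq_neg_deriv, mlPsi, Real.Gamma_one]; ring

/-- the integrand of the Gauss formula -/
noncomputable def mlG (m b : ℝ) : ℝ := (1 - b ^ m) / (1 - b)

lemma mlG_nonneg {m b : ℝ} (hm : 0 ≤ m) (hb : b ∈ Set.Ioo (0:ℝ) 1) : 0 ≤ mlG m b := by
  have := Real.rpow_le_one hb.1.le hb.2.le hm
  exact div_nonneg (by linarith) (by linarith [hb.2])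

lemma mlG_le {m b : ℝ} (hm : 0 ≤ m) (hb : b ∈ Set.Ioo (0:ℝ) 1) : mlG m b ≤ m + 1 := by
  have h0 : 0 < 1 - b := by linarith [hb.2]
  rw [mlG, div_le_iff₀ h0]
  rcases le_total m 1 with h | h
  · have : b ^ (1:ℝ) ≤ b ^ m := Real.rpow_le_rpow_of_exponent_ge hb.1 hb.2.le h
    rw [Real.rpow_one] at this
    nlinarith
  · have := one_add_mul_self_le_rpow_one_add (s := b - 1) (by linarith [hb.1]) h
    rw [add_sub_cancel] at this
    nlinarith

lemma mlG_integrable {m : ℝ} (hm : 0 ≤ m) : MeasureTheory.IntegrableOn (mlG m) (Set.Ioo 0 1) := by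
  apply MeasureTheory.Measure.integrableOn_of_bounded (M := m + 1) (by simp)
  · apply Measurable.aestronglyMeasurable
    unfold mlG
    fun_prop
  · filter_upwards [MeasureTheory.self_mem_ae_restrict measurableSet_Ioo] with x hx
    rw [Real.norm_of_nonneg (mlG_nonneg hm hx)]
    exact mlG_le hm hx

noncomputable def mlPhi (m : ℝ) : ℝ := ∫ b in Set.Ioo (0:ℝ) 1, mlG m b

lemma mlPhi_nonneg {m : ℝ} (hm : 0 ≤ m) : 0 ≤ mlPhi m :=
  MeasureTheory.setIntegral_nonneg measurableSet_Ioo (fun _ hb => mlG_nonneg hm hb)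

lemma mlPhi_le {m : ℝ} (hm : 0 ≤ m) : mlPhi m ≤ m + 1 := by
  have h : ∫ b in Set.Ioo (0:ℝ) 1, (m + 1) = m + 1 := by
    rw [MeasureTheory.setIntegral_const]; simp
  rw [← h]
  exact MeasureTheory.setIntegral_mono_on (mlG_integrable hm)
    (MeasureTheory.integrableOn_const (by simp) (by simp)) measurableSet_Ioo (fun b hb => mlG_le hm hb)

lemma mlPhi_zero : mlPhi 0 = 0 := by
  simp [mlPhi, mlG]

lemma mlPhi_mono {m n : ℝ} (hm : 0 ≤ m) (hmn : m ≤ n) : mlPhi m ≤ mlPhi n := by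
  apply MeasureTheory.setIntegral_mono_on (mlG_integrable hm) (mlG_integrable (hm.trans hmn)) measurableSet_Ioo
  intro b hb
  have h0 : 0 < 1 - b := by linarith [hb.2]
  have : b ^ n ≤ b ^ m := Real.rpow_le_rpow_of_exponent_ge hb.1 hb.2.le hmn
  unfold mlG
  gcongr

lemma ml_integral_rpow {m : ℝ} (hm : -1 < m) : ∫ b in Set.Ioo (0:ℝ) 1, b ^ m = 1 / (m + 1) := by
  rw [← MeasureTheory.integral_Ioc_eq_integral_Ioo, ← intervalIntegral.integral_of_le zero_le_one,
    integral_rpow (Or.inl hm)]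
  rw [Real.zero_rpow (by linarith)]; simp

lemma ml_integrable_rpow {m : ℝ} (hm : -1 < m) :
    MeasureTheory.IntegrableOn (fun b : ℝ => b ^ m) (Set.Ioo (0:ℝ) 1) := by
  rw [← integrableOn_Ioc_iff_integrableOn_Ioo, ← intervalIntegrable_iff_integrableOn_Ioc_of_le zero_le_one]
  exact intervalIntegral.intervalIntegrable_rpow' hm

lemma mlPhi_add_one {m : ℝ} (hm : 0 ≤ m) : mlPhi (m + 1) = mlPhi m + 1 / (m + 1) := by
  rw [← ml_integral_rpow (show -1 < m by linarith)]
  unfold mlPhi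
  rw [← MeasureTheory.integral_add (mlG_integrable hm) (ml_integrable_rpow (by linarith))]
  apply MeasureTheory.setIntegral_congr_fun measurableSet_Ioo
  intro b hb
  have h0 : 0 < 1 - b := by linarith [hb.2]
  simp only [mlG]
  rw [Real.rpow_add_one hb.1.ne']
  field_simp
  ring

lemma mlPhi_eq {m : ℝ} (hm : 0 ≤ m) : mlPhi m = mlPsi (m + 1) + Real.eulerMascheroniConstant := by
  set d : ℝ → ℝ := fun m => mlPhi m - (mlPsi (m + 1) + Real.eulerMascheroniConstant) with hd
  have hper : ∀ y, 0 ≤ y → d (y + 1) = d y := by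
    intro y hy
    simp only [hd]
    rw [mlPhi_add_one hy, mlPsi_add_one (show 0 < y + 1 by linarith)]
    ring
  have hpern : ∀ n : ℕ, ∀ y, 0 ≤ y → d (y + n) = d y := by
    intro n
    induction n with
    | zero => intro y _; simp
    | succ k ih =>
      intro y hy
      push_cast
      rw [← add_assoc, hper _ (by positivity), ih y hy]
  have h0 : d 0 = 0 := by simp [hd, mlPhi_zero, mlPsi_one]
  have hsmall : ∀ n : ℕ, |d m| ≤ 1 / ((⌊m⌋₊ + n : ℕ) + 1 : ℝ) := by
    intro n
    set N : ℕ := ⌊m⌋₊ + n with hN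
    have e1 : d (N : ℝ) = 0 := by
      have := hpern N 0 le_rfl
      rwa [zero_add, h0] at this
    have e2 := hpern n m hm
    have l1 : (N : ℝ) ≤ m + n := by
      rw [hN]; push_cast; linarith [Nat.floor_le hm]
    have l2 : m + n ≤ N + 1 := by
      rw [hN]; push_cast; linarith [Nat.lt_floor_add_one m]
    have hN0 : (0:ℝ) ≤ N := N.cast_nonneg
    have a1 := mlPhi_mono hN0 l1
    have a2 := mlPhi_mono (hN0.trans l1) l2
    rw [mlPhi_add_one hN0] at a2
    have b1 := mlPsi_mono (show (N:ℝ) + 1 ∈ Set.Ioi (0:ℝ) by simp only [Set.mem_Ioi]; linarith)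
      (show (m + n) + 1 ∈ Set.Ioi (0:ℝ) by simp only [Set.mem_Ioi]; linarith) (by linarith)
    have b2 := mlPsi_mono (show (m + n) + 1 ∈ Set.Ioi (0:ℝ) by simp only [Set.mem_Ioi]; linarith)
      (show (N:ℝ) + 1 + 1 ∈ Set.Ioi (0:ℝ) by simp only [Set.mem_Ioi]; linarith) (by linarith)
    rw [mlPsi_add_one (show 0 < (N:ℝ) + 1 by linarith)] at b2
    rw [← e2]
    simp only [hd] at e1 ⊢
    rw [abs_le]
    constructor <;> linarith
  have hz : |d m| ≤ 0 := by
    apply ge_of_tendsto' (x := Filter.atTop) (f := fun n : ℕ => 1 / ((⌊m⌋₊ + n : ℕ) + 1 : ℝ)) _ hsmall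
    have := (tendsto_one_div_add_atTop_nhds_zero_nat (𝕜 := ℝ)).comp
      (Filter.tendsto_add_atTop_nat ⌊m⌋₊)
    refine this.congr (fun n => ?_)
    simp [add_comm]
  have := abs_nonpos_iff.1 hz
  simp only [hd] at this
  linarith

lemma ml_gamma_one_add_le {e : ℝ} (h0 : 0 ≤ e) (h1 : e ≤ 1) : Real.Gamma (1 + e) ≤ 1 := by
  have h := Real.convexOn_Gamma.2 (show (1:ℝ) ∈ Set.Ioi 0 by simp) (show (2:ℝ) ∈ Set.Ioi 0 by simp)
    (show 0 ≤ 1 - e by linarith) h0 (by ring)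
  simp only [smul_eq_mul, Real.Gamma_one, Real.Gamma_two] at h
  rw [show (1 - e) * 1 + e * 2 = 1 + e by ring] at h
  linarith

lemma ml_gamma_one_add_ge {e : ℝ} (h0 : 0 ≤ e) : 1 / (1 + e) ≤ Real.Gamma (1 + e) := by
  have h := Real.Gamma_strictMonoOn_Ici.monotoneOn (show (2:ℝ) ∈ Set.Ici 2 by simp)
    (show 2 + e ∈ Set.Ici (2:ℝ) by simp [h0]) (by linarith)
  rw [show 2 + e = (1 + e) + 1 by ring, Real.Gamma_add_one (by linarith), Real.Gamma_two] at h
  rw [div_le_iff₀ (by linarith)]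
  linarith

lemma ml_gamma_le_two {r : ℝ} (h0 : 0 ≤ r) (h1 : r ≤ 2) : Real.Gamma (1 + r) ≤ 2 := by
  rcases le_total r 1 with h | h
  · linarith [ml_gamma_one_add_le h0 h]
  · have h := Real.Gamma_strictMonoOn_Ici.monotoneOn (show (1 + r:ℝ) ∈ Set.Ici 2 by simp only [Set.mem_Ici]; linarith)
      (show 3 ∈ Set.Ici (2:ℝ) by norm_num) (by linarith)
    have h3 : Real.Gamma 3 = 2 := by
      rw [show (3:ℝ) = 2 + 1 by norm_num, Real.Gamma_add_one (by norm_num), Real.Gamma_two]; norm_num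
    linarith

lemma ml_euler_log_two : 5 / 4 ≤ Real.eulerMascheroniConstant + Real.log 2 := by
  have h := (Real.eulerMascheroniSeq_lt_eulerMascheroniConstant 31).le
  have h2 : Real.log ((31 : ℕ) + 1 : ℝ) = 5 * Real.log 2 := by
    rw [show (((31 : ℕ) : ℝ) + 1) = 2 ^ (5:ℕ) by norm_num, Real.log_pow]; norm_num
  have h3 : (4.027 : ℝ) ≤ ((harmonic 31 : ℚ) : ℝ) := by
    have : (4.027 : ℚ) ≤ harmonic 31 := by
      simp only [harmonic, Finset.sum_range_succ, Finset.sum_range_zero]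
      norm_num
    have h' : ((4.027 : ℚ) : ℝ) ≤ ((harmonic 31 : ℚ) : ℝ) := by exact_mod_cast this
    have e : ((4.027 : ℚ) : ℝ) = 4.027 := by norm_num
    linarith
  rw [Real.eulerMascheroniSeq, h2] at h
  have := Real.log_two_lt_d9
  norm_num1 at this
  linarith

/-! ### The series -/

lemma ml_term_bound (δ A : ℝ) (hδ : 0 < δ) : ∃ C : ℝ, 0 < C ∧ ∀ ρ, δ ≤ ρ → ∀ a, a ≤ A → ∀ k : ℕ,
    Real.exp (k * a) / Real.Gamma (ρ * k + 1) ≤ C * (1 / 4) ^ k := by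
  set M : ℝ := Real.exp ((|A| + Real.log 4) / δ) with hM
  have hlog4 : 0 < Real.log 4 := Real.log_pos (by norm_num)
  have hMpos : 0 < M := Real.exp_pos _
  refine ⟨Real.exp (M + 1), Real.exp_pos _, fun ρ hρ a ha k => ?_⟩
  have hk : (0:ℝ) ≤ k := k.cast_nonneg
  have hy : 0 ≤ ρ * k := mul_nonneg (hδ.le.trans hρ) hk
  have h1 := ml_gamma_lower (ρ * k) M hy hMpos
  have hG : 0 < Real.Gamma (ρ * k + 1) := Real.Gamma_pos_of_pos (by linarith)
  rw [div_le_iff₀ hG]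
  have h2 : Real.exp (k * (|A| + Real.log 4)) ≤ M ^ (ρ * k) := by
    rw [hM, ← Real.exp_mul]
    apply Real.exp_le_exp.2
    rw [div_mul_eq_mul_div, le_div_iff₀ hδ]
    have : 0 ≤ |A| + Real.log 4 := by positivity
    have h3 : k * δ ≤ ρ * k := by nlinarith
    nlinarith
  have h4 : Real.exp (k * (|A| + Real.log 4)) = Real.exp (k * |A|) * 4 ^ k := by
    rw [mul_add, Real.exp_add, mul_comm (k:ℝ) (Real.log 4), Real.exp_mul (Real.log 4),
      Real.exp_log (by norm_num), Real.rpow_natCast]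
  have h5 : Real.exp (k * a) ≤ Real.exp (k * |A|) :=
    Real.exp_le_exp.2 (mul_le_mul_of_nonneg_left (ha.trans (le_abs_self A)) hk)
  calc Real.exp (k * a) ≤ Real.exp (k * |A|) * 4 ^ k * (1/4)^k := by
        rw [mul_assoc, ← mul_pow]; norm_num1; rw [one_pow, mul_one]; exact h5
    _ ≤ M ^ (ρ * k) * (1/4)^k := by rw [← h4]; gcongr
    _ = Real.exp (M + 1) * (1 / 4) ^ k * (M ^ (ρ * k) * Real.exp (-(M+1))) := by
        rw [Real.exp_neg]; field_simp
    _ ≤ _ := by gcongr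

noncomputable def mlT (ρ a : ℝ) (k : ℕ) : ℝ := (-1) ^ k * (Real.exp (k * a) / Real.Gamma (ρ * k + 1))

lemma mlT_abs {ρ : ℝ} (hρ : 0 < ρ) (a : ℝ) (k : ℕ) :
    |mlT ρ a k| = Real.exp (k * a) / Real.Gamma (ρ * k + 1) := by
  have hG : 0 < Real.Gamma (ρ * k + 1) := Real.Gamma_pos_of_pos (by positivity)
  rw [mlT, abs_mul, abs_pow, abs_neg, abs_one, one_pow, one_mul, abs_of_pos (by positivity)]

lemma ml_summable_poly (C : ℝ) (n : ℕ) : Summable (fun k : ℕ => C * ((k:ℝ) ^ n * (1/4:ℝ) ^ k)) :=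
  (summable_pow_mul_geometric_of_norm_lt_one n (by norm_num)).mul_left C

lemma mlT_summable_abs_pow {ρ : ℝ} (hρ : 0 < ρ) (a : ℝ) (n : ℕ) :
    Summable (fun k : ℕ => (k:ℝ) ^ n * |mlT ρ a k|) := by
  obtain ⟨C, hC, h⟩ := ml_term_bound ρ a hρ
  refine Summable.of_nonneg_of_le (fun k => by positivity) (fun k => ?_) (ml_summable_poly C n)
  rw [mlT_abs hρ]
  have := h ρ le_rfl a le_rfl k
  calc _ ≤ (k:ℝ)^n * (C * (1 / 4) ^ k) := by gcongr
    _ = _ := by ring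

lemma mlT_summable {ρ : ℝ} (hρ : 0 < ρ) (a : ℝ) : Summable (mlT ρ a) := by
  have := mlT_summable_abs_pow hρ a 0
  simp only [pow_zero, one_mul] at this
  exact this.of_abs

lemma mlT_summable_k {ρ : ℝ} (hρ : 0 < ρ) (a : ℝ) : Summable (fun k : ℕ => (k:ℝ) * mlT ρ a k) := by
  have := mlT_summable_abs_pow hρ a 1
  simp only [pow_one] at this
  refine Summable.of_norm (this.congr (fun k => ?_))
  rw [Real.norm_eq_abs, abs_mul, Nat.abs_cast]

lemma ml_series_deriv (α β d c s₀ : ℝ) (h0 : 0 < α * s₀ + d) :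
    HasDerivAt (fun s => ∑' k, mlT (α * s + d) (c + β * s) k)
      (∑' k : ℕ, (k:ℝ) * mlT (α * s₀ + d) (c + β * s₀) k * (β - α * mlPsi ((α * s₀ + d) * k + 1))) s₀ := by
  set ρ := α * s₀ + d with hρ
  set η : ℝ := ρ / (2 * (|α| + 1)) with hη
  have hη0 : 0 < η := by positivity
  have hαη : |α| * η ≤ ρ / 2 := by
    rw [hη, mul_div_assoc', div_le_div_iff₀ (by positivity) (by norm_num)]
    nlinarith [abs_nonneg α]
  obtain ⟨C, hC, hb⟩ := ml_term_bound (ρ / 2) (|c| + |β| * (|s₀| + η)) (by linarith)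
  have hmem : ∀ s ∈ Metric.ball s₀ η, ρ / 2 ≤ α * s + d ∧ α * s + d ≤ 2 * ρ ∧
      c + β * s ≤ |c| + |β| * (|s₀| + η) := by
    intro s hs
    rw [Metric.mem_ball, Real.dist_eq] at hs
    have e : α * s + d = ρ + α * (s - s₀) := by rw [hρ]; ring
    have h1 : |α * (s - s₀)| ≤ ρ / 2 := by
      rw [abs_mul]; exact (mul_le_mul_of_nonneg_left hs.le (abs_nonneg α)).trans hαη
    have h2 := abs_le.1 h1
    refine ⟨by rw [e]; linarith [h2.1], by rw [e]; linarith [h2.2], ?_⟩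
    have h3 : |s| ≤ |s₀| + η := by
      have := abs_add_le s₀ (s - s₀)
      rw [add_sub_cancel] at this
      linarith
    have h4 : β * s ≤ |β| * (|s₀| + η) :=
      (le_abs_self _).trans (by rw [abs_mul]; gcongr)
    linarith [le_abs_self c]
  refine hasDerivAt_tsum_of_isPreconnected
    (u := fun k : ℕ => (C * (|β| + |α| * 2)) * ((k:ℝ)^1 * (1/4)^k) + (C * (|α| * (2 * ρ))) * ((k:ℝ)^2 * (1/4)^k))
    (g := fun k s => mlT (α * s + d) (c + β * s) k)
    (g' := fun k s => (k:ℝ) * mlT (α * s + d) (c + β * s) k * (β - α * mlPsi ((α * s + d) * k + 1)))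
    ((ml_summable_poly _ 1).add (ml_summable_poly _ 2)) Metric.isOpen_ball
    (convex_ball s₀ η).isPreconnected ?_ ?_ (Metric.mem_ball_self hη0)
    (mlT_summable h0 _) (Metric.mem_ball_self hη0)
  · intro k s hs
    have hr := (hmem s hs).1
    have hy : 0 < (α * s + d) * k + 1 := by
      have : 0 ≤ (α * s + d) * k := mul_nonneg (by linarith) k.cast_nonneg
      linarith
    have hG := Real.Gamma_pos_of_pos hy
    have d1 : HasDerivAt (fun s => (α * s + d) * (k:ℝ) + 1) (α * k) s := by
      have := ((((hasDerivAt_id s).const_mul α).add_const d).mul_const (k:ℝ)).add_const 1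
      simpa using this
    have d2 := (ml_gamma_hasDeriv hy).comp s d1
    have d3 : HasDerivAt (fun s => Real.exp (k * (c + β * s))) (Real.exp (k * (c + β * s)) * (k * β)) s := by
      have := ((((hasDerivAt_id s).const_mul β).const_add c).const_mul (k:ℝ)).exp
      simpa using this
    have d4 := (d3.div d2 hG.ne').const_mul ((-1:ℝ)^k)
    refine d4.congr_deriv ?_
    simp only [mlT, Function.comp]
    field_simp
  · intro k s hs
    obtain ⟨hr, hr2, hA⟩ := hmem s hs
    have hk : (0:ℝ) ≤ k := k.cast_nonneg
    have hr0 : 0 < α * s + d := by linarith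
    have hy : 0 ≤ (α * s + d) * k := mul_nonneg hr0.le hk
    have hT : |mlT (α * s + d) (c + β * s) k| ≤ C * (1/4)^k := by
      rw [mlT_abs hr0]
      exact hb _ hr _ hA k
    have hpsi : |mlPsi ((α * s + d) * k + 1)| ≤ 2 + 2 * ρ * k := by
      have e := mlPhi_eq hy
      have p1 := mlPhi_nonneg hy
      have p2 := mlPhi_le hy
      have g1 := Real.one_half_lt_eulerMascheroniConstant
      have g2 := Real.eulerMascheroniConstant_lt_two_thirds
      have : (α * s + d) * k ≤ 2 * ρ * k := mul_le_mul_of_nonneg_right hr2 hk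
      rw [abs_le]; constructor <;> linarith
    have hfac : |β - α * mlPsi ((α * s + d) * k + 1)| ≤ |β| + |α| * (2 + 2 * ρ * k) := by
      refine (abs_sub _ _).trans ?_
      rw [abs_mul]
      gcongr
    rw [Real.norm_eq_abs, abs_mul, abs_mul, Nat.abs_cast]
    calc _ ≤ (k:ℝ) * (C * (1/4)^k) * (|β| + |α| * (2 + 2 * ρ * k)) := by gcongr
      _ = _ := by ring

noncomputable def mlS (ρ a : ℝ) : ℝ := ∑' k, mlT ρ a k
noncomputable def mlP (ρ a : ℝ) : ℝ := -∑' k : ℕ, (k:ℝ) * mlT ρ a k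

lemma mlS_hasDeriv_a {ρ : ℝ} (hρ : 0 < ρ) (a : ℝ) : HasDerivAt (mlS ρ) (-mlP ρ a) a := by
  have h := ml_series_deriv 0 1 ρ 0 a (by linarith)
  simp only [zero_mul, zero_add, one_mul, sub_zero, mul_one] at h
  rw [mlP, neg_neg]
  exact h

lemma mlP_measurable {ρ : ℝ} (hρ : 0 < ρ) : Measurable (mlP ρ) := by
  have : mlP ρ = fun a => -deriv (mlS ρ) a := by
    funext a
    rw [(mlS_hasDeriv_a hρ a).deriv, neg_neg]
  rw [this]
  exact (measurable_deriv _).neg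

lemma mlT_shift {ρ a b : ℝ} (hb : 0 < b) (k : ℕ) :
    mlT ρ (a + ρ * Real.log b) k = mlT ρ a k * b ^ (ρ * k) := by
  rw [mlT, mlT, mul_add, Real.exp_add, Real.rpow_def_of_pos hb,
    show (k:ℝ) * (ρ * Real.log b) = Real.log b * (ρ * k) by ring]
  ring

/-- The key formula for the derivative in the order. -/
lemma mlS_hasDeriv_order {ρ : ℝ} (hρ : 0 < ρ) (c β : ℝ) :
    MeasureTheory.IntegrableOn (fun b => (mlP ρ (c + β * ρ) - mlP ρ (c + β * ρ + ρ * Real.log b)) / (1 - b))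
      (Set.Ioo 0 1) ∧
    HasDerivAt (fun s => mlS s (c + β * s))
      (-((β + Real.eulerMascheroniConstant) * mlP ρ (c + β * ρ)) +
        ∫ b in Set.Ioo (0:ℝ) 1, (mlP ρ (c + β * ρ) - mlP ρ (c + β * ρ + ρ * Real.log b)) / (1 - b)) ρ := by
  set a := c + β * ρ with ha
  set F : ℕ → ℝ → ℝ := fun k b => -((k:ℝ) * mlT ρ a k) * mlG (ρ * k) b with hF
  have hρk : ∀ k : ℕ, 0 ≤ ρ * k := fun k => by positivity
  have hFint : ∀ k, MeasureTheory.IntegrableOn (F k) (Set.Ioo 0 1) := fun k =>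
    (mlG_integrable (hρk k)).const_mul _
  have hnorm : ∀ k, ∫ b in Set.Ioo (0:ℝ) 1, ‖F k b‖ = (k:ℝ) * |mlT ρ a k| * mlPhi (ρ * k) := by
    intro k
    rw [mlPhi, ← MeasureTheory.integral_const_mul]
    apply MeasureTheory.setIntegral_congr_fun measurableSet_Ioo
    intro b hb
    simp only [hF]
    rw [norm_mul, Real.norm_of_nonneg (mlG_nonneg (hρk k) hb), norm_neg, norm_mul, Real.norm_eq_abs,
      Real.norm_eq_abs, Nat.abs_cast]
  have hsumPhi : Summable (fun k : ℕ => (k:ℝ) * |mlT ρ a k| * mlPhi (ρ * k)) := by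
    refine Summable.of_nonneg_of_le (fun k => mul_nonneg (by positivity) (mlPhi_nonneg (hρk k)))
      (fun k => ?_) ((((mlT_summable_abs_pow hρ a 2).mul_left ρ)).add (mlT_summable_abs_pow hρ a 1))
    have := mlPhi_le (hρk k)
    calc _ ≤ (k:ℝ) * |mlT ρ a k| * (ρ * k + 1) := by gcongr
      _ = _ := by ring
  have hsumnorm : Summable (fun k => ∫ b in Set.Ioo (0:ℝ) 1, ‖F k b‖) := by
    simp_rw [hnorm]; exact hsumPhi
  have hS := MeasureTheory.hasSum_integral_of_summable_integral_norm hFint hsumnorm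
  have hpt : ∀ b ∈ Set.Ioo (0:ℝ) 1, ∑' k, F k b = (mlP ρ a - mlP ρ (a + ρ * Real.log b)) / (1 - b) := by
    intro b hb
    have s1 := mlT_summable_k hρ a
    have s2 := mlT_summable_k hρ (a + ρ * Real.log b)
    have e : ∀ k, F k b = (-((k:ℝ) * mlT ρ a k) + (k:ℝ) * mlT ρ (a + ρ * Real.log b) k) / (1 - b) := by
      intro k
      simp only [hF, mlG]
      rw [mlT_shift hb.1]
      ring
    simp_rw [e]
    rw [tsum_div_const, Summable.tsum_add s1.neg s2, tsum_neg, mlP, mlP]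
    ring
  constructor
  · have sB : Summable (fun k : ℕ => (k:ℝ) * |mlT ρ a k| * (ρ * k + 1)) := by
      refine ((((mlT_summable_abs_pow hρ a 2).mul_left ρ)).add (mlT_summable_abs_pow hρ a 1)).congr
        (fun k => ?_)
      ring
    apply MeasureTheory.Measure.integrableOn_of_bounded
      (M := ∑' k : ℕ, (k:ℝ) * |mlT ρ a k| * (ρ * k + 1)) (by simp)
    · apply Measurable.aestronglyMeasurable
      have := mlP_measurable hρ
      fun_prop
    · filter_upwards [MeasureTheory.self_mem_ae_restrict measurableSet_Ioo] with b hb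
      rw [← hpt b hb]
      have hle : ∀ k, ‖F k b‖ ≤ (k:ℝ) * |mlT ρ a k| * (ρ * k + 1) := by
        intro k
        simp only [hF]
        rw [norm_mul, Real.norm_of_nonneg (mlG_nonneg (hρk k) hb), norm_neg, norm_mul, Real.norm_eq_abs,
          Real.norm_eq_abs, Nat.abs_cast]
        have := mlG_le (hρk k) hb
        gcongr
      exact tsum_of_norm_bounded sB.hasSum hle
  · have h := ml_series_deriv 1 β 0 c ρ (by linarith)
    simp only [one_mul, add_zero] at h
    refine h.congr_deriv ?_
    rw [← ha, ← MeasureTheory.setIntegral_congr_fun measurableSet_Ioo hpt, ← hS.tsum_eq]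
    have e1 : ∀ k, ∫ b in Set.Ioo (0:ℝ) 1, F k b = -((k:ℝ) * mlT ρ a k * mlPhi (ρ * k)) := by
      intro k
      simp only [hF]
      rw [MeasureTheory.integral_const_mul, ← mlPhi]; ring
    have s3 : Summable (fun k : ℕ => (k:ℝ) * mlT ρ a k * mlPhi (ρ * k)) := by
      refine Summable.of_norm (hsumPhi.congr (fun k => ?_))
      rw [norm_mul, norm_mul, Real.norm_of_nonneg (mlPhi_nonneg (hρk k)), Real.norm_eq_abs,
        Real.norm_eq_abs, Nat.abs_cast]
    simp_rw [e1]
    rw [mlP, mul_neg, neg_neg, ← tsum_mul_left, 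
      ← Summable.tsum_add ((mlT_summable_k hρ a).mul_left _) s3.neg]
    apply tsum_congr
    intro k
    rw [mlPhi_eq (hρk k)]
    ring

/-! ### Hankel contour -/

noncomputable def mlA (φ : ℂ → ℂ) (R : ℝ) : ℂ := Complex.I * ∫ θ in (-π)..π, φ (R + θ * Complex.I)
noncomputable def mlD (φ : ℂ → ℂ) (s : ℝ) : ℂ :=
  φ (s + ((-π : ℝ) : ℂ) * Complex.I) - φ (s + (π : ℝ) * Complex.I)

def mlStrip : Set ℂ := {z | z.im ∈ Set.Icc (-π) π}

lemma ml_rect (φ : ℂ → ℂ) (hφ : DifferentiableOn ℂ φ mlStrip) (a R : ℝ) :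
    mlA φ a = mlA φ R + ∫ s in a..R, mlD φ s := by
  have hpi := Real.pi_pos
  have h := Complex.integral_boundary_rect_eq_zero_of_differentiableOn φ
    ((a:ℂ) + ((-π : ℝ) : ℂ) * Complex.I) ((R:ℂ) + (π : ℝ) * Complex.I) (hφ.mono (by
      intro z hz
      have := hz.2
      simp only [Complex.add_im, Complex.ofReal_im, Complex.mul_im, Complex.I_im, Complex.ofReal_re,
        Complex.I_re, mul_one, mul_zero, add_zero, zero_add] at this
      rw [Set.mem_preimage, Set.uIcc_of_le (by linarith)] at this
      exact this))
  simp only [Complex.add_im, Complex.ofReal_im, Complex.mul_im, Complex.I_im, Complex.ofReal_re,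
        Complex.I_re, mul_one, mul_zero, add_zero, zero_add, Complex.add_re, Complex.mul_re, sub_zero,
        zero_sub, neg_zero, smul_eq_mul, sub_self] at h
  have hc : ∀ y ∈ Set.Icc (-π) π, Continuous (fun s : ℝ => φ (s + (y : ℂ) * Complex.I)) := by
    intro y hy
    apply hφ.continuousOn.comp_continuous (by fun_prop)
    intro s
    simpa [mlStrip] using hy
  have c1 := hc (-π) ⟨le_rfl, by linarith⟩
  have c2 := hc π ⟨by linarith, le_rfl⟩
  unfold mlA mlD
  rw [intervalIntegral.integral_sub (c1.intervalIntegrable _ _) (c2.intervalIntegrable _ _)]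
  linear_combination -h

lemma ml_shift_contour (φ : ℂ → ℂ) (hφ : DifferentiableOn ℂ φ mlStrip) (R : ℝ) (L : ℂ)
    (hD : MeasureTheory.Integrable (mlD φ)) (hA : Filter.Tendsto (mlA φ) Filter.atBot (nhds L)) :
    mlA φ R - ∫ s in Set.Ioi R, mlD φ s = L - ∫ s, mlD φ s := by
  have h1 := MeasureTheory.intervalIntegral_tendsto_integral_Iic R hD.integrableOn
    (Filter.tendsto_id (α := ℝ) (x := Filter.atBot))
  have h2 : Filter.Tendsto (mlA φ) Filter.atBot (nhds (mlA φ R + ∫ s in Set.Iic R, mlD φ s)) := by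
    have := h1.const_add (mlA φ R)
    refine this.congr (fun a => ?_)
    rw [ml_rect φ hφ a R]; rfl
  have h3 := tendsto_nhds_unique hA h2
  have h4 := MeasureTheory.integral_add_compl (measurableSet_Iic (a := R)) hD
  rw [Set.compl_Iic] at h4
  rw [h3, ← h4]; ring

lemma ml_A_tendsto (φ : ℂ → ℂ) (c : ℂ) (C δ R₀ : ℝ) (hδ : 0 < δ)
    (hφ : DifferentiableOn ℂ φ mlStrip)
    (hb : ∀ R ≤ R₀, ∀ θ : ℝ, ‖φ (R + θ * Complex.I) - c‖ ≤ C * Real.exp (δ * R)) :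
    Filter.Tendsto (mlA φ) Filter.atBot (nhds (2 * π * Complex.I * c)) := by
  have hpi := Real.pi_pos
  rw [tendsto_iff_norm_sub_tendsto_zero]
  have hlim : Filter.Tendsto (fun R : ℝ => C * Real.exp (δ * R) * (2 * π)) Filter.atBot (nhds 0) := by
    have := (Real.tendsto_exp_atBot.comp (Filter.tendsto_id.const_mul_atBot hδ)).const_mul C
    have := this.mul_const (2 * π)
    simpa using this
  refine squeeze_zero' (Filter.Eventually.of_forall fun _ => norm_nonneg _) ?_ hlim
  filter_upwards [Filter.eventually_le_atBot R₀] with R hR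
  have hc : ContinuousOn (fun θ : ℝ => φ (R + (θ : ℂ) * Complex.I)) (Set.uIcc (-π) π) := by
    apply hφ.continuousOn.comp (by fun_prop)
    intro s hs
    rw [Set.uIcc_of_le (by linarith)] at hs
    simpa [mlStrip] using hs
  have e : mlA φ R - 2 * π * Complex.I * c =
      Complex.I * ∫ θ in (-π)..π, (φ (R + θ * Complex.I) - c) := by
    rw [intervalIntegral.integral_sub hc.intervalIntegrable (by simp), mlA]
    simp only [intervalIntegral.integral_const, sub_neg_eq_add, Complex.real_smul]
    push_cast
    ring
  rw [e, norm_mul, Complex.norm_I, one_mul]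
  refine (intervalIntegral.norm_integral_le_of_norm_le_const (fun θ _ => hb R hR θ)).trans ?_
  rw [abs_of_pos (by linarith)]
  apply le_of_eq; ring

/-! the elementary integrands -/

noncomputable def mlphi (τ μ : ℝ) (z : ℂ) : ℂ := Complex.exp (τ * Complex.exp z) * Complex.exp (-μ * z)
noncomputable def mle (τ μ s : ℝ) : ℝ := Real.exp (-(τ * Real.exp s)) * Real.exp (-μ * s)

lemma mlphi_hasDeriv (τ μ : ℝ) (z : ℂ) :
    HasDerivAt (mlphi τ μ) (τ * mlphi τ (μ - 1) z - μ * mlphi τ μ z) z := by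
  have h1 : HasDerivAt (fun z : ℂ => Complex.exp (τ * Complex.exp z))
      (Complex.exp (τ * Complex.exp z) * (τ * Complex.exp z)) z :=
    ((Complex.hasDerivAt_exp z).const_mul (τ:ℂ)).cexp
  have h2 : HasDerivAt (fun z : ℂ => Complex.exp (-μ * z)) (Complex.exp (-μ * z) * (-μ)) z := by
    have := ((hasDerivAt_id z).const_mul (-μ : ℂ)).cexp
    simpa using this
  refine (h1.mul h2).congr_deriv ?_
  unfold mlphi
  have : Complex.exp (-((μ - 1 : ℝ) : ℂ) * z) = Complex.exp z * Complex.exp (-μ * z) := by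
    rw [← Complex.exp_add]; congr 1; push_cast; ring
  rw [this]; ring

lemma mlphi_diff (τ μ : ℝ) : Differentiable ℂ (mlphi τ μ) :=
  fun z => (mlphi_hasDeriv τ μ z).differentiableAt

lemma ml_exp_pi (s : ℝ) : Complex.exp (s + (π : ℝ) * Complex.I) = -Complex.exp s := by
  rw [Complex.exp_add, Complex.exp_pi_mul_I]; ring

lemma ml_exp_neg_pi (s : ℝ) : Complex.exp (s + ((-π : ℝ) : ℂ) * Complex.I) = -Complex.exp s := by
  rw [Complex.exp_add]
  push_cast
  rw [neg_mul, Complex.exp_neg, Complex.exp_pi_mul_I]; norm_num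

lemma mlD_phi (τ μ s : ℝ) : mlD (mlphi τ μ) s = (mle τ μ s : ℂ) * (2 * Real.sin (μ * π) * Complex.I) := by
  unfold mlD mlphi mle
  rw [ml_exp_pi, ml_exp_neg_pi]
  have e1 : Complex.exp (-μ * (s + ((-π : ℝ) : ℂ) * Complex.I)) =
      Complex.exp (-μ * s) * (Complex.cos (μ * π) + Complex.sin (μ * π) * Complex.I) := by
    rw [← Complex.exp_mul_I, ← Complex.exp_add]; congr 1; push_cast; ring
  have e2 : Complex.exp (-μ * (s + (π : ℝ) * Complex.I)) =
      Complex.exp (-μ * s) * (Complex.cos (μ * π) - Complex.sin (μ * π) * Complex.I) := by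
    have : Complex.cos (μ * π) - Complex.sin (μ * π) * Complex.I =
        Complex.cos (-(μ * π)) + Complex.sin (-(μ * π)) * Complex.I := by
      rw [Complex.cos_neg, Complex.sin_neg]; ring
    rw [this, ← Complex.exp_mul_I, ← Complex.exp_add]; congr 1; push_cast; ring
  rw [e1, e2]
  push_cast
  rw [show (τ:ℂ) * -Complex.exp s = -(τ * Complex.exp s) by ring]
  ring

lemma mle_integrable {τ μ : ℝ} (hτ : 0 < τ) (hμ : μ < 0) : MeasureTheory.Integrable (mle τ μ) ∧
    ∫ s, mle τ μ s = τ ^ μ * Real.Gamma (-μ) := by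
  have himg : Real.exp '' Set.univ = Set.Ioi 0 := by rw [Set.image_univ, Real.range_exp]
  have hd : ∀ x ∈ (Set.univ : Set ℝ), HasDerivWithinAt Real.exp (Real.exp x) Set.univ x :=
    fun x _ => (Real.hasDerivAt_exp x).hasDerivWithinAt
  have hinj : Set.InjOn Real.exp Set.univ := Real.exp_injective.injOn
  set g : ℝ → ℝ := fun t => t ^ (-μ - 1) * Real.exp (-(τ * t)) with hg
  have e : ∀ x, |Real.exp x| • g (Real.exp x) = mle τ μ x := by
    intro x
    simp only [hg, smul_eq_mul, mle, abs_of_pos (Real.exp_pos x)]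
    rw [← Real.exp_mul, show x * (-μ - 1) = -μ * x + -x by ring, Real.exp_add, Real.exp_neg x]
    field_simp
  have hgi : MeasureTheory.IntegrableOn g (Set.Ioi 0) := by
    have := integrableOn_rpow_mul_exp_neg_mul_rpow (p := 1) (s := -μ - 1) (b := τ) (by linarith) one_pos hτ
    refine this.congr_fun (fun t _ => ?_) measurableSet_Ioi
    simp [hg]
  constructor
  · rw [← himg, MeasureTheory.integrableOn_image_iff_integrableOn_abs_deriv_smul MeasurableSet.univ hd hinj] at hgi
    simp_rw [e] at hgi
    simpa using hgi
  · have h1 := MeasureTheory.integral_image_eq_integral_abs_deriv_smul MeasurableSet.univ hd hinj g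
    simp_rw [e] at h1
    rw [himg, MeasureTheory.setIntegral_univ] at h1
    rw [← h1, hg, Real.integral_rpow_mul_exp_neg_mul_Ioi (by linarith) hτ, one_div,
      Real.inv_rpow hτ.le, Real.rpow_neg hτ.le, inv_inv]

lemma mle_continuous (τ μ : ℝ) : Continuous (mle τ μ) := by unfold mle; fun_prop

lemma mle_integrableOn {τ : ℝ} (hτ : 0 < τ) (μ R : ℝ) : MeasureTheory.IntegrableOn (mle τ μ) (Set.Ioi R) := by
  rcases lt_or_ge μ 0 with h | h
  · exact (mle_integrable hτ h).1.integrableOn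
  · have h1 := (mle_integrable hτ (show (-1:ℝ) < 0 by norm_num)).1.integrableOn (s := Set.Ioi R)
    refine MeasureTheory.Integrable.mono' (h1.const_mul (Real.exp (-(μ + 1) * R)))
      (mle_continuous τ μ).aestronglyMeasurable ?_
    filter_upwards [MeasureTheory.self_mem_ae_restrict measurableSet_Ioi] with s hs
    have hs' : R < s := hs
    unfold mle
    rw [Real.norm_of_nonneg (by positivity)]
    have : Real.exp (-μ * s) ≤ Real.exp (-(μ + 1) * R) * Real.exp (-(-1) * s) := by
      rw [← Real.exp_add]; apply Real.exp_le_exp.2; nlinarith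
    calc _ ≤ Real.exp (-(τ * Real.exp s)) * (Real.exp (-(μ + 1) * R) * Real.exp (-(-1) * s)) := by gcongr
      _ = _ := by ring

noncomputable def mlH (φ : ℂ → ℂ) (R : ℝ) : ℂ := mlA φ R - ∫ s in Set.Ioi R, mlD φ s

lemma mlH_rec {τ : ℝ} (hτ : 0 < τ) (μ R : ℝ) :
    τ * mlH (mlphi τ (μ - 1)) R = μ * mlH (mlphi τ μ) R := by
  -- arc part
  have hA : (τ : ℂ) * mlA (mlphi τ (μ - 1)) R - μ * mlA (mlphi τ μ) R =
      mlphi τ μ (R + (π : ℝ) * Complex.I) - mlphi τ μ (R + ((-π : ℝ) : ℂ) * Complex.I) := by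
    have hder : ∀ θ : ℝ, HasDerivAt (fun θ : ℝ => mlphi τ μ (R + θ * Complex.I))
        ((τ * mlphi τ (μ - 1) (R + θ * Complex.I) - μ * mlphi τ μ (R + θ * Complex.I)) * Complex.I) θ := by
      intro θ
      have h1 : HasDerivAt (fun θ : ℝ => (R : ℂ) + θ * Complex.I) Complex.I θ := by
        have := ((Complex.ofRealCLM.hasDerivAt (x := θ)).mul_const Complex.I).const_add (R:ℂ)
        simpa using this
      exact (mlphi_hasDeriv τ μ _).comp θ h1
    have c1 := (mlphi_diff τ (μ - 1)).continuous
    have c2 := (mlphi_diff τ μ).continuous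
    have i1 : IntervalIntegrable (fun θ : ℝ => mlphi τ (μ - 1) (R + θ * Complex.I)) MeasureTheory.volume (-π) π :=
      (c1.comp (by fun_prop)).intervalIntegrable _ _
    have i2 : IntervalIntegrable (fun θ : ℝ => mlphi τ μ (R + θ * Complex.I)) MeasureTheory.volume (-π) π :=
      (c2.comp (by fun_prop)).intervalIntegrable _ _
    have h := intervalIntegral.integral_eq_sub_of_hasDerivAt (a := -π) (b := π) (fun θ _ => hder θ)
      (((i1.const_mul _).sub (i2.const_mul _)).mul_const _)
    rw [intervalIntegral.integral_mul_const, intervalIntegral.integral_sub (i1.const_mul _) (i2.const_mul _),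
      intervalIntegral.integral_const_mul, intervalIntegral.integral_const_mul] at h
    rw [← h, mlA, mlA]; ring
  have hD : (τ : ℂ) * (∫ s in Set.Ioi R, mlD (mlphi τ (μ - 1)) s) - μ * (∫ s in Set.Ioi R, mlD (mlphi τ μ) s) =
      - mlD (mlphi τ μ) R := by
    have hder : ∀ s, HasDerivAt (mle τ μ) (-(τ * mle τ (μ - 1) s + μ * mle τ μ s)) s := by
      intro s
      have h1 : HasDerivAt (fun s : ℝ => Real.exp (-(τ * Real.exp s)))
          (Real.exp (-(τ * Real.exp s)) * (-(τ * Real.exp s))) s :=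
        ((Real.hasDerivAt_exp s).const_mul τ).neg.exp
      have h2 : HasDerivAt (fun s : ℝ => Real.exp (-μ * s)) (Real.exp (-μ * s) * (-μ)) s := by
        have := ((hasDerivAt_id s).const_mul (-μ)).exp
        simpa using this
      refine (h1.mul h2).congr_deriv ?_
      unfold mle
      have : Real.exp (-(μ - 1) * s) = Real.exp s * Real.exp (-μ * s) := by
        rw [← Real.exp_add]; congr 1; ring
      rw [this]; ring
    have i1 := mle_integrableOn hτ (μ - 1) R
    have i2 := mle_integrableOn hτ μ R
    have hlim : Filter.Tendsto (mle τ μ) Filter.atTop (nhds 0) := by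
      have i3 : MeasureTheory.IntegrableOn (fun s => -(τ * mle τ (μ - 1) s + μ * mle τ μ s)) (Set.Ioi R) :=
        ((i1.const_mul τ).add (i2.const_mul μ)).neg
      exact MeasureTheory.tendsto_zero_of_hasDerivAt_of_integrableOn_Ioi (a := R) (fun s _ => hder s) i3 i2
    have h := MeasureTheory.integral_Ioi_of_hasDerivAt_of_tendsto (a := R)
      (mle_continuous τ μ).continuousWithinAt (fun s _ => hder s)
      (((i1.const_mul τ).add (i2.const_mul μ)).neg) hlim
    rw [MeasureTheory.integral_neg, MeasureTheory.integral_add (i1.const_mul τ) (i2.const_mul μ),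
      MeasureTheory.integral_const_mul, MeasureTheory.integral_const_mul] at h
    simp_rw [mlD_phi]
    rw [MeasureTheory.integral_mul_const, MeasureTheory.integral_mul_const, integral_complex_ofReal,
      integral_complex_ofReal]
    have hs : Real.sin ((μ - 1) * π) = -Real.sin (μ * π) := by
      rw [sub_mul, one_mul, Real.sin_sub_pi]
    rw [hs]
    have h' : ((τ * (∫ s in Set.Ioi R, mle τ (μ - 1) s) + μ * (∫ s in Set.Ioi R, mle τ μ s) : ℝ) : ℂ) = (mle τ μ R : ℝ) := by
      congr 1; linarith
    push_cast at h' ⊢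
    linear_combination (-(2 * Complex.sin (μ * π) * Complex.I)) * h'
  unfold mlH
  have : mlD (mlphi τ μ) R = mlphi τ μ (R + ((-π : ℝ) : ℂ) * Complex.I) - mlphi τ μ (R + (π : ℝ) * Complex.I) := rfl
  linear_combination hA - hD + this

lemma mlphi_norm (τ μ R θ : ℝ) (hτ : 0 < τ) :
    ‖mlphi τ μ (R + θ * Complex.I)‖ ≤ Real.exp (τ * Real.exp R) * Real.exp (-μ * R) := by
  unfold mlphi
  rw [norm_mul, Complex.norm_exp, Complex.norm_exp]
  gcongr
  · rw [Complex.re_ofReal_mul]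
    apply mul_le_mul_of_nonneg_left _ hτ.le
    refine (Complex.re_le_norm _).trans ?_
    rw [Complex.norm_exp]; simp
  · simp

lemma mlH_base {τ μ : ℝ} (hτ : 0 < τ) (h1 : -1 < μ) (h2 : μ ≤ 0) (R : ℝ) :
    mlH (mlphi τ μ) R = 2 * π * Complex.I * ((τ ^ μ / Real.Gamma (μ + 1) : ℝ) : ℂ) := by
  have hd : DifferentiableOn ℂ (mlphi τ μ) mlStrip := (mlphi_diff τ μ).differentiableOn
  rcases h2.lt_or_eq with h | h
  · have hDeq : mlD (mlphi τ μ) = fun s => (mle τ μ s : ℂ) * (2 * Real.sin (μ * π) * Complex.I) := by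
      funext s; exact mlD_phi τ μ s
    have hIntgr := mle_integrable hτ h
    have hDi : MeasureTheory.Integrable (mlD (mlphi τ μ)) := by
      rw [hDeq]; exact hIntgr.1.ofReal.mul_const _
    have hA := ml_A_tendsto (mlphi τ μ) 0 (Real.exp τ) (-μ) 0 (by linarith) hd (by
      intro R hR θ
      rw [sub_zero]
      refine (mlphi_norm τ μ R θ hτ).trans ?_
      have : Real.exp R ≤ 1 := Real.exp_le_one_iff.2 hR
      gcongr
      nlinarith)
    rw [mul_zero] at hA
    rw [mlH, ml_shift_contour _ hd R 0 hDi hA, hDeq, MeasureTheory.integral_mul_const,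
      integral_complex_ofReal, hIntgr.2]
    have hrefl := Real.Gamma_mul_Gamma_one_sub (-μ)
    have hs : Real.sin (π * -μ) = - Real.sin (μ * π) := by rw [mul_neg, Real.sin_neg, mul_comm]
    have hspos : 0 < Real.sin (π * -μ) := by
      apply Real.sin_pos_of_pos_of_lt_pi
      · nlinarith [Real.pi_pos]
      · nlinarith [Real.pi_pos]
    rw [show 1 - -μ = μ + 1 by ring] at hrefl
    have hG : 0 < Real.Gamma (μ + 1) := Real.Gamma_pos_of_pos (by linarith)
    have key : -(τ ^ μ * Real.Gamma (-μ) * Real.sin (μ * π)) = π * (τ ^ μ / Real.Gamma (μ + 1)) := by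
      rw [eq_div_iff hspos.ne', hs] at hrefl
      field_simp
      linear_combination hrefl
    have key' : -((τ ^ μ * Real.Gamma (-μ) : ℝ) : ℂ) * ((Real.sin (μ * π) : ℝ) : ℂ) = π * ((τ ^ μ / Real.Gamma (μ + 1) : ℝ) : ℂ) := by
      rw [← Complex.ofReal_mul, ← key]; push_cast; ring
    linear_combination (2 * Complex.I) * key'
  · subst h
    have hDeq : mlD (mlphi τ 0) = fun s => 0 := by
      funext s; rw [mlD_phi]; simp
    have hDi : MeasureTheory.Integrable (mlD (mlphi τ 0)) := by
      rw [hDeq]; exact MeasureTheory.integrable_zero _ _ _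
    have hA := ml_A_tendsto (mlphi τ 0) 1 (2 * τ) 1 (-Real.log τ) (by norm_num) hd (by
      intro R hR θ
      have hn : ‖(τ:ℂ) * Complex.exp (R + θ * Complex.I)‖ = τ * Real.exp R := by
        rw [norm_mul, Complex.norm_exp]; simp [abs_of_pos hτ]
      have hle : τ * Real.exp R ≤ 1 := by
        calc τ * Real.exp R ≤ τ * Real.exp (-Real.log τ) := by gcongr
          _ = 1 := by rw [Real.exp_neg, Real.exp_log hτ]; field_simp
      have := Complex.norm_exp_sub_one_le (x := (τ:ℂ) * Complex.exp (R + θ * Complex.I)) (by rw [hn]; exact hle)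
      rw [hn] at this
      unfold mlphi
      simp only [Complex.ofReal_zero, neg_zero, zero_mul, Complex.exp_zero, mul_one, one_mul]
      linarith)
    rw [mlH, ml_shift_contour _ hd R _ hDi hA, hDeq]
    simp

lemma mlH_nat {τ μ : ℝ} (hτ : 0 < τ) (h1 : -1 < μ) (h2 : μ ≤ 0) (R : ℝ) (n : ℕ) :
    mlH (mlphi τ (μ + n)) R = 2 * π * Complex.I * ((τ ^ (μ + n) / Real.Gamma (μ + n + 1) : ℝ) : ℂ) := by
  induction n with
  | zero => simpa using mlH_base hτ h1 h2 R
  | succ k ih =>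
    have hpos : 0 < μ + k + 1 := by have : (0:ℝ) ≤ k := k.cast_nonneg; linarith
    have hr := mlH_rec hτ (μ + k + 1) R
    rw [show μ + k + 1 - 1 = μ + k by ring, ih] at hr
    rw [show μ + ((k + 1 : ℕ) : ℝ) = μ + k + 1 by push_cast; ring]
    have hG : Real.Gamma (μ + k + 1) ≠ 0 := (Real.Gamma_pos_of_pos hpos).ne'
    apply mul_left_cancel₀ (show ((μ + k + 1 : ℝ) : ℂ) ≠ 0 by exact_mod_cast hpos.ne')
    rw [← hr]
    have e : τ * (τ ^ (μ + k) / Real.Gamma (μ + k + 1)) =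
        (μ + k + 1) * (τ ^ (μ + k + 1) / Real.Gamma (μ + k + 1 + 1)) := by
      rw [Real.Gamma_add_one hpos.ne', Real.rpow_add_one hτ.ne']
      field_simp
    have e' : (τ : ℂ) * ((τ ^ (μ + k) / Real.Gamma (μ + k + 1) : ℝ) : ℂ) =
        ((μ + k + 1 : ℝ) : ℂ) * ((τ ^ (μ + k + 1) / Real.Gamma (μ + k + 1 + 1) : ℝ) : ℂ) := by
      rw [← Complex.ofReal_mul, ← Complex.ofReal_mul, e]
    linear_combination (2 * π * Complex.I) * e'

lemma mlH_eq {τ μ : ℝ} (hτ : 0 < τ) (hμ : 0 ≤ μ) (R : ℝ) :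
    mlH (mlphi τ μ) R = 2 * π * Complex.I * ((τ ^ μ / Real.Gamma (μ + 1) : ℝ) : ℂ) := by
  have h := mlH_nat hτ (μ := μ - ⌈μ⌉₊) (by linarith [Nat.ceil_lt_add_one hμ])
    (by linarith [Nat.le_ceil μ]) R ⌈μ⌉₊
  rwa [sub_add_cancel] at h

/-! ### Spectral representation -/

noncomputable def mlF (ρ τ : ℝ) (z : ℂ) : ℂ := Complex.exp (τ * Complex.exp z) / (1 + Complex.exp (-ρ * z))

noncomputable def mlDen (ρ y : ℝ) : ℝ := y ^ 2 + 2 * y * Real.cos (ρ * π) + 1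

noncomputable def mlK (ρ s : ℝ) : ℝ := Real.sin (ρ * π) / π * Real.exp (ρ * s) / mlDen ρ (Real.exp (ρ * s))

lemma ml_sin_pos {ρ : ℝ} (h0 : 0 < ρ) (h1 : ρ < 1) : 0 < Real.sin (ρ * π) := by
  apply Real.sin_pos_of_pos_of_lt_pi
  · have := Real.pi_pos; positivity
  · nlinarith [Real.pi_pos]

lemma mlDen_ge {ρ : ℝ} (y : ℝ) : Real.sin (ρ * π) ^ 2 ≤ mlDen ρ y := by
  unfold mlDen
  nlinarith [Real.sin_sq_add_cos_sq (ρ * π), sq_nonneg (y + Real.cos (ρ * π))]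

lemma mlDen_pos {ρ : ℝ} (h0 : 0 < ρ) (h1 : ρ < 1) (y : ℝ) : 0 < mlDen ρ y :=
  lt_of_lt_of_le (by have := ml_sin_pos h0 h1; positivity) (mlDen_ge y)

lemma mlF_den {ρ : ℝ} (h0 : 0 < ρ) (h1 : ρ < 1) {z : ℂ} (hz : z ∈ mlStrip) : 1 + Complex.exp (-ρ * z) ≠ 0 := by
  intro h
  have h2 : Complex.exp (-ρ * z) = -1 := by linear_combination h
  have hpi := Real.pi_pos
  obtain ⟨ha, hb⟩ : -π ≤ z.im ∧ z.im ≤ π := hz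
  have him : (-(ρ:ℂ) * z).im = -ρ * z.im := by simp
  have hl := Complex.log_exp (x := -ρ * z) (by rw [him]; nlinarith) (by rw [him]; nlinarith)
  rw [h2, Complex.log_neg_one] at hl
  have := congrArg Complex.im hl
  rw [him] at this
  simp at this
  nlinarith

lemma mlF_diff {ρ : ℝ} (h0 : 0 < ρ) (h1 : ρ < 1) (τ : ℝ) : DifferentiableOn ℂ (mlF ρ τ) mlStrip := by
  unfold mlF
  apply DifferentiableOn.div
  · fun_prop
  · fun_prop
  · intro z hz; exact mlF_den h0 h1 hz

lemma mlD_F {ρ : ℝ} (h0 : 0 < ρ) (h1 : ρ < 1) (τ s : ℝ) :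
    mlD (mlF ρ τ) s = -(2 * π * Complex.I) * ((Real.exp (-(τ * Real.exp s)) * mlK ρ s : ℝ) : ℂ) := by
  have hpi := Real.pi_pos
  have d1 := mlF_den h0 h1 (z := s + ((-π : ℝ) : ℂ) * Complex.I) (by simp [mlStrip]; linarith)
  have d2 := mlF_den h0 h1 (z := s + (π : ℝ) * Complex.I) (by simp [mlStrip]; linarith)
  have hD : (mlDen ρ (Real.exp (ρ * s)) : ℂ) ≠ 0 := by exact_mod_cast (mlDen_pos h0 h1 _).ne'
  unfold mlD mlF mlK
  rw [ml_exp_pi, ml_exp_neg_pi]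
  have e1 : Complex.exp (-ρ * (s + ((-π : ℝ) : ℂ) * Complex.I)) =
      Complex.exp (-(ρ * s)) * (Complex.cos (ρ * π) + Complex.sin (ρ * π) * Complex.I) := by
    rw [← Complex.exp_mul_I, ← Complex.exp_add]; congr 1; push_cast; ring
  have e2 : Complex.exp (-ρ * (s + (π : ℝ) * Complex.I)) =
      Complex.exp (-(ρ * s)) * (Complex.cos (ρ * π) - Complex.sin (ρ * π) * Complex.I) := by
    have : Complex.cos (ρ * π) - Complex.sin (ρ * π) * Complex.I =
        Complex.cos (-(ρ * π)) + Complex.sin (-(ρ * π)) * Complex.I := by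
      rw [Complex.cos_neg, Complex.sin_neg]; ring
    rw [this, ← Complex.exp_mul_I, ← Complex.exp_add]; congr 1; push_cast; ring
  rw [e1] at d1 ⊢
  rw [e2] at d2 ⊢
  rw [show (τ:ℂ) * -Complex.exp s = -(τ * Complex.exp s) by ring]
  unfold mlDen at hD ⊢
  push_cast at hD ⊢
  rw [Complex.exp_neg (ρ * s)] at d1 d2 ⊢
  have hq := Complex.exp_ne_zero (ρ * s)
  have hpc : (π:ℂ) ≠ 0 := by exact_mod_cast hpi.ne'
  have hsc := Complex.sin_sq_add_cos_sq (ρ * π)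
  have hI := Complex.I_sq
  generalize Complex.exp (ρ * s) = q at *
  generalize Complex.cos (ρ * π) = c at *
  generalize Complex.sin (ρ * π) = S at *
  generalize Complex.exp (-(τ * Complex.exp s)) = E at *
  rw [div_sub_div _ _ d1 d2]
  have hprod : (1 + q⁻¹ * (c + S * Complex.I)) * (1 + q⁻¹ * (c - S * Complex.I)) = (q ^ 2 + 2 * q * c + 1) / q ^ 2 := by
    field_simp
    linear_combination hsc - S ^ 2 * hI
  rw [hprod]
  field_simp
  ring

lemma mlK_nonneg {ρ : ℝ} (h0 : 0 < ρ) (h1 : ρ < 1) (s : ℝ) : 0 ≤ mlK ρ s := by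
  have := ml_sin_pos h0 h1
  have := mlDen_pos h0 h1 (Real.exp (ρ * s))
  have := Real.pi_pos
  unfold mlK; positivity

lemma mlK_le {ρ : ℝ} (h0 : 0 < ρ) (h1 : ρ < 1) (s : ℝ) :
    mlK ρ s ≤ 1 / (π * Real.sin (ρ * π)) * Real.exp (ρ * s) := by
  have hs := ml_sin_pos h0 h1
  have := mlDen_pos h0 h1 (Real.exp (ρ * s))
  have hpi := Real.pi_pos
  unfold mlK
  calc _ ≤ Real.sin (ρ * π) / π * Real.exp (ρ * s) / Real.sin (ρ * π) ^ 2 := by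
        gcongr; exact mlDen_ge _
    _ = _ := by field_simp

lemma mlK_continuous {ρ : ℝ} (h0 : 0 < ρ) (h1 : ρ < 1) : Continuous (mlK ρ) := by
  unfold mlK
  apply Continuous.div
  · fun_prop
  · unfold mlDen; fun_prop
  · intro s; exact (mlDen_pos h0 h1 _).ne'

lemma mlK_integrable {ρ : ℝ} (h0 : 0 < ρ) (h1 : ρ < 1) {τ : ℝ} (hτ : 0 < τ) {n : ℝ} (hn : 0 ≤ n) :
    MeasureTheory.Integrable (fun s => Real.exp (n * s) * Real.exp (-(τ * Real.exp s)) * mlK ρ s) := by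
  refine MeasureTheory.Integrable.mono' ((mle_integrable hτ (μ := -(n + ρ)) (by linarith)).1.const_mul
    (1 / (π * Real.sin (ρ * π)))) ?_ ?_
  · have := mlK_continuous h0 h1
    exact (by fun_prop : Continuous _).aestronglyMeasurable
  · refine Filter.Eventually.of_forall fun s => ?_
    have hk := mlK_nonneg h0 h1 s
    rw [Real.norm_of_nonneg (by positivity)]
    have := mlK_le h0 h1 s
    calc _ ≤ Real.exp (n * s) * Real.exp (-(τ * Real.exp s)) * (1 / (π * Real.sin (ρ * π)) * Real.exp (ρ * s)) := by
          gcongr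
      _ = _ := by
          unfold mle
          rw [show -(-(n + ρ)) * s = n * s + ρ * s by ring, Real.exp_add]; ring

lemma mlF_hasSum {ρ : ℝ} (h0 : 0 < ρ) (τ : ℝ) {z : ℂ} (hz : Real.log 2 / ρ ≤ z.re) :
    ‖Complex.exp (-ρ * z)‖ ≤ 1 / 2 ∧
    HasSum (fun k : ℕ => (-1) ^ k * mlphi τ (ρ * k) z) (mlF ρ τ z) := by
  have hn : ‖Complex.exp (-ρ * z)‖ ≤ 1 / 2 := by
    rw [Complex.norm_exp]
    have : (-(ρ:ℂ) * z).re = -(ρ * z.re) := by simp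
    rw [this]
    rw [div_le_iff₀ h0] at hz
    calc Real.exp (-(ρ * z.re)) ≤ Real.exp (-Real.log 2) := by
          apply Real.exp_le_exp.2; linarith
      _ = 1 / 2 := by rw [Real.exp_neg, Real.exp_log two_pos]; norm_num
  refine ⟨hn, ?_⟩
  have hg := (hasSum_geometric_of_norm_lt_one (ξ := -Complex.exp (-ρ * z)) (by rw [norm_neg]; linarith)).mul_left
    (Complex.exp (τ * Complex.exp z))
  unfold mlF mlphi
  rw [sub_neg_eq_add, ← div_eq_mul_inv] at hg
  refine hg.congr_fun (fun k => ?_) |> fun h => h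
  rw [neg_pow (Complex.exp (-ρ * z)), ← Complex.exp_nat_mul]
  rw [show (k:ℂ) * (-ρ * z) = -((ρ * k : ℝ) : ℂ) * z by push_cast; ring]
  ring

lemma mlphi_norm_pow (ρ τ : ℝ) (z : ℂ) (k : ℕ) : ‖(-1) ^ k * mlphi τ (ρ * k) z‖ =
    Real.exp (τ * Real.exp z.re * Real.cos z.im) * ‖Complex.exp (-ρ * z)‖ ^ k := by
  unfold mlphi
  rw [show -((ρ * k : ℝ) : ℂ) * z = (k:ℂ) * (-ρ * z) by push_cast; ring, Complex.exp_nat_mul]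
  rw [norm_mul, norm_mul, norm_pow, norm_pow, norm_neg, norm_one, one_pow, one_mul, Complex.norm_exp,
    Complex.re_ofReal_mul, Complex.exp_re, mul_assoc]

lemma mlH_F {ρ : ℝ} (h0 : 0 < ρ) {τ : ℝ} (hτ : 0 < τ) :
    mlH (mlF ρ τ) (Real.log 2 / ρ) = 2 * π * Complex.I * (mlS ρ (ρ * Real.log τ) : ℝ) := by
  have hpi := Real.pi_pos
  set R := Real.log 2 / ρ with hR
  have hre : ∀ s θ : ℝ, ((s:ℂ) + θ * Complex.I).re = s := by intro s θ; simp
  have hgeo : Summable (fun k : ℕ => (1/2 : ℝ) ^ k) := summable_geometric_of_lt_one (by norm_num) (by norm_num)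
  have h1 : HasSum (fun k : ℕ => ∫ θ in (-π)..π, (-1) ^ k * mlphi τ (ρ * k) (R + θ * Complex.I))
      (∫ θ in (-π)..π, mlF ρ τ (R + θ * Complex.I)) := by
    refine intervalIntegral.hasSum_integral_of_dominated_convergence
      (fun k _ => Real.exp (τ * Real.exp R) * (1/2) ^ k) ?_ ?_ ?_ ?_ ?_
    · intro k
      have := (mlphi_diff τ (ρ * k)).continuous
      exact (by fun_prop : Continuous _).aestronglyMeasurable
    · intro k
      refine Filter.Eventually.of_forall fun θ _ => ?_
      rw [mlphi_norm_pow]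
      have := (mlF_hasSum h0 τ (z := R + θ * Complex.I) (hre R θ).ge).1
      rw [hre]
      apply mul_le_mul _ (pow_le_pow_left₀ (norm_nonneg _) this k) (by positivity) (by positivity)
      apply Real.exp_le_exp.2
      have := Real.cos_le_one ((R:ℂ) + θ * Complex.I).im
      have h2 : 0 < τ * Real.exp R := by positivity
      nlinarith
    · exact Filter.Eventually.of_forall fun θ _ => hgeo.mul_left _
    · simp
    · exact Filter.Eventually.of_forall fun θ _ => (mlF_hasSum h0 τ (z := R + θ * Complex.I) (hre R θ).ge).2
  have h2 : HasSum (fun k : ℕ => ∫ s in Set.Ioi R, (-1) ^ k * mlD (mlphi τ (ρ * k)) s)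
      (∫ s in Set.Ioi R, mlD (mlF ρ τ) s) := by
    have hb : ∀ s ∈ Set.Ioi R, ∀ θ : ℝ, Real.cos θ = -1 → ∀ k : ℕ,
        ‖(-1) ^ k * mlphi τ (ρ * k) (s + θ * Complex.I)‖ ≤ mle τ 0 s * (1/2) ^ k := by
      intro s hs θ hθ k
      have hs' : R < s := hs
      rw [mlphi_norm_pow]
      have := (mlF_hasSum h0 τ (z := s + θ * Complex.I) (by simpa [hR] using hs'.le)).1
      have e : ((s:ℂ) + θ * Complex.I).re = s := by simp
      have e' : ((s:ℂ) + θ * Complex.I).im = θ := by simp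
      rw [e, e', hθ]
      unfold mle
      simp only [neg_zero, zero_mul, Real.exp_zero, mul_one, mul_neg]
      gcongr
    refine MeasureTheory.hasSum_integral_of_dominated_convergence
      (fun k s => 2 * mle τ 0 s * (1/2) ^ k) ?_ ?_ ?_ ?_ ?_
    · intro k
      have := (mlphi_diff τ (ρ * k)).continuous
      unfold mlD
      exact (by fun_prop : Continuous _).aestronglyMeasurable
    · intro k
      filter_upwards [MeasureTheory.self_mem_ae_restrict measurableSet_Ioi] with s hs
      unfold mlD
      rw [mul_sub]
      refine (norm_sub_le _ _).trans ?_
      have a1 := hb s hs (-π) (by simp) k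
      have a2 := hb s hs π (by simp) k
      linarith
    · exact Filter.Eventually.of_forall fun θ => hgeo.mul_left _
    · simp_rw [tsum_mul_left]
      exact ((mle_integrableOn hτ 0 R).const_mul 2).mul_const _
    · filter_upwards [MeasureTheory.self_mem_ae_restrict measurableSet_Ioi] with s hs
      have hs' : R < s := hs
      unfold mlD
      simp_rw [mul_sub]
      exact (mlF_hasSum h0 τ (by simpa [hR] using hs'.le)).2.sub (mlF_hasSum h0 τ (by simpa [hR] using hs'.le)).2
  have h3 : HasSum (fun k : ℕ => (-1) ^ k * mlH (mlphi τ (ρ * k)) R) (mlH (mlF ρ τ) R) := by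
    unfold mlH mlA
    refine ((h1.mul_left Complex.I).sub h2).congr_fun (fun k => ?_) |> fun h => h
    rw [intervalIntegral.integral_const_mul, MeasureTheory.integral_const_mul]
    ring
  have h4 : HasSum (fun k : ℕ => 2 * π * Complex.I * ((mlT ρ (ρ * Real.log τ) k : ℝ) : ℂ))
      (2 * π * Complex.I * (mlS ρ (ρ * Real.log τ) : ℝ)) :=
    (Complex.hasSum_ofReal.2 (mlT_summable h0 _).hasSum).mul_left _
  refine h3.unique (h4.congr_fun (fun k => ?_) |> fun h => h)
  rw [mlH_eq hτ (by positivity)]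
  unfold mlT
  rw [Real.rpow_def_of_pos hτ]
  rw [show Real.log τ * (ρ * k) = k * (ρ * Real.log τ) by ring]
  push_cast
  ring

lemma mlS_spectral {ρ : ℝ} (h0 : 0 < ρ) (h1 : ρ < 1) {τ : ℝ} (hτ : 0 < τ) :
    mlS ρ (ρ * Real.log τ) = ∫ s, Real.exp (-(τ * Real.exp s)) * mlK ρ s := by
  have hpi := Real.pi_pos
  have hk : MeasureTheory.Integrable (fun s => Real.exp (-(τ * Real.exp s)) * mlK ρ s) := by
    simpa using mlK_integrable h0 h1 hτ le_rfl
  have hDe : mlD (mlF ρ τ) = fun s => -(2 * π * Complex.I) * ((Real.exp (-(τ * Real.exp s)) * mlK ρ s : ℝ) : ℂ) := by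
    funext s; exact mlD_F h0 h1 τ s
  have hD : MeasureTheory.Integrable (mlD (mlF ρ τ)) := by
    rw [hDe]; exact hk.ofReal.const_mul _
  have hA := ml_A_tendsto (mlF ρ τ) 0 (2 * Real.exp τ) ρ (-(Real.log 2 / ρ)) h0 (mlF_diff h0 h1 τ) (by
    intro R hR θ
    rw [sub_zero]
    unfold mlF
    have hl2 : 0 < Real.log 2 / ρ := by have := Real.log_pos one_lt_two; positivity
    set w := Complex.exp (-ρ * (R + θ * Complex.I)) with hw
    have hwn : ‖w‖ = Real.exp (-(ρ * R)) := by rw [hw, Complex.norm_exp]; simp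
    have hw2 : 2 ≤ ‖w‖ := by
      have h3 : R * ρ ≤ -Real.log 2 := by
        rw [← neg_div] at hR; exact (le_div_iff₀ h0).1 hR
      rw [hwn]
      refine (Real.exp_log (two_pos (α := ℝ))).symm.le.trans ?_
      apply Real.exp_le_exp.2; linarith
    have hw3 : ‖w‖ / 2 ≤ ‖1 + w‖ := by
      have := norm_sub_norm_le w (-1)
      rw [norm_neg, norm_one, sub_neg_eq_add, add_comm w] at this
      linarith
    rw [norm_div, div_le_iff₀ (by linarith)]
    have hnum : ‖Complex.exp (τ * Complex.exp (R + θ * Complex.I))‖ ≤ Real.exp τ := by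
      rw [Complex.norm_exp]
      apply Real.exp_le_exp.2
      refine (Complex.re_le_norm _).trans ?_
      rw [norm_mul, Complex.norm_exp]
      simp only [Complex.norm_real, Real.norm_of_nonneg hτ.le]
      have : Real.exp ((R:ℂ) + θ * Complex.I).re ≤ 1 := Real.exp_le_one_iff.2 (by simp; linarith)
      nlinarith
    refine hnum.trans ?_
    calc Real.exp τ = 2 * Real.exp τ * Real.exp (ρ * R) * (‖w‖ / 2) := by
          rw [hwn, Real.exp_neg]; field_simp
      _ ≤ _ := by gcongr)
  have h := mlH_F h0 hτ
  rw [mlH, ml_shift_contour _ (mlF_diff h0 h1 τ) _ _ hD hA, hDe, MeasureTheory.integral_const_mul,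
    integral_complex_ofReal] at h
  have hne : 2 * π * Complex.I ≠ 0 := by
    simp [hpi.ne']
  have := mul_left_cancel₀ hne (show 2 * π * Complex.I * ((∫ s, Real.exp (-(τ * Real.exp s)) * mlK ρ s : ℝ) : ℂ) = _ by
    rw [← h]; ring)
  exact_mod_cast this.symm

noncomputable def mlU (ρ τ : ℝ) : ℝ := ∫ s, Real.exp (-(τ * Real.exp s)) * mlK ρ s
noncomputable def mlV (ρ τ : ℝ) : ℝ := ∫ s, Real.exp s * Real.exp (-(τ * Real.exp s)) * mlK ρ s

lemma mlU_int {ρ : ℝ} (h0 : 0 < ρ) (h1 : ρ < 1) {τ : ℝ} (hτ : 0 < τ) :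
    MeasureTheory.Integrable (fun s => Real.exp (-(τ * Real.exp s)) * mlK ρ s) := by
  simpa using mlK_integrable h0 h1 hτ le_rfl

lemma mlV_int {ρ : ℝ} (h0 : 0 < ρ) (h1 : ρ < 1) {τ : ℝ} (hτ : 0 < τ) :
    MeasureTheory.Integrable (fun s => Real.exp s * Real.exp (-(τ * Real.exp s)) * mlK ρ s) := by
  simpa using mlK_integrable h0 h1 hτ zero_le_one

lemma mlU_hasDeriv {ρ : ℝ} (h0 : 0 < ρ) (h1 : ρ < 1) {τ : ℝ} (hτ : 0 < τ) :
    HasDerivAt (mlU ρ) (-mlV ρ τ) τ := by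
  have hc := mlK_continuous h0 h1
  have h := hasDerivAt_integral_of_dominated_loc_of_deriv_le (μ := MeasureTheory.volume)
    (F := fun t s => Real.exp (-(t * Real.exp s)) * mlK ρ s)
    (F' := fun t s => -(Real.exp s * Real.exp (-(t * Real.exp s)) * mlK ρ s)) (x₀ := τ)
    (s := Set.Ioi (τ/2)) (bound := fun s => Real.exp s * Real.exp (-(τ/2 * Real.exp s)) * mlK ρ s)
    (Ioi_mem_nhds (by linarith))
    (Filter.Eventually.of_forall fun t => (by fun_prop : Continuous _).aestronglyMeasurable)
    (mlU_int h0 h1 hτ)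
    ((by fun_prop : Continuous _).aestronglyMeasurable)
    (Filter.Eventually.of_forall fun s t ht => by
      have ht' : τ / 2 < t := ht
      have hk := mlK_nonneg h0 h1 s
      rw [norm_neg, Real.norm_of_nonneg (by positivity)]
      gcongr)
    (mlV_int h0 h1 (by linarith))
    (Filter.Eventually.of_forall fun s t ht => by
      have h1 := (((hasDerivAt_id t).mul_const (Real.exp s)).neg.exp).mul_const (mlK ρ s)
      refine h1.congr_deriv ?_
      simp only [Pi.neg_apply, id]; ring)
  have h2 := h.2
  rw [MeasureTheory.integral_neg] at h2
  exact h2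

lemma mlP_eq {ρ : ℝ} (h0 : 0 < ρ) (h1 : ρ < 1) {τ : ℝ} (hτ : 0 < τ) :
    mlP ρ (ρ * Real.log τ) = τ / ρ * mlV ρ τ := by
  have h := (mlS_hasDeriv_a h0 (ρ * Real.log τ)).comp τ ((Real.hasDerivAt_log hτ.ne').const_mul ρ)
  have h2 : HasDerivAt (mlS ρ ∘ fun y => ρ * Real.log y) (-mlV ρ τ) τ := by
    refine (mlU_hasDeriv h0 h1 hτ).congr_of_eventuallyEq ?_
    filter_upwards [Ioi_mem_nhds hτ] with t ht
    exact mlS_spectral h0 h1 ht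
  have := h.unique h2
  field_simp at this ⊢
  linarith

lemma mlV_nonneg {ρ : ℝ} (h0 : 0 < ρ) (h1 : ρ < 1) (τ : ℝ) : 0 ≤ mlV ρ τ :=
  MeasureTheory.integral_nonneg fun s => by
    have hk := mlK_nonneg h0 h1 s
    positivity

lemma mlU_nonneg {ρ : ℝ} (h0 : 0 < ρ) (h1 : ρ < 1) (τ : ℝ) : 0 ≤ mlU ρ τ :=
  MeasureTheory.integral_nonneg fun s => by
    have hk := mlK_nonneg h0 h1 s
    positivity

lemma mlV_anti {ρ : ℝ} (h0 : 0 < ρ) (h1 : ρ < 1) {τ t : ℝ} (hτ : 0 < τ) (h : τ ≤ t) : mlV ρ t ≤ mlV ρ τ := by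
  refine MeasureTheory.integral_mono (mlV_int h0 h1 (hτ.trans_le h)) (mlV_int h0 h1 hτ) fun s => ?_
  have hk := mlK_nonneg h0 h1 s
  dsimp only
  gcongr

lemma mlU_anti {ρ : ℝ} (h0 : 0 < ρ) (h1 : ρ < 1) {τ t : ℝ} (hτ : 0 < τ) (h : τ ≤ t) : mlU ρ t ≤ mlU ρ τ := by
  refine MeasureTheory.integral_mono (mlU_int h0 h1 (hτ.trans_le h)) (mlU_int h0 h1 hτ) fun s => ?_
  have hk := mlK_nonneg h0 h1 s
  dsimp only
  gcongr

/-! ### series integrals over (0,1) -/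

lemma ml_int_series {ρ : ℝ} (h0 : 0 < ρ) (f : ℝ → ℝ) (hf : MeasureTheory.IntegrableOn f (Set.Ioo 0 1))
    (w : ℕ → ℝ) (hw : Summable (fun k => |w k|)) :
    MeasureTheory.IntegrableOn (fun b => f b * ∑' k : ℕ, w k * b ^ (ρ * k)) (Set.Ioo 0 1) ∧
    HasSum (fun k : ℕ => w k * ∫ b in Set.Ioo 0 1, f b * b ^ (ρ * k))
      (∫ b in Set.Ioo 0 1, f b * ∑' k : ℕ, w k * b ^ (ρ * k)) := by
  have hbd : ∀ b ∈ Set.Ioo (0:ℝ) 1, ∀ k : ℕ, |w k * b ^ (ρ * k)| ≤ |w k| := by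
    intro b hb k
    rw [abs_mul, abs_of_nonneg (Real.rpow_nonneg hb.1.le _)]
    exact mul_le_of_le_one_right (abs_nonneg _) (Real.rpow_le_one hb.1.le hb.2.le (by positivity))
  have hsm : ∀ b ∈ Set.Ioo (0:ℝ) 1, Summable (fun k : ℕ => w k * b ^ (ρ * k)) := fun b hb =>
    Summable.of_norm_bounded hw (hbd b hb)
  constructor
  · refine MeasureTheory.Integrable.mono' (hf.norm.mul_const (∑' k, |w k|)) ?_ ?_
    · refine hf.aestronglyMeasurable.mul ?_
      have : Measurable (fun b : ℝ => ∑' k : ℕ, w k * b ^ (ρ * k)) :=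
        Measurable.tsum (fun k => by fun_prop)
      exact this.aestronglyMeasurable
    · filter_upwards [MeasureTheory.self_mem_ae_restrict measurableSet_Ioo] with b hb
      rw [norm_mul]
      gcongr
      exact tsum_of_norm_bounded hw.hasSum (hbd b hb)
  · have := MeasureTheory.hasSum_integral_of_dominated_convergence (μ := MeasureTheory.volume.restrict (Set.Ioo 0 1))
      (F := fun (k : ℕ) b => w k * (f b * b ^ (ρ * k))) (f := fun b => f b * ∑' k : ℕ, w k * b ^ (ρ * k))
      (fun k b => |w k| * ‖f b‖) ?_ ?_ ?_ ?_ ?_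
    · simp_rw [MeasureTheory.integral_const_mul] at this
      exact this
    · intro k
      refine (hf.aestronglyMeasurable.mul ?_).const_mul _
      exact (by fun_prop : Measurable (fun b : ℝ => b ^ (ρ * k))).aestronglyMeasurable
    · intro k
      filter_upwards [MeasureTheory.self_mem_ae_restrict measurableSet_Ioo] with b hb
      rw [show w k * (f b * b ^ (ρ * k)) = (w k * b ^ (ρ * k)) * f b by ring, norm_mul]
      gcongr
      exact hbd b hb k
    · exact Filter.Eventually.of_forall fun b => hw.mul_right _
    · simp_rw [tsum_mul_right]
      exact hf.norm.const_mul _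
    · filter_upwards [MeasureTheory.self_mem_ae_restrict measurableSet_Ioo] with b hb
      refine ((hsm b hb).hasSum.mul_left (f b)).congr_fun (fun k => ?_) |> fun h => h
      ring

lemma ml_beta {α β : ℝ} (hα : 0 < α) (hβ : 0 < β) :
    ∫ b in Set.Ioo (0:ℝ) 1, (1 - b) ^ (β - 1) * b ^ (α - 1) =
      Real.Gamma α * Real.Gamma β / Real.Gamma (α + β) := by
  have h := ProbabilityTheory.beta_eq_betaIntegralReal α β hα hβ
  rw [ProbabilityTheory.beta] at h
  rw [h, Complex.betaIntegral, intervalIntegral.integral_of_le (by norm_num),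
      ← MeasureTheory.integral_Ioc_eq_integral_Ioo, ← RCLike.re_to_complex, ← integral_re]
  · refine MeasureTheory.setIntegral_congr_fun measurableSet_Ioc fun x ⟨hx1, hx₂⟩ => ?_
    norm_cast
    rw [← Complex.ofReal_cpow, ← Complex.ofReal_cpow, RCLike.re_to_complex,
        Complex.re_mul_ofReal, Complex.ofReal_re]
    · ring
    all_goals linarith
  · have := Complex.betaIntegral_convergent (u := α) (v := β) (by simpa) (by simpa)
    rw [intervalIntegrable_iff_integrableOn_Ioc_of_le (by simp)] at this
    exact this

lemma ml_beta_integrable {α β : ℝ} (hα : 0 < α) (hβ : 0 < β) :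
    MeasureTheory.IntegrableOn (fun b : ℝ => (1 - b) ^ (β - 1) * b ^ (α - 1)) (Set.Ioo 0 1) := by
  apply MeasureTheory.Integrable.of_integral_ne_zero
  rw [ml_beta hα hβ]
  have := Real.Gamma_pos_of_pos hα
  have := Real.Gamma_pos_of_pos hβ
  have := Real.Gamma_pos_of_pos (add_pos hα hβ)
  positivity

lemma mlU_series {ρ : ℝ} (h0 : 0 < ρ) (h1 : ρ < 1) {τ : ℝ} (hτ : 0 < τ) {b : ℝ} (hb : 0 < b) :
    mlU ρ (τ * b) = ∑' k : ℕ, mlT ρ (ρ * Real.log τ) k * b ^ (ρ * k) := by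
  have := mlS_spectral h0 h1 (mul_pos hτ hb)
  rw [Real.log_mul hτ.ne' hb.ne', mul_add] at this
  unfold mlU
  rw [← this, mlS]
  exact tsum_congr fun k => mlT_shift hb k

lemma mlU_eq {ρ : ℝ} (h0 : 0 < ρ) (h1 : ρ < 1) {τ : ℝ} (hτ : 0 < τ) :
    mlU ρ τ = ∑' k : ℕ, mlT ρ (ρ * Real.log τ) k := (mlS_spectral h0 h1 hτ).symm

lemma mlV_series {ρ : ℝ} (h0 : 0 < ρ) (h1 : ρ < 1) {τ : ℝ} (hτ : 0 < τ) {b : ℝ} (hb : 0 < b) :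
    τ * b * mlV ρ (τ * b) = ∑' k : ℕ, (-(ρ * (k * mlT ρ (ρ * Real.log τ) k))) * b ^ (ρ * k) := by
  have := mlP_eq h0 h1 (mul_pos hτ hb)
  rw [Real.log_mul hτ.ne' hb.ne', mul_add, mlP] at this
  have h2 : τ * b * mlV ρ (τ * b) = (-ρ) * ∑' k : ℕ, (k:ℝ) * mlT ρ (ρ * Real.log τ + ρ * Real.log b) k := by
    have h3 : τ * b * mlV ρ (τ * b) = ρ * (τ * b / ρ * mlV ρ (τ * b)) := by field_simp
    rw [h3, ← this]; ring
  rw [h2, ← tsum_mul_left]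
  refine tsum_congr fun k => ?_
  rw [mlT_shift hb k]; ring

lemma mlT_sa {ρ : ℝ} (h0 : 0 < ρ) (a : ℝ) : Summable (fun k => |mlT ρ a k|) := by
  simpa using mlT_summable_abs_pow h0 a 0

lemma mlT_sk {ρ : ℝ} (h0 : 0 < ρ) (a : ℝ) : Summable (fun k : ℕ => |(-(ρ * (k * mlT ρ a k)))|) := by
  have := (mlT_summable_abs_pow h0 a 1).mul_left ρ
  refine this.congr fun k => ?_
  rw [abs_neg, abs_mul, abs_mul, abs_of_pos h0, pow_one, Nat.abs_cast]

lemma ml_one_int : MeasureTheory.IntegrableOn (fun _ : ℝ => (1:ℝ)) (Set.Ioo 0 1) := by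
  simp

/-- `f b * U(τ b)` is integrable with termwise integral. -/
lemma mlU_int01 {ρ : ℝ} (h0 : 0 < ρ) (h1 : ρ < 1) {τ : ℝ} (hτ : 0 < τ) (f : ℝ → ℝ)
    (hf : MeasureTheory.IntegrableOn f (Set.Ioo 0 1)) :
    MeasureTheory.IntegrableOn (fun b => f b * mlU ρ (τ * b)) (Set.Ioo 0 1) ∧
    HasSum (fun k : ℕ => mlT ρ (ρ * Real.log τ) k * ∫ b in Set.Ioo 0 1, f b * b ^ (ρ * k))
      (∫ b in Set.Ioo 0 1, f b * mlU ρ (τ * b)) := by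
  have h := ml_int_series h0 f hf _ (mlT_sa h0 (ρ * Real.log τ))
  have he : Set.EqOn (fun b => f b * ∑' k : ℕ, mlT ρ (ρ * Real.log τ) k * b ^ (ρ * k))
      (fun b => f b * mlU ρ (τ * b)) (Set.Ioo 0 1) := fun b hb => by
    simp only [mlU_series h0 h1 hτ hb.1]
  refine ⟨h.1.congr_fun he measurableSet_Ioo, ?_⟩
  rw [← MeasureTheory.setIntegral_congr_fun measurableSet_Ioo he]
  exact h.2

lemma mlV_int01 {ρ : ℝ} (h0 : 0 < ρ) (h1 : ρ < 1) {τ : ℝ} (hτ : 0 < τ) (f : ℝ → ℝ)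
    (hf : MeasureTheory.IntegrableOn f (Set.Ioo 0 1)) :
    MeasureTheory.IntegrableOn (fun b => f b * (τ * b * mlV ρ (τ * b))) (Set.Ioo 0 1) ∧
    HasSum (fun k : ℕ => -(ρ * (k * mlT ρ (ρ * Real.log τ) k)) * ∫ b in Set.Ioo 0 1, f b * b ^ (ρ * k))
      (∫ b in Set.Ioo 0 1, f b * (τ * b * mlV ρ (τ * b))) := by
  have h := ml_int_series h0 f hf _ (mlT_sk h0 (ρ * Real.log τ))
  have he : Set.EqOn (fun b => f b * ∑' k : ℕ, -(ρ * (k * mlT ρ (ρ * Real.log τ) k)) * b ^ (ρ * k))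
      (fun b => f b * (τ * b * mlV ρ (τ * b))) (Set.Ioo 0 1) := fun b hb => by
    simp only [mlV_series h0 h1 hτ hb.1]
  refine ⟨h.1.congr_fun he measurableSet_Ioo, ?_⟩
  rw [← MeasureTheory.setIntegral_congr_fun measurableSet_Ioo he]
  exact h.2

lemma ml_M1 {ρ : ℝ} (h0 : 0 < ρ) (h1 : ρ < 1) {τ : ℝ} (hτ : 0 < τ) :
    ∫ b in Set.Ioo 0 1, τ * b * mlV ρ (τ * b) = (∫ b in Set.Ioo 0 1, mlU ρ (τ * b)) - mlU ρ τ := by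
  have hU := (mlU_int01 h0 h1 hτ _ ml_one_int).2
  have hV := (mlV_int01 h0 h1 hτ _ ml_one_int).2
  have hT := (mlT_summable h0 (ρ * Real.log τ)).hasSum
  rw [← mlU_eq h0 h1 hτ] at hT
  simp only [one_mul] at hU hV
  refine hV.unique ((hU.sub hT).congr_fun (fun k => ?_) |> fun h => h)
  rw [ml_integral_rpow (by have : 0 ≤ ρ * k := by positivity
                           linarith)]
  have : ρ * k + 1 ≠ 0 := by positivity
  field_simp
  ring

lemma ml_identity {ρ : ℝ} (h0 : 0 < ρ) (h1 : ρ < 1) {τ : ℝ} (hτ : 0 < τ) :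
    MeasureTheory.IntegrableOn (fun b => (1 - b) ^ (-ρ) * mlU ρ (τ * b)) (Set.Ioo 0 1) ∧
    τ ^ ρ * (∫ b in Set.Ioo 0 1, mlU ρ (τ * b)) +
      1 / Real.Gamma (1 - ρ) * (∫ b in Set.Ioo 0 1, (1 - b) ^ (-ρ) * mlU ρ (τ * b)) = 1 / Real.Gamma (2 - ρ) := by
  have hfi : MeasureTheory.IntegrableOn (fun b : ℝ => (1 - b) ^ (-ρ)) (Set.Ioo 0 1) := by
    have := ml_beta_integrable (α := 1) (β := 1 - ρ) one_pos (by linarith)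
    simpa using this
  have hU := (mlU_int01 h0 h1 hτ _ ml_one_int).2
  have hB := mlU_int01 h0 h1 hτ _ hfi
  refine ⟨hB.1, ?_⟩
  simp only [one_mul] at hU
  have hG := Real.Gamma_pos_of_pos (show 0 < 1 - ρ by linarith)
  have hB2 := hB.2.mul_left (1 / Real.Gamma (1 - ρ))
  have hval : ∀ k : ℕ, 1 / Real.Gamma (1 - ρ) * (mlT ρ (ρ * Real.log τ) k * ∫ b in Set.Ioo (0:ℝ) 1, (1 - b) ^ (-ρ) * b ^ (ρ * k))
      = (-1) ^ k * (Real.exp (k * (ρ * Real.log τ)) / Real.Gamma (ρ * k + 2 - ρ)) := by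
    intro k
    have := ml_beta (α := ρ * k + 1) (β := 1 - ρ) (by positivity) (by linarith)
    rw [show 1 - ρ - 1 = -ρ by ring, show ρ * k + 1 - 1 = ρ * k by ring,
      show ρ * k + 1 + (1 - ρ) = ρ * k + 2 - ρ by ring] at this
    rw [this, mlT]
    have hG2 := Real.Gamma_pos_of_pos (show 0 < ρ * k + 1 by positivity)
    field_simp
  simp_rw [hval] at hB2
  have hx : Real.exp (ρ * Real.log τ) = τ ^ ρ := by rw [Real.rpow_def_of_pos hτ, mul_comm]
  have hsplit := (hasSum_nat_add_iff' 1).2 hB2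
  have hU2 := hU.mul_left (-(τ ^ ρ))
  have := hsplit.unique (hU2.congr_fun (fun k => ?_) |> fun h => h)
  · simp only [Finset.range_one, Finset.sum_singleton, pow_zero, Nat.cast_zero, zero_mul, mul_zero, Real.exp_zero, zero_add, one_mul] at this
    linarith
  · rw [ml_integral_rpow (by have : 0 ≤ ρ * k := by positivity
                             linarith), mlT, ← hx]
    push_cast
    rw [show ρ * ((k:ℝ) + 1) + 2 - ρ = (ρ * k + 1) + 1 by ring, Real.Gamma_add_one (by positivity),
      show ((k:ℝ) + 1) * (ρ * Real.log τ) = k * (ρ * Real.log τ) + ρ * Real.log τ by ring, Real.exp_add, pow_succ]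
    have hG2 := Real.Gamma_pos_of_pos (show 0 < ρ * k + 1 by positivity)
    have : ρ * k + 1 ≠ 0 := by positivity
    field_simp

/-! ### bounds -/

noncomputable def mlg (ρ : ℝ) : ℝ := 1 / Real.Gamma (2 - ρ)
noncomputable def mlσ (ρ : ℝ) : ℝ := Real.sin (ρ * π) / π

lemma mlg_ge {ρ : ℝ} (h0 : 0 < ρ) (h1 : ρ < 1) : 1 ≤ mlg ρ := by
  have := ml_gamma_one_add_le (e := 1 - ρ) (by linarith) (by linarith)
  rw [show 1 + (1 - ρ) = 2 - ρ by ring] at this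
  exact (one_le_div (Real.Gamma_pos_of_pos (by linarith))).2 this

lemma mlg_le {ρ : ℝ} (h0 : 0 < ρ) (h1 : ρ < 1) : mlg ρ ≤ 2 := by
  have := ml_gamma_one_add_ge (e := 1 - ρ) (by linarith)
  rw [show 1 + (1 - ρ) = 2 - ρ by ring] at this
  have hG := (Real.Gamma_pos_of_pos (show 0 < 2 - ρ by linarith))
  unfold mlg
  rw [div_le_iff₀ hG]
  rw [div_le_iff₀ (by linarith)] at this
  nlinarith

lemma mlσ_pos {ρ : ℝ} (h0 : 0 < ρ) (h1 : ρ < 1) : 0 < mlσ ρ := by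
  have := ml_sin_pos h0 h1
  have := Real.pi_pos
  unfold mlσ; positivity

lemma mlσ_gamma {ρ : ℝ} (h0 : 0 < ρ) (h1 : ρ < 1) : mlσ ρ * Real.Gamma ρ = (1 - ρ) * mlg ρ := by
  have h := Real.Gamma_mul_Gamma_one_sub ρ
  have hs := ml_sin_pos h0 h1
  have hpi := Real.pi_pos
  have hG := Real.Gamma_pos_of_pos (show 0 < 1 - ρ by linarith)
  rw [mul_comm π ρ, eq_div_iff hs.ne'] at h
  unfold mlσ mlg
  rw [show 2 - ρ = (1 - ρ) + 1 by ring, Real.Gamma_add_one (by linarith)]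
  have : 1 - ρ ≠ 0 := by linarith
  field_simp
  linarith

lemma mlσ_gamma' {ρ : ℝ} (h0 : 0 < ρ) (h1 : ρ < 1) : mlσ ρ * Real.Gamma (ρ + 1) = ρ * (1 - ρ) * mlg ρ := by
  rw [Real.Gamma_add_one h0.ne']
  linear_combination ρ * mlσ_gamma h0 h1

lemma mlσ_gamma2 {ρ : ℝ} (h0 : 0 < ρ) (h1 : ρ < 1) :
    mlσ ρ * Real.Gamma (2 * ρ + 1) ≤ 9 / 2 * (ρ * (1 - ρ)) := by
  have hσ := mlσ_pos h0 h1
  have h2 := ml_gamma_le_two (r := 2 * ρ) (by linarith) (by linarith)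
  rw [add_comm] at h2
  have h3 := mlσ_gamma' h0 h1
  have h4 := ml_gamma_one_add_ge (e := ρ) h0.le
  have h5 := ml_gamma_one_add_ge (e := 1 - ρ) (by linarith)
  rw [show 1 + (1 - ρ) = 2 - ρ by ring] at h5
  rw [add_comm 1 ρ] at h4
  have hg1 := Real.Gamma_pos_of_pos (show 0 < ρ + 1 by linarith)
  have hg2 := Real.Gamma_pos_of_pos (show 0 < 2 - ρ by linarith)
  rw [div_le_iff₀ (by linarith)] at h4 h5
  have hge : mlg ρ ≤ 2 - ρ := by
    unfold mlg; rw [div_le_iff₀ hg2]; linarith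
  have hp : 0 < ρ * (1 - ρ) := mul_pos h0 (by linarith)
  have h6 : mlσ ρ ≤ ρ * (1 - ρ) * mlg ρ * (ρ + 1) := by
    rw [← h3]; nlinarith
  have h7 : mlσ ρ ≤ ρ * (1 - ρ) * (9/4) := by
    refine h6.trans ?_
    rw [mul_assoc]
    gcongr
    nlinarith [sq_nonneg (ρ - 1/2)]
  nlinarith

lemma mlσ_gamma3 {ρ : ℝ} (h0 : 0 < ρ) (h1 : ρ < 1) :
    mlσ ρ * Real.Gamma (2 * ρ) ≤ 9 / 4 * (1 - ρ) := by
  have h := mlσ_gamma2 h0 h1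
  rw [Real.Gamma_add_one (by linarith)] at h
  have : ρ * (mlσ ρ * Real.Gamma (2 * ρ)) ≤ ρ * (9 / 4 * (1 - ρ)) := by linarith
  exact le_of_mul_le_mul_left this h0

lemma mlU_le {ρ : ℝ} (h0 : 0 < ρ) (h1 : ρ < 1) {τ : ℝ} (hτ : 0 < τ) : mlU ρ τ ≤ mlg ρ / τ ^ ρ := by
  obtain ⟨hi, h⟩ := ml_identity h0 h1 hτ
  have hU := (mlU_int01 h0 h1 hτ _ ml_one_int).1
  simp only [one_mul] at hU
  have hx : 0 < τ ^ ρ := Real.rpow_pos_of_pos hτ _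
  have hG := Real.Gamma_pos_of_pos (show 0 < 1 - ρ by linarith)
  have hB : 0 ≤ ∫ b in Set.Ioo 0 1, (1 - b) ^ (-ρ) * mlU ρ (τ * b) :=
    MeasureTheory.setIntegral_nonneg measurableSet_Ioo fun b hb =>
      mul_nonneg (Real.rpow_nonneg (by linarith [hb.2]) _) (mlU_nonneg h0 h1 _)
  have hm : mlU ρ τ ≤ ∫ b in Set.Ioo 0 1, mlU ρ (τ * b) := by
    have := MeasureTheory.setIntegral_mono_on (f := fun _ => mlU ρ τ) (by simp) hU measurableSet_Ioo
      (fun b hb => mlU_anti h0 h1 (mul_pos hτ hb.1) (by nlinarith [hb.2]))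
    simpa using this
  rw [le_div_iff₀ hx]
  have : 0 ≤ 1 / Real.Gamma (1 - ρ) * ∫ b in Set.Ioo 0 1, (1 - b) ^ (-ρ) * mlU ρ (τ * b) := by positivity
  unfold mlg
  nlinarith

lemma mlU_int_ge {ρ : ℝ} (h0 : 0 < ρ) (h1 : ρ < 1) {τ : ℝ} (hτ : 0 < τ) :
    mlg ρ / τ ^ ρ - 6 / (τ ^ ρ) ^ 2 ≤ ∫ b in Set.Ioo 0 1, mlU ρ (τ * b) := by
  obtain ⟨hi, h⟩ := ml_identity h0 h1 hτ
  have hx : 0 < τ ^ ρ := Real.rpow_pos_of_pos hτ _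
  have hG := Real.Gamma_pos_of_pos (show 0 < 1 - ρ by linarith)
  have hb1 := ml_beta (α := 1 - ρ) (β := 1 - ρ) (by linarith) (by linarith)
  have hb2 := ml_beta_integrable (α := 1 - ρ) (β := 1 - ρ) (by linarith) (by linarith)
  rw [show 1 - ρ - 1 = -ρ by ring] at hb1 hb2
  have hle : ∫ b in Set.Ioo 0 1, (1 - b) ^ (-ρ) * mlU ρ (τ * b) ≤
      mlg ρ / τ ^ ρ * (Real.Gamma (1 - ρ) * Real.Gamma (1 - ρ) / Real.Gamma (1 - ρ + (1 - ρ))) := by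
    rw [← hb1, ← MeasureTheory.integral_const_mul]
    refine MeasureTheory.setIntegral_mono_on hi (hb2.const_mul _) measurableSet_Ioo fun b hb => ?_
    have h3 := mlU_le h0 h1 (mul_pos hτ hb.1)
    rw [Real.mul_rpow hτ.le hb.1.le] at h3
    calc _ ≤ (1 - b) ^ (-ρ) * (mlg ρ / (τ ^ ρ * b ^ ρ)) := by
          have : 0 ≤ (1 - b) ^ (-ρ) := Real.rpow_nonneg (by linarith [hb.2]) _
          gcongr
      _ = _ := by
          rw [Real.rpow_neg hb.1.le]; field_simp
  have hc : 1 / Real.Gamma (1 - ρ) * (mlg ρ / τ ^ ρ * (Real.Gamma (1 - ρ) * Real.Gamma (1 - ρ) / Real.Gamma (1 - ρ + (1 - ρ)))) ≤ 6 / τ ^ ρ := by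
    have hG2 := Real.Gamma_pos_of_pos (show 0 < 1 - ρ + (1 - ρ) by linarith)
    have e1 : mlg ρ * Real.Gamma (1 - ρ) * (1 - ρ) = 1 := by
      unfold mlg
      rw [show 2 - ρ = (1 - ρ) + 1 by ring, Real.Gamma_add_one (by linarith)]
      have : 1 - ρ ≠ 0 := by linarith
      field_simp
    have e2 := ml_gamma_one_add_ge (e := 1 - ρ + (1 - ρ)) (by linarith)
    rw [add_comm, Real.Gamma_add_one (by linarith), div_le_iff₀ (by linarith)] at e2
    have hE : 0 < 1 - ρ := by linarith
    have e3 : mlg ρ * Real.Gamma (1 - ρ) ≤ 6 * Real.Gamma (1 - ρ + (1 - ρ)) := by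
      refine le_of_mul_le_mul_right (a := 1 - ρ) ?_ hE
      rw [e1]
      have : 0 < (1 - ρ) * Real.Gamma (1 - ρ + (1 - ρ)) := by positivity
      nlinarith
    have : 1 / Real.Gamma (1 - ρ) * (mlg ρ / τ ^ ρ * (Real.Gamma (1 - ρ) * Real.Gamma (1 - ρ) / Real.Gamma (1 - ρ + (1 - ρ)))) =
      (mlg ρ * Real.Gamma (1 - ρ) / Real.Gamma (1 - ρ + (1 - ρ))) / τ ^ ρ := by field_simp
    rw [this]
    gcongr
    rw [div_le_iff₀ hG2]; exact e3
  have h5 : 1 / Real.Gamma (1 - ρ) * (∫ b in Set.Ioo 0 1, (1 - b) ^ (-ρ) * mlU ρ (τ * b)) ≤ 6 / τ ^ ρ :=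
    (mul_le_mul_of_nonneg_left hle (by positivity)).trans hc
  have h6 : mlg ρ - 6 / τ ^ ρ ≤ τ ^ ρ * (∫ b in Set.Ioo 0 1, mlU ρ (τ * b)) := by
    unfold mlg; linarith
  calc mlg ρ / τ ^ ρ - 6 / (τ ^ ρ) ^ 2 = (mlg ρ - 6 / τ ^ ρ) / τ ^ ρ := by field_simp
    _ ≤ _ := by rw [div_le_iff₀ hx]; linarith

/-! pointwise kernel bounds -/

lemma mlK_upper_small {ρ : ℝ} (h0 : 0 < ρ) (h1 : ρ < 1) {s : ℝ} (hy : Real.exp (ρ * s) ≤ 1 / 2) :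
    mlK ρ s ≤ mlσ ρ * (Real.exp (ρ * s) + 6 * Real.exp (2 * ρ * s)) := by
  have hσ := mlσ_pos h0 h1
  have hD := mlDen_pos h0 h1 (Real.exp (ρ * s))
  have e2 : Real.exp (2 * ρ * s) = Real.exp (ρ * s) ^ 2 := by
    rw [← Real.exp_nat_mul]; congr 1; push_cast; ring
  have hyp := Real.exp_pos (ρ * s)
  rw [e2]
  unfold mlK
  change mlσ ρ * _ / _ ≤ _
  rw [div_le_iff₀ hD]
  set y := Real.exp (ρ * s)
  have hD2 : (1 - y) ^ 2 ≤ mlDen ρ y := by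
    unfold mlDen; nlinarith [Real.neg_one_le_cos (ρ * π)]
  have hp : 1 ≤ (1 + 6 * y) * (1 - y) ^ 2 := by
    have : 0 ≤ y * ((1 - 2 * y) * (4 - 3 * y)) := by
      apply mul_nonneg hyp.le (mul_nonneg (by linarith) (by linarith))
    nlinarith
  calc mlσ ρ * y ≤ mlσ ρ * y * ((1 + 6 * y) * (1 - y) ^ 2) := le_mul_of_one_le_right (by positivity) hp
    _ ≤ mlσ ρ * y * ((1 + 6 * y) * mlDen ρ y) := by gcongr
    _ = _ := by ring

lemma mlK_lower {ρ : ℝ} (h0 : 0 < ρ) (h1 : ρ < 1) (s : ℝ) :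
    mlσ ρ * (Real.exp (ρ * s) - 2 * Real.exp (2 * ρ * s)) ≤ mlK ρ s := by
  have hσ := mlσ_pos h0 h1
  have hD := mlDen_pos h0 h1 (Real.exp (ρ * s))
  have e2 : Real.exp (2 * ρ * s) = Real.exp (ρ * s) ^ 2 := by
    rw [← Real.exp_nat_mul]; congr 1; push_cast; ring
  have hyp := Real.exp_pos (ρ * s)
  rw [e2]
  unfold mlK
  change _ ≤ mlσ ρ * _ / _
  rw [le_div_iff₀ hD]
  set y := Real.exp (ρ * s)
  have hD2 : mlDen ρ y ≤ (1 + y) ^ 2 := by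
    unfold mlDen; nlinarith [Real.cos_le_one (ρ * π)]
  have hp : (1 - 2 * y) * mlDen ρ y ≤ 1 := by
    rcases le_total (1 - 2 * y) 0 with h | h
    · nlinarith
    · calc _ ≤ (1 - 2 * y) * (1 + y) ^ 2 := by gcongr
        _ ≤ 1 := by nlinarith [pow_pos hyp 3, pow_pos hyp 2]
  calc _ = mlσ ρ * y * ((1 - 2 * y) * mlDen ρ y) := by ring
    _ ≤ mlσ ρ * y * 1 := by gcongr
    _ = _ := by ring

lemma ml_exp_small {z : ℝ} (hz : 43 / 2 ≤ z) : z ^ 2 * Real.exp (-(z / 2)) ≤ 1 := by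
  have h := Real.pow_div_factorial_le_exp (x := z / 2) (by linarith) 4
  rw [Real.exp_neg, ← div_eq_mul_inv, div_le_one (Real.exp_pos _)]
  refine le_trans ?_ h
  norm_num [Nat.factorial]
  have : 400 ≤ z ^ 2 := by nlinarith
  nlinarith [sq_nonneg z]

lemma mlK_pointwise {ρ : ℝ} (h0 : 0 < ρ) (h1 : ρ < 1) {τ : ℝ} (hτ : 0 < τ) (hx : 43 ≤ τ ^ ρ) (s : ℝ) :
    Real.exp (-(τ * Real.exp s)) * mlK ρ s ≤
      Real.exp (-(τ * Real.exp s)) * (mlσ ρ * (Real.exp (ρ * s) + 6 * Real.exp (2 * ρ * s))) +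
      1 / τ ^ ρ * (Real.exp (-(τ / 2 * Real.exp s)) * mlK ρ s) ∧
    τ * Real.exp s * Real.exp (-(τ * Real.exp s)) * mlK ρ s ≤
      τ * Real.exp s * Real.exp (-(τ * Real.exp s)) * (mlσ ρ * (Real.exp (ρ * s) + 6 * Real.exp (2 * ρ * s))) +
      2 / τ ^ ρ * (Real.exp (-(τ / 2 * Real.exp s)) * mlK ρ s) := by
  have hk := mlK_nonneg h0 h1 s
  have hσ := mlσ_pos h0 h1
  have hx0 : 0 < τ ^ ρ := by linarith
  rcases le_total (Real.exp (ρ * s)) (1/2) with h | h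
  · have hu := mlK_upper_small h0 h1 h
    constructor
    · refine le_add_of_le_of_nonneg ?_ (by positivity)
      gcongr
    · refine le_add_of_le_of_nonneg ?_ (by positivity)
      gcongr
  · set z := τ * Real.exp s with hz
    have hz0 : 0 < z := by positivity
    have hzρ : z ^ ρ = τ ^ ρ * Real.exp (ρ * s) := by
      rw [hz, Real.mul_rpow hτ.le (Real.exp_pos _).le, ← Real.exp_mul, mul_comm s]
    have hzx : τ ^ ρ / 2 ≤ z ^ ρ := by rw [hzρ]; nlinarith
    have hz1 : 1 ≤ z := by
      by_contra hlt
      push Not at hlt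
      have := Real.rpow_le_one hz0.le hlt.le h0.le
      linarith
    have hzz : z ^ ρ ≤ z := by
      have := Real.rpow_le_rpow_of_exponent_le hz1 h1.le
      rwa [Real.rpow_one] at this
    have hzx2 : τ ^ ρ ≤ 2 * z := by linarith
    have hsm := ml_exp_small (z := z) (by linarith)
    have he : Real.exp (-z) = Real.exp (-(z / 2)) * Real.exp (-(τ / 2 * Real.exp s)) := by
      rw [← Real.exp_add, hz]; congr 1; ring
    have a2 : z * Real.exp (-(z / 2)) ≤ 2 / τ ^ ρ := by
      rw [le_div_iff₀ hx0]
      have : 0 < z * Real.exp (-(z / 2)) := by positivity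
      nlinarith
    have a1 : Real.exp (-(z / 2)) ≤ 1 / τ ^ ρ := by
      have : 0 < Real.exp (-(z / 2)) := by positivity
      have : 2 * Real.exp (-(z / 2)) ≤ z * Real.exp (-(z / 2)) := by gcongr; linarith
      have e : 2 / τ ^ ρ = 2 * (1 / τ ^ ρ) := by ring
      linarith
    constructor
    · refine le_add_of_nonneg_of_le (by positivity) ?_
      rw [he, mul_assoc]; gcongr
    · refine le_add_of_nonneg_of_le (by positivity) ?_
      rw [he]
      calc z * (Real.exp (-(z / 2)) * Real.exp (-(τ / 2 * Real.exp s))) * mlK ρ s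
          = z * Real.exp (-(z / 2)) * (Real.exp (-(τ / 2 * Real.exp s)) * mlK ρ s) := by ring
        _ ≤ _ := by gcongr

lemma ml_int3 {f g h : ℝ → ℝ} (hf : MeasureTheory.Integrable f) (hg : MeasureTheory.Integrable g)
    (hh : MeasureTheory.Integrable h) (A B C : ℝ) :
    ∫ s, (A * f s + B * g s + C * h s) = A * (∫ s, f s) + B * (∫ s, g s) + C * ∫ s, h s := by
  have h2 : MeasureTheory.Integrable (fun s => A * f s + B * g s) := (hf.const_mul A).add (hg.const_mul B)
  rw [MeasureTheory.integral_add h2 (hh.const_mul C), MeasureTheory.integral_add (hf.const_mul A) (hg.const_mul B)]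
  simp only [MeasureTheory.integral_const_mul]

lemma mle_val {τ κ : ℝ} (hτ : 0 < τ) (hκ : 0 < κ) :
    MeasureTheory.Integrable (fun s => Real.exp (κ * s) * Real.exp (-(τ * Real.exp s))) ∧
    ∫ s, Real.exp (κ * s) * Real.exp (-(τ * Real.exp s)) = Real.Gamma κ / τ ^ κ := by
  have h := mle_integrable hτ (μ := -κ) (by linarith)
  have e : mle τ (-κ) = fun s => Real.exp (κ * s) * Real.exp (-(τ * Real.exp s)) := by
    funext s; unfold mle; rw [neg_neg, mul_comm]
  rw [e, neg_neg, Real.rpow_neg hτ.le] at h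
  refine ⟨h.1, h.2.trans ?_⟩
  rw [div_eq_mul_inv, mul_comm]

lemma mlU_half {ρ : ℝ} (h0 : 0 < ρ) (h1 : ρ < 1) {τ : ℝ} (hτ : 0 < τ) : mlU ρ (τ / 2) ≤ 4 / τ ^ ρ := by
  refine (mlU_le h0 h1 (by linarith)).trans ?_
  have hx0 : 0 < τ ^ ρ := Real.rpow_pos_of_pos hτ _
  rw [Real.div_rpow hτ.le (by norm_num), div_div_eq_mul_div]
  have h2 : (2:ℝ) ^ ρ ≤ 2 := by
    have := Real.rpow_le_rpow_of_exponent_le (one_le_two (α := ℝ)) h1.le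
    rwa [Real.rpow_one] at this
  have h3 : (0:ℝ) < 2 ^ ρ := by positivity
  gcongr
  nlinarith [mlg_le h0 h1, mlg_ge h0 h1]

lemma ml_rpow_two {τ : ℝ} (hτ : 0 < τ) (ρ : ℝ) : τ ^ (2 * ρ) = (τ ^ ρ) ^ 2 := by
  rw [mul_comm, Real.rpow_mul hτ.le]; norm_cast

lemma mlU_upper {ρ : ℝ} (h0 : 0 < ρ) (h1 : ρ < 1) {τ : ℝ} (hτ : 0 < τ) (hx : 43 ≤ τ ^ ρ) :
    mlU ρ τ ≤ (1 - ρ) * mlg ρ / τ ^ ρ + (27 / 2 * (1 - ρ) + 4) / (τ ^ ρ) ^ 2 := by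
  have hx0 : 0 < τ ^ ρ := by linarith
  have i1 := mle_val hτ h0
  have i2 := mle_val hτ (κ := 2 * ρ) (by linarith)
  have i3 := mlU_int h0 h1 (τ := τ / 2) (by linarith)
  have hi : MeasureTheory.Integrable (fun s => (mlσ ρ * (Real.exp (ρ * s) * Real.exp (-(τ * Real.exp s))) +
      6 * mlσ ρ * (Real.exp (2 * ρ * s) * Real.exp (-(τ * Real.exp s)))) +
      1 / τ ^ ρ * (Real.exp (-(τ / 2 * Real.exp s)) * mlK ρ s)) :=
    ((i1.1.const_mul _).add (i2.1.const_mul _)).add (i3.const_mul _)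
  have h := MeasureTheory.integral_mono (mlU_int h0 h1 hτ) hi (fun s => by
    refine (mlK_pointwise h0 h1 hτ hx s).1.trans (le_of_eq ?_)
    ring)
  rw [ml_int3 i1.1 i2.1 i3, i1.2, i2.2] at h
  change mlU ρ τ ≤ _ + _ * mlU ρ (τ / 2) at h
  have hh := mlU_half h0 h1 hτ
  have g1 := mlσ_gamma h0 h1
  have g3 := mlσ_gamma3 h0 h1
  rw [ml_rpow_two hτ] at h
  calc mlU ρ τ ≤ _ := h
    _ = mlσ ρ * Real.Gamma ρ / τ ^ ρ + 6 * (mlσ ρ * Real.Gamma (2 * ρ)) / (τ ^ ρ) ^ 2 + 1 / τ ^ ρ * mlU ρ (τ / 2) := by ring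
    _ ≤ (1 - ρ) * mlg ρ / τ ^ ρ + 6 * (9 / 4 * (1 - ρ)) / (τ ^ ρ) ^ 2 + 1 / τ ^ ρ * (4 / τ ^ ρ) := by
        rw [g1]; gcongr
    _ = _ := by field_simp; ring

lemma mlV_upper {ρ : ℝ} (h0 : 0 < ρ) (h1 : ρ < 1) {τ : ℝ} (hτ : 0 < τ) (hx : 43 ≤ τ ^ ρ) :
    τ * mlV ρ τ ≤ ρ * (1 - ρ) * mlg ρ / τ ^ ρ + (27 * (ρ * (1 - ρ)) + 8) / (τ ^ ρ) ^ 2 := by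
  have hx0 : 0 < τ ^ ρ := by linarith
  have i1 := mle_val hτ (κ := ρ + 1) (by linarith)
  have i2 := mle_val hτ (κ := 2 * ρ + 1) (by linarith)
  have i3 := mlU_int h0 h1 (τ := τ / 2) (by linarith)
  have hi : MeasureTheory.Integrable (fun s => (τ * mlσ ρ * (Real.exp ((ρ + 1) * s) * Real.exp (-(τ * Real.exp s))) +
      τ * (6 * mlσ ρ) * (Real.exp ((2 * ρ + 1) * s) * Real.exp (-(τ * Real.exp s)))) +
      2 / τ ^ ρ * (Real.exp (-(τ / 2 * Real.exp s)) * mlK ρ s)) :=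
    ((i1.1.const_mul _).add (i2.1.const_mul _)).add (i3.const_mul _)
  have h := MeasureTheory.integral_mono ((mlV_int h0 h1 hτ).const_mul τ) hi (fun s => by
    have := (mlK_pointwise h0 h1 hτ hx s).2
    simp only [add_mul _ (1:ℝ), one_mul, Real.exp_add]
    refine le_trans (le_of_eq ?_) (this.trans (le_of_eq ?_)) <;> ring)
  rw [ml_int3 i1.1 i2.1 i3, MeasureTheory.integral_const_mul, i1.2, i2.2] at h
  change τ * mlV ρ τ ≤ _ + _ * mlU ρ (τ / 2) at h
  have hh := mlU_half h0 h1 hτ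
  have g1 := mlσ_gamma' h0 h1
  have g3 := mlσ_gamma2 h0 h1
  rw [Real.rpow_add_one hτ.ne', Real.rpow_add_one hτ.ne', ml_rpow_two hτ] at h
  calc τ * mlV ρ τ ≤ _ := h
    _ = mlσ ρ * Real.Gamma (ρ + 1) / τ ^ ρ + 6 * (mlσ ρ * Real.Gamma (2 * ρ + 1)) / (τ ^ ρ) ^ 2 + 2 / τ ^ ρ * mlU ρ (τ / 2) := by
        field_simp
    _ ≤ ρ * (1 - ρ) * mlg ρ / τ ^ ρ + 6 * (9 / 2 * (ρ * (1 - ρ))) / (τ ^ ρ) ^ 2 + 2 / τ ^ ρ * (4 / τ ^ ρ) := by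
        rw [g1]; gcongr
    _ = _ := by field_simp; ring

lemma mlV_lower {ρ : ℝ} (h0 : 0 < ρ) (h1 : ρ < 1) {τ : ℝ} (hτ : 0 < τ) :
    ρ * (1 - ρ) * mlg ρ * τ ^ (-ρ) - 9 * (ρ * (1 - ρ)) * τ ^ (-(2 * ρ)) ≤ τ * mlV ρ τ := by
  have hx0 : 0 < τ ^ ρ := Real.rpow_pos_of_pos hτ _
  have i1 := mle_val hτ (κ := ρ + 1) (by linarith)
  have i2 := mle_val hτ (κ := 2 * ρ + 1) (by linarith)
  have hi : MeasureTheory.Integrable (fun s => (τ * mlσ ρ * (Real.exp ((ρ + 1) * s) * Real.exp (-(τ * Real.exp s))) -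
      τ * (2 * mlσ ρ) * (Real.exp ((2 * ρ + 1) * s) * Real.exp (-(τ * Real.exp s))))) :=
    ((i1.1.const_mul _).sub (i2.1.const_mul _))
  have h := MeasureTheory.integral_mono hi ((mlV_int h0 h1 hτ).const_mul τ) (fun s => by
    have := mlK_lower h0 h1 s
    have h2 : 0 ≤ τ * Real.exp s * Real.exp (-(τ * Real.exp s)) := by positivity
    have h3 := mul_le_mul_of_nonneg_left this h2
    simp only [add_mul _ (1:ℝ), one_mul, Real.exp_add]
    refine le_trans (le_of_eq ?_) (h3.trans (le_of_eq ?_)) <;> ring)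
  rw [MeasureTheory.integral_sub (i1.1.const_mul _) (i2.1.const_mul _),
    MeasureTheory.integral_const_mul, MeasureTheory.integral_const_mul, MeasureTheory.integral_const_mul,
    i1.2, i2.2] at h
  change _ ≤ τ * mlV ρ τ at h
  have g1 := mlσ_gamma' h0 h1
  have g3 := mlσ_gamma2 h0 h1
  rw [Real.rpow_add_one hτ.ne', Real.rpow_add_one hτ.ne', ml_rpow_two hτ] at h
  refine le_trans ?_ h
  rw [Real.rpow_neg hτ.le, Real.rpow_neg hτ.le, ml_rpow_two hτ, ← g1]
  have e : τ * mlσ ρ * (Real.Gamma (ρ + 1) / (τ ^ ρ * τ)) - τ * (2 * mlσ ρ) * (Real.Gamma (2 * ρ + 1) / ((τ ^ ρ) ^ 2 * τ))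
    = mlσ ρ * Real.Gamma (ρ + 1) * (τ ^ ρ)⁻¹ - 2 * (mlσ ρ * Real.Gamma (2 * ρ + 1)) * ((τ ^ ρ) ^ 2)⁻¹ := by
    field_simp
  rw [e]
  have : 2 * (mlσ ρ * Real.Gamma (2 * ρ + 1)) * ((τ ^ ρ) ^ 2)⁻¹ ≤ 9 * (ρ * (1 - ρ)) * ((τ ^ ρ) ^ 2)⁻¹ := by
    exact mul_le_mul_of_nonneg_right (by linarith) (by positivity)
  linarith

/-- lower bound for the moment integrals. -/
lemma ml_Mn {ρ : ℝ} (h0 : 0 < ρ) (h1 : ρ < 1) {τ : ℝ} (hτ : 0 < τ) (m : ℕ) (hm : 1 ≤ m) :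
    MeasureTheory.IntegrableOn (fun b => b ^ m * (τ * b * mlV ρ (τ * b))) (Set.Ioo 0 1) ∧
    ρ * (1 - ρ) * mlg ρ / τ ^ ρ * (1 / (m + 1 - ρ)) - 9 * (ρ * (1 - ρ)) / (τ ^ ρ) ^ 2 * (1 / (m + 1 - 2 * ρ)) ≤
      ∫ b in Set.Ioo 0 1, b ^ m * (τ * b * mlV ρ (τ * b)) := by
  have hm' : (1:ℝ) ≤ m := by exact_mod_cast hm
  have hpi : MeasureTheory.IntegrableOn (fun b : ℝ => b ^ m) (Set.Ioo 0 1) :=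
    ((continuous_pow m).integrableOn_Icc (a := 0) (b := 1)).mono_set Set.Ioo_subset_Icc_self
  have hI := (mlV_int01 h0 h1 hτ _ hpi).1
  refine ⟨hI, ?_⟩
  have j1 := ml_integral_rpow (m := m - ρ) (by linarith)
  have j2 := ml_integral_rpow (m := m - 2 * ρ) (by linarith)
  have k1 := ml_integrable_rpow (m := m - ρ) (by linarith)
  have k2 := ml_integrable_rpow (m := m - 2 * ρ) (by linarith)
  have h := MeasureTheory.setIntegral_mono_on ((k1.const_mul (ρ * (1 - ρ) * mlg ρ / τ ^ ρ)).sub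
    (k2.const_mul (9 * (ρ * (1 - ρ)) / (τ ^ ρ) ^ 2))) hI measurableSet_Ioo (fun b hb => by
      have := mlV_lower h0 h1 (mul_pos hτ hb.1)
      have hbm : 0 ≤ b ^ m := pow_nonneg hb.1.le m
      refine le_trans (le_of_eq ?_) (mul_le_mul_of_nonneg_left this hbm)
      simp only [Pi.sub_apply]
      rw [Real.mul_rpow hτ.le hb.1.le, Real.mul_rpow hτ.le hb.1.le, Real.rpow_neg hτ.le, Real.rpow_neg hτ.le,
        ml_rpow_two hτ, sub_eq_add_neg (m:ℝ), sub_eq_add_neg (m:ℝ), Real.rpow_add hb.1, Real.rpow_add hb.1, Real.rpow_natCast]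
      ring)
  simp only [Pi.sub_apply] at h
  rw [MeasureTheory.integral_sub (k1.const_mul _) (k2.const_mul _), MeasureTheory.integral_const_mul,
    MeasureTheory.integral_const_mul, j1, j2] at h
  refine le_trans (le_of_eq ?_) h
  congr 3 <;> ring

lemma ml_integrand {ρ : ℝ} (h0 : 0 < ρ) (h1 : ρ < 1) {τ : ℝ} (hτ : 0 < τ) {b : ℝ} (hb : b ∈ Set.Ioo (0:ℝ) 1) :
    (mlP ρ (ρ * Real.log τ) - mlP ρ (ρ * Real.log τ + ρ * Real.log b)) / (1 - b) ≤ mlP ρ (ρ * Real.log τ) ∧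
    (mlP ρ (ρ * Real.log τ) - mlP ρ (ρ * Real.log τ + ρ * Real.log b)) / (1 - b) ≤
      mlP ρ (ρ * Real.log τ) * (1 + b + b ^ 2 + b ^ 3) -
      1 / ρ * (τ * b * mlV ρ (τ * b) + b ^ 1 * (τ * b * mlV ρ (τ * b)) + b ^ 2 * (τ * b * mlV ρ (τ * b))) := by
  have hb0 := hb.1
  have hb1 : 0 < 1 - b := by linarith [hb.2]
  rw [← mul_add, ← Real.log_mul hτ.ne' hb0.ne', mlP_eq h0 h1 hτ, mlP_eq h0 h1 (mul_pos hτ hb0)]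
  have hD := mlV_anti h0 h1 (mul_pos hτ hb0) (show τ * b ≤ τ by nlinarith)
  rw [div_le_iff₀ hb1, div_le_iff₀ hb1]
  have hc : 0 ≤ τ * b / ρ * (mlV ρ (τ * b) - mlV ρ τ) := by
    apply mul_nonneg (by positivity); linarith
  constructor
  · have : τ / ρ * mlV ρ τ - τ * b / ρ * mlV ρ (τ * b) =
      τ / ρ * mlV ρ τ * (1 - b) - τ * b / ρ * (mlV ρ (τ * b) - mlV ρ τ) := by ring
    linarith
  · have e : (τ / ρ * mlV ρ τ * (1 + b + b ^ 2 + b ^ 3) - 1 / ρ * (τ * b * mlV ρ (τ * b) + b ^ 1 * (τ * b * mlV ρ (τ * b)) + b ^ 2 * (τ * b * mlV ρ (τ * b)))) * (1 - b)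
      - (τ / ρ * mlV ρ τ - τ * b / ρ * mlV ρ (τ * b)) = τ * b / ρ * (mlV ρ (τ * b) - mlV ρ τ) * b ^ 3 := by
      field_simp; ring
    have : 0 ≤ τ * b / ρ * (mlV ρ (τ * b) - mlV ρ τ) * b ^ 3 := mul_nonneg hc (by positivity)
    linarith

lemma ml_final {ρ : ℝ} (h0 : 0 < ρ) (h1 : ρ < 1) {τ : ℝ} (hτ : 0 < τ) {β : ℝ} (hβ : Real.log 2 ≤ β)
    (hI : MeasureTheory.IntegrableOn (fun b => (mlP ρ (ρ * Real.log τ) - mlP ρ (ρ * Real.log τ + ρ * Real.log b)) / (1 - b)) (Set.Ioo 0 1)) :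
    -((β + Real.eulerMascheroniConstant) * mlP ρ (ρ * Real.log τ)) +
      ∫ b in Set.Ioo 0 1, (mlP ρ (ρ * Real.log τ) - mlP ρ (ρ * Real.log τ + ρ * Real.log b)) / (1 - b) <
    -1 / τ ^ ρ + (43 / ρ + 4.6 * β) / (τ ^ ρ) ^ 2 := by
  have hx : 0 < τ ^ ρ := Real.rpow_pos_of_pos hτ _
  have hβ0 : 0 < β := lt_of_lt_of_le (Real.log_pos one_lt_two) hβ
  have hγ := ml_euler_log_two
  have hp : mlP ρ (ρ * Real.log τ) = τ / ρ * mlV ρ τ := mlP_eq h0 h1 hτ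
  have hp0 : 0 ≤ mlP ρ (ρ * Real.log τ) := by
    rw [hp]; exact mul_nonneg (by positivity) (mlV_nonneg h0 h1 _)
  rcases le_or_gt (τ ^ ρ) (43 / ρ) with hc | hc
  · have h := MeasureTheory.setIntegral_mono_on hI (g := fun _ => mlP ρ (ρ * Real.log τ)) (by simp) measurableSet_Ioo
      (fun b hb => (ml_integrand h0 h1 hτ hb).1)
    have h2 : ∫ b in Set.Ioo (0:ℝ) 1, mlP ρ (ρ * Real.log τ) = mlP ρ (ρ * Real.log τ) := by simp
    rw [h2] at h
    have hR : 0 < -1 / τ ^ ρ + (43 / ρ + 4.6 * β) / (τ ^ ρ) ^ 2 := by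
      have : -1 / τ ^ ρ + (43 / ρ + 4.6 * β) / (τ ^ ρ) ^ 2 = ((43 / ρ - τ ^ ρ) + 4.6 * β) / (τ ^ ρ) ^ 2 := by
        field_simp; ring
      rw [this]
      have : 0 < (43 / ρ - τ ^ ρ) + 4.6 * β := by linarith
      positivity
    nlinarith
  · have hx43 : 43 ≤ τ ^ ρ := by
      have : 43 ≤ 43 / ρ := by rw [le_div_iff₀ h0]; linarith
      linarith
    have v1 := (mlV_int01 h0 h1 hτ _ ml_one_int).1
    simp only [one_mul] at v1
    obtain ⟨v2, m2⟩ := ml_Mn h0 h1 hτ 1 le_rfl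
    obtain ⟨v3, m3⟩ := ml_Mn h0 h1 hτ 2 (by norm_num)
    have m1 := ml_M1 h0 h1 hτ
    have vs : MeasureTheory.IntegrableOn (fun b => τ * b * mlV ρ (τ * b) + b ^ 1 * (τ * b * mlV ρ (τ * b)) + b ^ 2 * (τ * b * mlV ρ (τ * b))) (Set.Ioo 0 1) :=
      (v1.add v2).add v3
    have v12 : MeasureTheory.IntegrableOn (fun b => τ * b * mlV ρ (τ * b) + b ^ 1 * (τ * b * mlV ρ (τ * b))) (Set.Ioo 0 1) :=
      v1.add v2
    have pc : Continuous (fun b : ℝ => mlP ρ (ρ * Real.log τ) * (1 + b + b ^ 2 + b ^ 3)) := by fun_prop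
    have pI : MeasureTheory.IntegrableOn (fun b : ℝ => mlP ρ (ρ * Real.log τ) * (1 + b + b ^ 2 + b ^ 3)) (Set.Ioo 0 1) :=
      (pc.integrableOn_Icc (a := 0) (b := 1)).mono_set Set.Ioo_subset_Icc_self
    have h := MeasureTheory.setIntegral_mono_on hI (pI.sub (vs.const_mul (1 / ρ))) measurableSet_Ioo
      (fun b hb => (ml_integrand h0 h1 hτ hb).2)
    simp only [Pi.sub_apply] at h
    rw [MeasureTheory.integral_sub pI (vs.const_mul (1 / ρ)), MeasureTheory.integral_const_mul,
      MeasureTheory.integral_const_mul, MeasureTheory.integral_add v12 v3, MeasureTheory.integral_add v1 v2] at h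
    have hpoly : ∫ b in Set.Ioo (0:ℝ) 1, (1 + b + b ^ 2 + b ^ 3) = 25 / 12 := by
      rw [← MeasureTheory.integral_Ioc_eq_integral_Ioo, ← intervalIntegral.integral_of_le zero_le_one,
        intervalIntegral.integral_add, intervalIntegral.integral_add, intervalIntegral.integral_add]
      · simp; norm_num
      all_goals exact Continuous.intervalIntegrable (by fun_prop) _ _
    rw [hpoly] at h
    have bU := mlU_int_ge h0 h1 hτ
    have bu := mlU_upper h0 h1 hτ hx43
    have bv := mlV_upper h0 h1 hτ hx43
    have hg := mlg_ge h0 h1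
    set M1 := ∫ b in Set.Ioo 0 1, τ * b * mlV ρ (τ * b)
    set M2 := ∫ b in Set.Ioo 0 1, b ^ 1 * (τ * b * mlV ρ (τ * b))
    set M3 := ∫ b in Set.Ioo 0 1, b ^ 2 * (τ * b * mlV ρ (τ * b))
    set I := ∫ b in Set.Ioo 0 1, (mlP ρ (ρ * Real.log τ) - mlP ρ (ρ * Real.log τ + ρ * Real.log b)) / (1 - b)
    set p := mlP ρ (ρ * Real.log τ)
    have hpV : ρ * p = τ * mlV ρ τ := by rw [hp]; field_simp
    rw [← hpV] at bv
    set H := mlg ρ / τ ^ ρ with hH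
    set q := 1 / (τ ^ ρ) ^ 2 with hq
    have hq0 : 0 < q := by positivity
    have hE : 0 < 1 - ρ := by linarith
    have hHx : 1 / τ ^ ρ ≤ H := by rw [hH]; gcongr
    have hH0 : 0 < H := lt_of_lt_of_le (by positivity) hHx
    have m2' : ρ * (1 - ρ) * H * (1 / 2) - 9 / 2 * ρ * q ≤ M2 := by
      refine le_trans ?_ m2
      have e1 : ρ * (1 - ρ) * mlg ρ / τ ^ ρ * (1 / (((1:ℕ):ℝ) + 1 - ρ)) = ρ * (1 - ρ) * H * (1 / (2 - ρ)) := by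
        rw [hH]; push_cast; rw [show (1:ℝ) + 1 - ρ = 2 - ρ by ring]; ring
      have e2 : 9 * (ρ * (1 - ρ)) / (τ ^ ρ) ^ 2 * (1 / (((1:ℕ):ℝ) + 1 - 2 * ρ)) = 9 / 2 * ρ * q := by
        rw [hq]; push_cast; rw [show (1:ℝ) + 1 - 2 * ρ = 2 * (1 - ρ) by ring]; field_simp
      rw [e1, e2]
      gcongr
      · linarith
      · linarith
    have m3' : ρ * (1 - ρ) * H * (1 / 3) - 9 * (ρ * (1 - ρ)) * q ≤ M3 := by
      refine le_trans ?_ m3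
      have e1 : ρ * (1 - ρ) * mlg ρ / τ ^ ρ * (1 / (((2:ℕ):ℝ) + 1 - ρ)) = ρ * (1 - ρ) * H * (1 / (3 - ρ)) := by
        rw [hH]; push_cast; rw [show (2:ℝ) + 1 - ρ = 3 - ρ by ring]; ring
      have e2 : 9 * (ρ * (1 - ρ)) / (τ ^ ρ) ^ 2 * (1 / (((2:ℕ):ℝ) + 1 - 2 * ρ)) = 9 * (ρ * (1 - ρ)) * q * (1 / (3 - 2 * ρ)) := by
        rw [hq]; push_cast; rw [show (2:ℝ) + 1 - 2 * ρ = 3 - 2 * ρ by ring]; ring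
      rw [e1, e2]
      have a1 : ρ * (1 - ρ) * H * (1 / 3) ≤ ρ * (1 - ρ) * H * (1 / (3 - ρ)) := by
        gcongr
        · linarith
        · linarith
      have a2 : 9 * (ρ * (1 - ρ)) * q * (1 / (3 - 2 * ρ)) ≤ 9 * (ρ * (1 - ρ)) * q * 1 := by
        gcongr
        rw [div_le_one (by linarith)]; linarith
      linarith
    have bU' : H - 6 * q ≤ ∫ b in Set.Ioo 0 1, mlU ρ (τ * b) := by
      refine le_trans (le_of_eq ?_) bU; rw [hH, hq]; ring
    have bu' : mlU ρ τ ≤ (1 - ρ) * H + (27 / 2 * (1 - ρ) + 4) * q := by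
      refine bu.trans (le_of_eq ?_); rw [hH, hq]; ring
    have bv' : ρ * p ≤ ρ * (1 - ρ) * H + (27 * (ρ * (1 - ρ)) + 8) * q := by
      refine bv.trans (le_of_eq ?_); rw [hH, hq]; ring
    have hL : -((β + Real.eulerMascheroniConstant) * p) + I ≤ 5 / 6 * p - 1 / ρ * (M1 + M2 + M3) := by
      nlinarith
    have hquad : ρ * (1 - ρ) ≤ 1 / 4 := by nlinarith [sq_nonneg (ρ - 1/2)]
    have hM : 5 / 6 * (ρ * p) - (M1 + M2 + M3) ≤ -(ρ * H) + 43 * q := by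
      have : (63 / 2 * (ρ * (1 - ρ)) + 50 / 3 + 27 / 2 * (1 - ρ) + 9 / 2 * ρ) * q ≤ 43 * q := by
        gcongr; linarith
      rw [m1]
      linarith
    have hL2 : 5 / 6 * p - 1 / ρ * (M1 + M2 + M3) ≤ -H + 43 / ρ * q := by
      have e1 : 5 / 6 * p - 1 / ρ * (M1 + M2 + M3) = (5 / 6 * (ρ * p) - (M1 + M2 + M3)) / ρ := by field_simp
      have e2 : -H + 43 / ρ * q = (-(ρ * H) + 43 * q) / ρ := by field_simp
      rw [e1, e2]; gcongr
    have hfin : -1 / τ ^ ρ + (43 / ρ + 4.6 * β) / (τ ^ ρ) ^ 2 = -(1 / τ ^ ρ) + 43 / ρ * q + 4.6 * β * q := by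
      rw [hq]; ring
    rw [hfin]
    have : 0 < 4.6 * β * q := by positivity
    linarith

/-- With `B₁ = 43`, `B₂ = 4.6`: for `0 < ρ₀ < 1`, `λ > 0`, `t₀ ≥ 2` and every
`ρ ∈ [ρ₀, 1)`, the function `ρ ↦ E_ρ(−λ t₀^ρ)` is differentiable at `ρ` with
`d/dρ E_ρ(−λ t₀^ρ) < −1/(λ t₀^ρ) + (B₁/ρ + B₂ ln t₀)/(λ t₀^ρ)²`. -/
theorem stmt7 (ρ₀ lam t₀ : ℝ) (hρ₀ : 0 < ρ₀) (hρ₀' : ρ₀ < 1) (hlam : 0 < lam)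
    (ht₀ : 2 ≤ t₀) :
    ∀ ρ ∈ Set.Ico ρ₀ 1,
      DifferentiableAt ℝ (fun ρ : ℝ => mittagLeffler ρ (-(lam * t₀ ^ ρ))) ρ ∧
      deriv (fun ρ : ℝ => mittagLeffler ρ (-(lam * t₀ ^ ρ))) ρ <
        -1 / (lam * t₀ ^ ρ) + (43 / ρ + 4.6 * Real.log t₀) / (lam * t₀ ^ ρ) ^ 2 := by
  intro ρ hρ
  have h0 : 0 < ρ := lt_of_lt_of_le hρ₀ hρ.1
  have h1 : ρ < 1 := hρ.2
  have ht : 0 < t₀ := by linarith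
  have hexp : ∀ s : ℝ, lam * t₀ ^ s = Real.exp (Real.log lam + Real.log t₀ * s) := by
    intro s
    rw [Real.exp_add, Real.exp_log hlam, Real.rpow_def_of_pos ht]
  have hfun : (fun ρ : ℝ => mittagLeffler ρ (-(lam * t₀ ^ ρ))) =
      fun s => mlS s (Real.log lam + Real.log t₀ * s) := by
    funext s
    unfold mittagLeffler mlS mlT
    refine tsum_congr fun k => ?_
    rw [hexp, neg_pow, ← Real.exp_nat_mul]
    ring
  obtain ⟨hI, hd⟩ := mlS_hasDeriv_order h0 (Real.log lam) (Real.log t₀)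
  rw [hfun]
  refine ⟨hd.differentiableAt, ?_⟩
  rw [hd.deriv]
  set a := Real.log lam + Real.log t₀ * ρ with ha
  have hτ : 0 < Real.exp (a / ρ) := Real.exp_pos _
  have hlog : a = ρ * Real.log (Real.exp (a / ρ)) := by rw [Real.log_exp]; field_simp
  have hx : lam * t₀ ^ ρ = Real.exp (a / ρ) ^ ρ := by
    rw [hexp, ← Real.exp_mul, ← ha]; congr 1; field_simp
  have hl := Real.log_le_log two_pos ht₀
  have key := ml_final h0 h1 hτ hl (by rw [← hlog]; exact hI)
  rw [← hlog, ← hx] at key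
  exact key
end

section
/- Let ρ ∈ (0, 1), t₀ > 1, λ > 1, and σ ∈ (0, 1). Then the function σ ↦ E_ρ(−λ^σ t₀^ρ) is differentiable at σ and its derivative satisfies d/dσ E_ρ(−λ^σ t₀^ρ) < −(ln λ)/(λ^σ t₀^ρ Γ(1−ρ)) + (5 ln λ)/(λ^{2σ} t₀^ρ). -/
open Set Real

namespace MLaux
open MeasureTheory Filter Topology

/-- Hankel-type contour functional in logarithmic coordinates. -/
noncomputable def hk (F : ℂ → ℂ) (c : ℝ) : ℂ :=
  Complex.I * (∫ y in (-π)..π, F (c + y * Complex.I)) +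
    ∫ x in Ioi c, (F (x + π * Complex.I) - F (x - π * Complex.I))

/-- The closed strip. -/
def strip : Set ℂ := {w | |w.im| ≤ π}

lemma mem_strip_line (x y : ℝ) (hy : |y| ≤ π) : ((x : ℂ) + y * Complex.I) ∈ strip := by
  simpa [strip] using hy

lemma mem_strip_top (x : ℝ) : ((x : ℂ) + π * Complex.I) ∈ strip :=
  mem_strip_line x π (by rw [abs_of_pos pi_pos])

lemma mem_strip_bot (x : ℝ) : ((x : ℂ) - π * Complex.I) ∈ strip := by
  simp [strip, abs_of_pos pi_pos]

lemma cont_D {F : ℂ → ℂ} (hF : DifferentiableOn ℂ F strip) :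
    Continuous (fun x : ℝ => F (x + π * Complex.I) - F (x - π * Complex.I)) := by
  refine Continuous.sub ?_ ?_
  · exact hF.continuousOn.comp_continuous (by fun_prop) mem_strip_top
  · exact hF.continuousOn.comp_continuous (by fun_prop) mem_strip_bot

lemma hk_shift {F : ℂ → ℂ} (hF : DifferentiableOn ℂ F strip) {c c' : ℝ} (hcc : c' ≤ c)
    (hD : IntegrableOn (fun x : ℝ => F (x + π * Complex.I) - F (x - π * Complex.I)) (Ioi c)) :
    hk F c = hk F c' := by
  have hcont := cont_D hF
  have h1 : Continuous (fun x : ℝ => F (x + π * Complex.I)) :=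
    hF.continuousOn.comp_continuous (by fun_prop) mem_strip_top
  have h2 : Continuous (fun x : ℝ => F (x - π * Complex.I)) :=
    hF.continuousOn.comp_continuous (by fun_prop) mem_strip_bot
  have key := Complex.integral_boundary_rect_eq_zero_of_differentiableOn F
    ((c' : ℂ) - π * Complex.I) ((c : ℂ) + π * Complex.I) (hF.mono (by
      intro w hw
      have := (Complex.mem_reProdIm.1 hw).2
      simp only [Complex.sub_im, Complex.ofReal_im, Complex.mul_im, Complex.ofReal_re, Complex.I_im,
        Complex.I_re, Complex.add_im] at this
      rw [uIcc_of_le (by linarith [pi_pos])] at this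
      have h3 := this.1
      have h4 := this.2
      simp only [strip, mem_ofPred_eq, abs_le]
      constructor <;> linarith))
  simp only [Complex.sub_re, Complex.add_re, Complex.sub_im, Complex.ofReal_im, Complex.mul_im, Complex.ofReal_re, Complex.I_im,
        Complex.I_re, Complex.add_im, Complex.mul_re, mul_zero, mul_one, sub_zero, add_zero, zero_sub, zero_add, smul_eq_mul, Complex.ofReal_neg, neg_mul, ← sub_eq_add_neg] at key
  have hsplit : ∫ x in Ioi c', (F (x + π * Complex.I) - F (x - π * Complex.I)) =
      (∫ x in c'..c, (F (x + π * Complex.I) - F (x - π * Complex.I))) +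
      ∫ x in Ioi c, (F (x + π * Complex.I) - F (x - π * Complex.I)) := by
    rw [intervalIntegral.integral_of_le hcc, ← Ioc_union_Ioi_eq_Ioi hcc]
    refine setIntegral_union ?_ measurableSet_Ioi ?_ hD
    · exact Ioc_disjoint_Ioi le_rfl
    · exact (hcont.integrableOn_Icc).mono_set Ioc_subset_Icc_self
  have hsub := intervalIntegral.integral_sub (μ := volume) (h1.intervalIntegrable c' c) (h2.intervalIntegrable c' c)
  unfold hk
  rw [hsplit, hsub]
  linear_combination key

lemma hk_limit {F : ℂ → ℂ} (hF : DifferentiableOn ℂ F strip) (c : ℝ)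
    (hD : Integrable (fun x : ℝ => F (x + π * Complex.I) - F (x - π * Complex.I))) {V : ℂ}
    (hV : Tendsto (fun c : ℝ => ∫ y in (-π)..π, F (c + y * Complex.I)) atBot (𝓝 V)) :
    hk F c = Complex.I * V + ∫ x : ℝ, (F (x + π * Complex.I) - F (x - π * Complex.I)) := by
  have ht : Tendsto (hk F) atBot (𝓝 (Complex.I * V +
      ∫ x : ℝ, (F (x + π * Complex.I) - F (x - π * Complex.I)))) := by
    refine (hV.const_mul _).add ?_
    exact (aecover_Ioi tendsto_id).integral_tendsto_of_countably_generated hD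
  have he : (fun _ : ℝ => hk F c) =ᶠ[atBot] hk F := by
    filter_upwards [eventually_le_atBot c] with c' hc'
    exact hk_shift hF hc' hD.integrableOn
  exact tendsto_nhds_unique (tendsto_const_nhds.congr' he) ht

lemma hk_hasSum {F : ℕ → ℂ → ℂ} {G : ℂ → ℂ} {c M r : ℝ} {B : ℝ → ℝ}
    (hF : ∀ k, Continuous (F k)) (hr0 : 0 ≤ r) (hr : r < 1) (hB : IntegrableOn B (Ioi c))
    (h1 : ∀ k, ∀ y : ℝ, ‖F k (c + y * Complex.I)‖ ≤ M * r ^ k)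
    (h2 : ∀ k, ∀ x : ℝ, c < x → ‖F k (x + π * Complex.I)‖ ≤ B x * r ^ k)
    (h3 : ∀ k, ∀ x : ℝ, c < x → ‖F k (x - π * Complex.I)‖ ≤ B x * r ^ k)
    (hG : ∀ w : ℂ, c ≤ w.re → HasSum (fun k => F k w) (G w)) :
    HasSum (fun k => hk (F k) c) (hk G c) := by
  unfold hk
  have hs := summable_geometric_of_lt_one hr0 hr
  refine HasSum.add (HasSum.mul_left _ ?_) ?_
  · refine intervalIntegral.hasSum_integral_of_dominated_convergence (fun k _ => M * r ^ k) ?_ ?_ ?_ ?_ ?_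
    · intro n
      exact ((hF n).comp (by fun_prop)).aestronglyMeasurable
    · intro n
      exact ae_of_all _ fun t _ => h1 n t
    · exact ae_of_all _ fun t _ => hs.mul_left _
    · exact intervalIntegrable_const
    · exact ae_of_all _ fun t _ => hG _ (by simp)
  · refine hasSum_integral_of_dominated_convergence (fun k x => (2 * B x) * r ^ k) ?_ ?_ ?_ ?_ ?_
    · intro n
      exact (((hF n).comp (by fun_prop)).sub ((hF n).comp (by fun_prop))).aestronglyMeasurable
    · intro n
      refine (ae_restrict_iff' measurableSet_Ioi).2 (ae_of_all _ fun x hx => ?_)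
      refine (norm_sub_le _ _).trans ?_
      have := h2 n x hx
      have := h3 n x hx
      linarith
    · exact ae_of_all _ fun t => hs.mul_left _
    · simp_rw [tsum_mul_left]
      exact (hB.const_mul 2).mul_const _
    · refine (ae_restrict_iff' measurableSet_Ioi).2 (ae_of_all _ fun x hx => ?_)
      have hx' : c ≤ x := le_of_lt hx
      exact (hG _ (by simpa using hx')).sub (hG _ (by simpa using hx'))

/-! ### Real integrals -/

lemma integrableOn_ee (b c : ℝ) : IntegrableOn (fun x : ℝ => rexp (-rexp x + b * x)) (Ioi c) := by
  refine integrable_of_isBigO_exp_neg (b := 1) one_pos (by fun_prop) ?_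
  have h := (tendsto_rpow_mul_exp_neg_mul_atTop_nhds_zero (b + 1) 1 one_pos).comp tendsto_exp_atTop
  have h' := h.isBigO_one ℝ
  have h2 := h'.mul (Asymptotics.isBigO_refl (fun x : ℝ => rexp (-1 * x)) atTop)
  refine (h2.congr' ?_ ?_)
  · filter_upwards with x
    simp only [Function.comp]
    rw [← Real.exp_mul, ← Real.exp_add, ← Real.exp_add]
    congr 1; ring
  · filter_upwards with x
    simp

lemma exp_subst (g : ℝ → ℝ) : ∫ x : ℝ, rexp x * g (rexp x) = ∫ s in Ioi (0:ℝ), g s := by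
  have := integral_image_eq_integral_abs_deriv_smul (s := univ) (f := rexp) (f' := rexp) MeasurableSet.univ
    (fun x _ => (Real.hasDerivAt_exp x).hasDerivWithinAt) Real.exp_injective.injOn g
  rw [image_univ, Real.range_exp] at this
  rw [this, setIntegral_univ]
  simp [abs_of_pos (Real.exp_pos _)]

lemma exp_subst_int (g : ℝ → ℝ) : Integrable (fun x : ℝ => rexp x * g (rexp x)) ↔ IntegrableOn g (Ioi (0:ℝ)) := by
  have := integrableOn_image_iff_integrableOn_abs_deriv_smul (s := univ) (f := rexp) (f' := rexp) MeasurableSet.univ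
    (fun x _ => (Real.hasDerivAt_exp x).hasDerivWithinAt) Real.exp_injective.injOn g
  rw [image_univ, Real.range_exp] at this
  rw [this, integrableOn_univ]
  simp [abs_of_pos (Real.exp_pos _)]

lemma ee_eq (b x : ℝ) : rexp (-rexp x + b * x) = rexp x * (rexp (-rexp x) * rexp x ^ (b - 1)) := by
  rw [← Real.exp_mul, ← Real.exp_add, ← Real.exp_add]; congr 1; ring

lemma integrable_ee {b : ℝ} (hb : 0 < b) : Integrable (fun x : ℝ => rexp (-rexp x + b * x)) := by
  simp_rw [ee_eq]
  exact (exp_subst_int (fun s => rexp (-s) * s ^ (b - 1))).2 (Real.GammaIntegral_convergent hb)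

lemma integral_ee {b : ℝ} (hb : 0 < b) : ∫ x : ℝ, rexp (-rexp x + b * x) = Real.Gamma b := by
  simp_rw [ee_eq]
  rw [exp_subst (fun s => rexp (-s) * s ^ (b - 1)), Real.Gamma_eq_integral hb]

/-! ### Hankel's formula -/

lemma exp_top (x : ℝ) : Complex.exp (x + π * Complex.I) = -(rexp x : ℂ) := by
  rw [Complex.exp_add, Complex.exp_pi_mul_I]; push_cast; ring

lemma exp_bot (x : ℝ) : Complex.exp (x - π * Complex.I) = -(rexp x : ℂ) := by
  rw [Complex.exp_sub, Complex.exp_pi_mul_I]; push_cast; ring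

/-- The Hankel integrand. -/
noncomputable def Fa (a : ℝ) (w : ℂ) : ℂ := Complex.exp (Complex.exp w + (1 - a) * w)

lemma Fa_diff (a : ℝ) : Differentiable ℂ (Fa a) := by unfold Fa; fun_prop

lemma Fa_norm (a : ℝ) (w : ℂ) : ‖Fa a w‖ = rexp ((Complex.exp w).re + (1 - a) * w.re) := by
  rw [Fa, Complex.norm_exp]
  congr 1
  have : ((1 : ℂ) - a) = ((1 - a : ℝ) : ℂ) := by push_cast; rfl
  rw [Complex.add_re, this, Complex.re_ofReal_mul]

lemma Fa_top (a x : ℝ) : Fa a (x + π * Complex.I) =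
    (rexp (-rexp x + (1 - a) * x) : ℂ) * Complex.exp (((1 - a) * π : ℝ) * Complex.I) := by
  rw [Fa, exp_top]
  push_cast
  rw [← Complex.exp_add]; congr 1; ring

lemma Fa_bot (a x : ℝ) : Fa a (x - π * Complex.I) =
    (rexp (-rexp x + (1 - a) * x) : ℂ) * Complex.exp (-((1 - a) * π : ℝ) * Complex.I) := by
  rw [Fa, exp_bot]
  push_cast
  rw [← Complex.exp_add]; congr 1; ring

lemma Fa_norm_top (a x : ℝ) : ‖Fa a (x + π * Complex.I)‖ = rexp (-rexp x + (1 - a) * x) := by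
  rw [Fa_norm, exp_top, Complex.neg_re, Complex.ofReal_re]; simp

lemma Fa_norm_bot (a x : ℝ) : ‖Fa a (x - π * Complex.I)‖ = rexp (-rexp x + (1 - a) * x) := by
  rw [Fa_norm, exp_bot, Complex.neg_re, Complex.ofReal_re]; simp

lemma Fa_D (a x : ℝ) : Fa a (x + π * Complex.I) - Fa a (x - π * Complex.I) =
    (rexp (-rexp x + (1 - a) * x) : ℂ) * (2 * Real.sin (π * a) * Complex.I) := by
  rw [Fa_top, Fa_bot, ← mul_sub]
  congr 1
  have h := Complex.two_sin (((1 - a) * π : ℝ) : ℂ)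
  have h2 : Complex.sin (((1 - a) * π : ℝ) : ℂ) = ((Real.sin (π * a) : ℝ) : ℂ) := by
    rw [← Complex.ofReal_sin]
    congr 1
    rw [← Real.sin_pi_sub]; congr 1; ring
  rw [h2] at h
  rw [h]
  linear_combination (Complex.exp (((1 - a) * π : ℝ) * Complex.I) - Complex.exp (-((1 - a) * π : ℝ) * Complex.I)) * Complex.I_mul_I

lemma Fa_norm_line_le (a c y : ℝ) : ‖Fa a (c + y * Complex.I)‖ ≤ rexp (rexp c + (1 - a) * c) := by
  rw [Fa_norm]
  have : (Complex.exp (c + y * Complex.I)).re ≤ rexp c := by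
    refine (Complex.re_le_norm _).trans ?_
    rw [Complex.norm_exp]; simp
  have h2 : ((c : ℂ) + y * Complex.I).re = c := by simp
  rw [h2]
  gcongr

lemma vert_lim {F : ℂ → ℂ} (hF : DifferentiableOn ℂ F strip) {L : ℂ} {b : ℝ → ℝ}
    (hb : Tendsto b atBot (𝓝 0))
    (h : ∀ᶠ c : ℝ in atBot, ∀ y : ℝ, ‖F (c + y * Complex.I) - L‖ ≤ b c) :
    Tendsto (fun c : ℝ => ∫ y in (-π)..π, F (c + y * Complex.I)) atBot (𝓝 (2 * π * L)) := by
  rw [tendsto_iff_norm_sub_tendsto_zero]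
  have hb' : Tendsto (fun c => b c * |π - -π|) atBot (𝓝 0) := by
    simpa using hb.mul_const |π - -π|
  refine squeeze_zero' (Eventually.of_forall fun _ => norm_nonneg _) ?_ hb'
  filter_upwards [h] with c hc
  have hi : IntervalIntegrable (fun y : ℝ => F (c + y * Complex.I)) volume (-π) π := by
    refine ContinuousOn.intervalIntegrable ?_
    refine hF.continuousOn.comp (by fun_prop) ?_
    intro y hy
    rw [uIcc_of_le (by linarith [pi_pos])] at hy
    exact mem_strip_line c y (abs_le.2 hy)
  have : (∫ y in (-π)..π, F (c + y * Complex.I)) - 2 * π * L =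
      ∫ y in (-π)..π, (F (c + y * Complex.I) - L) := by
    rw [intervalIntegral.integral_sub hi intervalIntegrable_const, intervalIntegral.integral_const]
    simp only [Complex.real_smul]
    push_cast
    ring
  rw [this]
  exact intervalIntegral.norm_integral_le_of_norm_le_const fun y _ => hc y

lemma hankel_base {a : ℝ} (ha : 0 < a) (ha1 : a < 1) (c : ℝ) :
    hk (Fa a) c = 2 * π * Complex.I * ((Real.Gamma a)⁻¹ : ℝ) := by
  have hDint : Integrable (fun x : ℝ => Fa a (x + π * Complex.I) - Fa a (x - π * Complex.I)) := by
    simp_rw [Fa_D]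
    exact ((integrable_ee (b := 1 - a) (by linarith)).ofReal).mul_const _
  rw [hk_limit (Fa_diff a).differentiableOn c hDint
    (vert_lim (Fa_diff a).differentiableOn (L := 0) (b := fun c => rexp (rexp c + (1 - a) * c)) ?_ ?_)]
  · simp_rw [Fa_D]
    rw [integral_mul_const, integral_complex_ofReal, integral_ee (by linarith)]
    have h := Real.Gamma_mul_Gamma_one_sub a
    have h1 : Real.sin (π * a) ≠ 0 := by
      refine (Real.sin_pos_of_pos_of_lt_pi (by positivity) ?_).ne'
      nlinarith [pi_pos]
    have h2 : Real.Gamma a ≠ 0 := (Real.Gamma_pos_of_pos ha).ne'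
    have h3 : Real.Gamma (1 - a) * Real.sin (π * a) = π * (Real.Gamma a)⁻¹ := by
      rw [eq_div_iff h1] at h
      rw [← div_eq_mul_inv, eq_div_iff h2]
      linarith
    have h4 := congrArg (fun x : ℝ => (x : ℂ)) h3
    push_cast at h4 ⊢
    linear_combination 2 * Complex.I * h4
  · refine Real.tendsto_exp_atBot.comp ?_
    have h1 : Tendsto (fun c : ℝ => (1 - a) * c) atBot atBot :=
      tendsto_id.const_mul_atBot (by linarith)
    exact Real.tendsto_exp_atBot.add_atBot h1
  · exact Eventually.of_forall fun c y => by simpa using Fa_norm_line_le a c y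

lemma hankel_one (c : ℝ) : hk (Fa 1) c = 2 * π * Complex.I * ((Real.Gamma 1)⁻¹ : ℝ) := by
  have h0 : ∀ x : ℝ, Fa 1 (x + π * Complex.I) - Fa 1 (x - π * Complex.I) = 0 := by
    intro x; rw [Fa_D]; simp
  rw [hk_limit (Fa_diff 1).differentiableOn c (by simp_rw [h0]; exact integrable_zero _ _ _)
    (vert_lim (Fa_diff 1).differentiableOn (L := 1) (b := fun c => 2 * rexp c) ?_ ?_)]
  · simp_rw [h0]
    simp; ring
  · simpa using Real.tendsto_exp_atBot.const_mul 2
  · filter_upwards [eventually_le_atBot 0] with c hc y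
    have hn : ‖Complex.exp (c + y * Complex.I)‖ = rexp c := by
      rw [Complex.norm_exp]; simp
    have := Complex.norm_exp_sub_one_le (x := Complex.exp (c + y * Complex.I)) (by
      rw [hn]; exact Real.exp_le_one_iff.2 hc)
    rw [hn] at this
    simpa [Fa] using this

lemma Fa_D_int (a c : ℝ) :
    IntegrableOn (fun x : ℝ => Fa a (x + π * Complex.I) - Fa a (x - π * Complex.I)) (Ioi c) := by
  simp_rw [Fa_D]
  exact ((integrableOn_ee (1 - a) c).ofReal).mul_const _

lemma ee_tendsto (b : ℝ) : Tendsto (fun x : ℝ => rexp (-rexp x + b * x)) atTop (𝓝 0) := by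
  have h := (tendsto_rpow_mul_exp_neg_mul_atTop_nhds_zero b 1 one_pos).comp tendsto_exp_atTop
  refine h.congr fun x => ?_
  simp only [Function.comp]
  rw [← Real.exp_mul, ← Real.exp_add]
  congr 1; ring

lemma Fa_deriv (a : ℝ) (w : ℂ) : HasDerivAt (Fa (a + 1)) (Fa a w - a * Fa (a + 1) w) w := by
  have h : HasDerivAt (fun w : ℂ => Complex.exp w + (1 - ((a + 1 : ℝ) : ℂ)) * w)
      (Complex.exp w + (1 - ((a + 1 : ℝ) : ℂ)) * 1) w :=
    (Complex.hasDerivAt_exp w).add ((hasDerivAt_id w).const_mul _)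
  have h2 := h.cexp
  refine h2.congr_deriv ?_
  have : Fa a w = Complex.exp w * Fa (a + 1) w := by
    unfold Fa
    rw [← Complex.exp_add]; congr 1; push_cast; ring
  rw [this]
  unfold Fa
  push_cast; ring

lemma hankel_rec (a c : ℝ) : hk (Fa a) c = a * hk (Fa (a + 1)) c := by
  have hc1 := (Fa_diff a).continuous
  have hc2 := (Fa_diff (a + 1)).continuous
  have hcd : Continuous (fun w => Fa a w - a * Fa (a + 1) w) := by fun_prop
  -- vertical
  have hv : ∫ y in (-π)..π, (Fa a (c + y * Complex.I) - a * Fa (a + 1) (c + y * Complex.I)) * Complex.I =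
      Fa (a + 1) (c + π * Complex.I) - Fa (a + 1) (c - π * Complex.I) := by
    have := intervalIntegral.integral_eq_sub_of_hasDerivAt (a := -π) (b := π)
      (f := fun y : ℝ => Fa (a + 1) (c + y * Complex.I))
      (f' := fun y : ℝ => (Fa a (c + y * Complex.I) - a * Fa (a + 1) (c + y * Complex.I)) * Complex.I) ?_ ?_
    · rw [this]; push_cast; ring_nf
    · intro y _
      have hl : HasDerivAt (fun y : ℝ => (c : ℂ) + y * Complex.I) Complex.I y := by
        simpa using ((Complex.ofRealCLM.hasDerivAt (x := y)).mul_const Complex.I).const_add (c : ℂ)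
      exact (Fa_deriv a _).comp y hl
    · exact Continuous.intervalIntegrable (by fun_prop) _ _
  have hi2 : IntegrableOn (fun x : ℝ => (Fa a (x + π * Complex.I) - Fa a (x - π * Complex.I)) -
      a * (Fa (a + 1) (x + π * Complex.I) - Fa (a + 1) (x - π * Complex.I))) (Ioi c) :=
    (Fa_D_int a c).sub ((Fa_D_int (a + 1) c).const_mul _)
  have hh : ∫ x in Ioi c, ((Fa a (x + π * Complex.I) - Fa a (x - π * Complex.I)) -
      a * (Fa (a + 1) (x + π * Complex.I) - Fa (a + 1) (x - π * Complex.I))) =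
      0 - (Fa (a + 1) (c + π * Complex.I) - Fa (a + 1) (c - π * Complex.I)) := by
    refine integral_Ioi_of_hasDerivAt_of_tendsto'
      (f := fun x : ℝ => Fa (a + 1) (x + π * Complex.I) - Fa (a + 1) (x - π * Complex.I)) ?_ hi2 ?_
    · intro x _
      have hl : HasDerivAt (fun x : ℝ => (x : ℂ) + π * Complex.I) 1 x := by
        simpa using (Complex.ofRealCLM.hasDerivAt (x := x)).add_const (π * Complex.I)
      have hl' : HasDerivAt (fun x : ℝ => (x : ℂ) - π * Complex.I) 1 x := by
        simpa using (Complex.ofRealCLM.hasDerivAt (x := x)).sub_const (π * Complex.I)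
      have h1 := ((Fa_deriv a _).comp x hl).sub ((Fa_deriv a _).comp x hl')
      refine h1.congr_deriv ?_
      ring
    · simp_rw [Fa_D]
      have := (Complex.continuous_ofReal.tendsto 0).comp (ee_tendsto (1 - (a + 1)))
      simpa [Function.comp_def] using this.mul_const (2 * (Real.sin (π * (a + 1)) : ℂ) * Complex.I)
  rw [integral_sub (Fa_D_int a c) ((Fa_D_int (a + 1) c).const_mul _), integral_const_mul] at hh
  rw [intervalIntegral.integral_mul_const, intervalIntegral.integral_sub
    (Continuous.intervalIntegrable (by fun_prop) _ _) (Continuous.intervalIntegrable (by fun_prop) _ _),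
    intervalIntegral.integral_const_mul] at hv
  unfold hk
  linear_combination hh + hv

lemma hankel {a : ℝ} (ha : 0 < a) (c : ℝ) :
    hk (Fa a) c = 2 * π * Complex.I * ((Real.Gamma a)⁻¹ : ℝ) := by
  suffices h : ∀ n : ℕ, ∀ a : ℝ, 0 < a → a ≤ n + 1 →
      hk (Fa a) c = 2 * π * Complex.I * ((Real.Gamma a)⁻¹ : ℝ) by
    obtain ⟨n, hn⟩ := exists_nat_ge a
    exact h n a ha (by linarith)
  intro n
  induction n with
  | zero =>
    intro a ha h1
    rcases lt_or_eq_of_le h1 with h | h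
    · exact hankel_base ha (by simpa using h) c
    · have : a = 1 := by simpa using h
      rw [this]; exact hankel_one c
  | succ n ih =>
    intro a ha h1
    push_cast at h1
    by_cases h : a ≤ 1
    · exact ih a ha (by linarith [(Nat.cast_nonneg n : (0:ℝ) ≤ n)])
    · push Not at h
      have h2 := ih (a - 1) (by linarith) (by linarith)
      have h3 := hankel_rec (a - 1) c
      rw [sub_add_cancel, h2] at h3
      have h4 : Real.Gamma a = (a - 1) * Real.Gamma (a - 1) := by
        have := Real.Gamma_add_one (s := a - 1) (by linarith)
        rwa [sub_add_cancel] at this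
      have h5 : ((a - 1 : ℝ) : ℂ) ≠ 0 := by
        exact_mod_cast (by linarith : a - 1 > 0).ne'
      refine mul_left_cancel₀ h5 ?_
      rw [← h3, h4, mul_inv]
      push_cast at h5 ⊢
      field_simp

/-! ### The integral representation -/

lemma hk_const_mul (F : ℂ → ℂ) (z : ℂ) (c : ℝ) : hk (fun w => z * F w) c = z * hk F c := by
  unfold hk
  simp_rw [← mul_sub]
  rw [intervalIntegral.integral_const_mul, integral_const_mul]
  ring

lemma hasSum_congr_aux {f g : ℕ → ℂ} {a b : ℂ} (h : HasSum f a) (hfg : ∀ k, g k = f k) (hab : b = a) :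
    HasSum g b := by
  rw [hab, show g = f from funext hfg]; exact h

/-- The summed integrand. -/
noncomputable def Gx (ρ X : ℝ) (w : ℂ) : ℂ :=
  Complex.exp (Complex.exp w + w) / (Complex.exp (ρ * w) + X)

lemma den_ne {ρ X : ℝ} (hρ : 0 < ρ) (hρ' : ρ < 1) (hX : 0 < X) {w : ℂ} (hw : w ∈ strip) :
    Complex.exp (ρ * w) + X ≠ 0 := by
  intro h
  have him := congrArg Complex.im h
  have hre := congrArg Complex.re h
  simp only [Complex.add_im, Complex.add_re, Complex.exp_im, Complex.exp_re, Complex.re_ofReal_mul,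
    Complex.im_ofReal_mul, Complex.ofReal_im, Complex.ofReal_re, add_zero, Complex.zero_im,
    Complex.zero_re] at him hre
  have hs : Real.sin (ρ * w.im) = 0 := by
    rcases mul_eq_zero.1 him with h | h
    · exact absurd h (Real.exp_pos _).ne'
    · exact h
  have hw' : |w.im| ≤ π := hw
  have hw2 := abs_le.1 hw'
  have h0 : ρ * w.im = 0 := by
    refine (Real.sin_eq_zero_iff_of_lt_of_lt ?_ ?_).1 hs
    · nlinarith [pi_pos]
    · nlinarith [pi_pos]
  rw [h0, Real.cos_zero] at hre
  linarith [Real.exp_pos (ρ * w.re)]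

lemma Gx_diff {ρ X : ℝ} (hρ : 0 < ρ) (hρ' : ρ < 1) (hX : 0 < X) :
    DifferentiableOn ℂ (Gx ρ X) strip := by
  unfold Gx
  refine DifferentiableOn.div (by fun_prop) (by fun_prop) ?_
  intro w hw
  exact den_ne hρ hρ' hX hw

lemma Gx_hasSum {ρ X : ℝ} (hρ : 0 < ρ) (hX : 0 < X) :
    HasSum (fun k : ℕ => (-X : ℂ) ^ k * hk (Fa (ρ * (k + 1))) (Real.log (2 * X) / ρ))
      (hk (Gx ρ X) (Real.log (2 * X) / ρ)) := by
  set c := Real.log (2 * X) / ρ with hc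
  have hρc : ρ * c = Real.log (2 * X) := by rw [hc]; field_simp
  have hec : rexp (ρ * c) = 2 * X := by rw [hρc, Real.exp_log (by positivity)]
  simp_rw [← hk_const_mul]
  have hb : ∀ k : ℕ, ∀ w : ℂ, c ≤ w.re → ‖(-X : ℂ) ^ k * Fa (ρ * (k + 1)) w‖ ≤
      rexp ((Complex.exp w).re + 1 * w.re) / (2 * X) * (1 / 2) ^ k := by
    intro k w hw
    rw [norm_mul, norm_pow, norm_neg, Complex.norm_real, Real.norm_of_nonneg hX.le, Fa_norm]
    have h1 : rexp ((Complex.exp w).re + (1 - ρ * (k + 1)) * w.re) =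
        rexp ((Complex.exp w).re + 1 * w.re) * rexp (-(ρ * w.re)) ^ (k + 1) := by
      rw [← Real.exp_nat_mul, ← Real.exp_add]; congr 1; push_cast; ring
    have h2 : rexp (-(ρ * w.re)) ≤ (2 * X)⁻¹ := by
      rw [Real.exp_neg]
      gcongr
      rw [← hec]
      gcongr
    rw [h1]
    calc X ^ k * (rexp ((Complex.exp w).re + 1 * w.re) * rexp (-(ρ * w.re)) ^ (k + 1))
        ≤ X ^ k * (rexp ((Complex.exp w).re + 1 * w.re) * (2 * X)⁻¹ ^ (k + 1)) := by gcongr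
      _ = _ := by
        rw [pow_succ, mul_inv, mul_pow, inv_pow X, one_div]
        field_simp
  refine hk_hasSum (r := 1 / 2) (M := rexp (rexp c + 1 * c) / (2 * X))
    (B := fun x => rexp (-rexp x + 1 * x) / (2 * X)) ?_ (by norm_num) (by norm_num) ?_ ?_ ?_ ?_ ?_
  · intro k
    exact continuous_const.mul (Fa_diff _).continuous
  · exact (integrableOn_ee 1 c).div_const _
  · intro k y
    refine (hb k _ (by simp)).trans ?_
    have : (Complex.exp (c + y * Complex.I)).re ≤ rexp c := by
      refine (Complex.re_le_norm _).trans ?_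
      rw [Complex.norm_exp]; simp
    have h2 : ((c : ℂ) + y * Complex.I).re = c := by simp
    rw [h2]
    gcongr
  · intro k x hx
    refine (hb k _ (by simpa using hx.le)).trans (le_of_eq ?_)
    rw [exp_top, Complex.neg_re, Complex.ofReal_re]; simp
  · intro k x hx
    refine (hb k _ (by simpa using hx.le)).trans (le_of_eq ?_)
    rw [exp_bot, Complex.neg_re, Complex.ofReal_re]; simp
  · intro w hw
    have hq : Complex.exp (ρ * w) ≠ 0 := Complex.exp_ne_zero _
    have hqn : 2 * X ≤ ‖Complex.exp (ρ * w)‖ := by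
      rw [Complex.norm_exp, Complex.re_ofReal_mul, ← hec]
      gcongr
    have hlt : ‖-(X : ℂ) / Complex.exp (ρ * w)‖ < 1 := by
      rw [norm_div, norm_neg, Complex.norm_real, Real.norm_of_nonneg hX.le,
        div_lt_one (by linarith)]
      linarith
    have hg := (hasSum_geometric_of_norm_lt_one hlt).mul_left
      (Complex.exp (Complex.exp w + w) / Complex.exp (ρ * w))
    have hden : Complex.exp (ρ * w) + X ≠ 0 := by
      intro h
      have h' : Complex.exp (ρ * w) = -(X : ℂ) := eq_neg_of_add_eq_zero_left h
      rw [h', norm_neg, Complex.norm_real, Real.norm_of_nonneg hX.le] at hqn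
      linarith
    refine hasSum_congr_aux hg ?_ ?_
    · intro k
      have : Fa (ρ * (k + 1)) w = Complex.exp (Complex.exp w + w) / Complex.exp (ρ * w) ^ (k + 1) := by
        rw [Fa, ← Complex.exp_nat_mul, ← Complex.exp_sub]; congr 1; push_cast; ring
      rw [this, div_pow, pow_succ]
      field_simp
    · rw [Gx]
      have : (1 - -(X : ℂ) / Complex.exp (ρ * w)) = (Complex.exp (ρ * w) + X) / Complex.exp (ρ * w) := by
        field_simp; ring
      rw [this]
      field_simp

/-- The quadratic denominator. -/
noncomputable def Qd (ρ X q : ℝ) : ℝ := q ^ 2 + 2 * X * q * Real.cos (π * ρ) + X ^ 2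

/-- The real density. -/
noncomputable def hx (ρ X x : ℝ) : ℝ :=
  rexp (-rexp x + (1 + ρ) * x) / Qd ρ X (rexp (ρ * x))

lemma sin_pos' {ρ : ℝ} (hρ : 0 < ρ) (hρ' : ρ < 1) : 0 < Real.sin (π * ρ) :=
  Real.sin_pos_of_pos_of_lt_pi (by positivity) (by nlinarith [pi_pos])

lemma Qd_ge (ρ X q : ℝ) : X ^ 2 * Real.sin (π * ρ) ^ 2 ≤ Qd ρ X q := by
  unfold Qd
  nlinarith [sq_nonneg (q + X * Real.cos (π * ρ)), Real.sin_sq_add_cos_sq (π * ρ)]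

lemma Qd_pos {ρ X : ℝ} (hρ : 0 < ρ) (hρ' : ρ < 1) (hX : 0 < X) (q : ℝ) : 0 < Qd ρ X q := by
  refine lt_of_lt_of_le ?_ (Qd_ge ρ X q)
  have := sin_pos' hρ hρ'
  positivity

lemma hx_int {ρ X : ℝ} (hρ : 0 < ρ) (hρ' : ρ < 1) (hX : 0 < X) : Integrable (hx ρ X) := by
  have hs := sin_pos' hρ hρ'
  refine ((integrable_ee (b := 1 + ρ) (by linarith)).div_const (X ^ 2 * Real.sin (π * ρ) ^ 2)).mono' ?_ ?_
  · refine Continuous.aestronglyMeasurable ?_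
    unfold hx
    refine Continuous.div (by fun_prop) (by unfold Qd; fun_prop) fun x => (Qd_pos hρ hρ' hX _).ne'
  · refine ae_of_all _ fun x => ?_
    have := Qd_pos hρ hρ' hX (rexp (ρ * x))
    rw [hx, Real.norm_of_nonneg (by positivity)]
    gcongr
    exact Qd_ge _ _ _

lemma Gx_D {ρ X : ℝ} (hρ : 0 < ρ) (hρ' : ρ < 1) (hX : 0 < X) (x : ℝ) :
    Gx ρ X (x + π * Complex.I) - Gx ρ X (x - π * Complex.I) =
      (hx ρ X x : ℂ) * (2 * Real.sin (π * ρ) * Complex.I) := by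
  have hQ := Qd_pos hρ hρ' hX (rexp (ρ * x))
  have hd1 := den_ne hρ hρ' hX (mem_strip_top x)
  have hd2 := den_ne hρ hρ' hX (mem_strip_bot x)
  have e1 : Complex.exp (ρ * (x + π * Complex.I)) =
      (rexp (ρ * x) : ℂ) * (Real.cos (π * ρ) + Real.sin (π * ρ) * Complex.I) := by
    have : (ρ : ℂ) * (x + π * Complex.I) = ((ρ * x : ℝ) : ℂ) + ((π * ρ : ℝ) : ℂ) * Complex.I := by
      push_cast; ring
    rw [this, Complex.exp_add, Complex.exp_mul_I, Complex.ofReal_exp, Complex.ofReal_cos, Complex.ofReal_sin]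
  have e2 : Complex.exp (ρ * (x - π * Complex.I)) =
      (rexp (ρ * x) : ℂ) * (Real.cos (π * ρ) - Real.sin (π * ρ) * Complex.I) := by
    have : (ρ : ℂ) * (x - π * Complex.I) = ((ρ * x : ℝ) : ℂ) + (-(π * ρ : ℝ) : ℂ) * Complex.I := by
      push_cast; ring
    rw [this, Complex.exp_add, Complex.exp_mul_I, Complex.ofReal_exp, Complex.ofReal_cos, Complex.ofReal_sin,
      Complex.cos_neg, Complex.sin_neg]
    ring
  have n1 : Complex.exp (Complex.exp (x + π * Complex.I) + (x + π * Complex.I)) =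
      -(rexp (-rexp x + x) : ℂ) := by
    rw [Complex.exp_add, exp_top]
    push_cast
    rw [Complex.exp_add]; ring
  have n2 : Complex.exp (Complex.exp (x - π * Complex.I) + (x - π * Complex.I)) =
      -(rexp (-rexp x + x) : ℂ) := by
    rw [Complex.exp_add, exp_bot]
    push_cast
    rw [Complex.exp_add]; ring
  have hnum : rexp (-rexp x + (1 + ρ) * x) = rexp (-rexp x + x) * rexp (ρ * x) := by
    rw [← Real.exp_add]; congr 1; ring
  rw [e1] at hd1
  rw [e2] at hd2
  rw [Gx, Gx, n1, n2, e1, e2, hx, hnum]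
  set q := rexp (ρ * x)
  set E := rexp (-rexp x + x)
  have hsc := Real.sin_sq_add_cos_sq (π * ρ)
  set s := Real.sin (π * ρ)
  have hQc : ((q : ℂ) * (Real.cos (π * ρ) + s * Complex.I) + X) *
      ((q : ℂ) * (Real.cos (π * ρ) - s * Complex.I) + X) = (Qd ρ X q : ℂ) := by
    have h2 := congrArg (fun x : ℝ => (x : ℂ)) hsc
    unfold Qd
    push_cast at h2 ⊢
    linear_combination (q : ℂ) ^ 2 * h2 - (q : ℂ) ^ 2 * (s : ℂ) ^ 2 * Complex.I_mul_I
  rw [div_sub_div _ _ hd1 hd2, hQc]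
  push_cast
  ring

lemma hk_Gx {ρ X : ℝ} (hρ : 0 < ρ) (hρ' : ρ < 1) (hX : 0 < X) (c : ℝ) :
    hk (Gx ρ X) c = ((∫ x, hx ρ X x : ℝ) : ℂ) * (2 * Real.sin (π * ρ) * Complex.I) := by
  have hd := Gx_diff hρ hρ' hX
  have hi : Integrable (fun x : ℝ => Gx ρ X (x + π * Complex.I) - Gx ρ X (x - π * Complex.I)) := by
    simp_rw [Gx_D hρ hρ' hX]
    exact (hx_int hρ hρ' hX).ofReal.mul_const _
  rw [hk_limit hd c hi (vert_lim hd (L := 0) (b := fun c => rexp (rexp c + c) / (X / 2)) ?_ ?_)]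
  · simp_rw [Gx_D hρ hρ' hX]
    rw [integral_mul_const, integral_complex_ofReal]
    simp
  · have h : Tendsto (fun c => rexp (rexp c + c)) atBot (𝓝 0) :=
      Real.tendsto_exp_atBot.comp (Real.tendsto_exp_atBot.add_atBot tendsto_id)
    simpa using h.div_const (X / 2)
  · have h1 : Tendsto (fun c : ℝ => rexp (ρ * c)) atBot (𝓝 0) :=
      Real.tendsto_exp_atBot.comp (tendsto_id.const_mul_atBot hρ)
    filter_upwards [h1.eventually_le_const (by positivity : (0:ℝ) < X / 2)] with c hc y
    rw [sub_zero, Gx, norm_div]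
    have h2 : ((c : ℂ) + y * Complex.I).re = c := by simp
    have h3 : ‖Complex.exp (ρ * (c + y * Complex.I))‖ = rexp (ρ * c) := by
      rw [Complex.norm_exp, Complex.re_ofReal_mul, h2]
    have h4 : X / 2 ≤ ‖Complex.exp (ρ * (c + y * Complex.I)) + X‖ := by
      have := norm_sub_le (Complex.exp (ρ * (c + y * Complex.I)) + X) (Complex.exp (ρ * (c + y * Complex.I)))
      rw [add_sub_cancel_left, Complex.norm_real, Real.norm_of_nonneg hX.le, h3] at this
      linarith
    have h5 : ‖Complex.exp (Complex.exp (c + y * Complex.I) + (c + y * Complex.I))‖ ≤ rexp (rexp c + c) := by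
      have : (Complex.exp (c + y * Complex.I)).re ≤ rexp c := by
        refine (Complex.re_le_norm _).trans ?_
        rw [Complex.norm_exp]; simp
      rw [Complex.norm_exp, Complex.add_re, h2]
      gcongr
    gcongr

lemma series_rep {ρ X : ℝ} (hρ : 0 < ρ) (hρ' : ρ < 1) (hX : 0 < X) :
    HasSum (fun k : ℕ => (-X) ^ k / Real.Gamma (ρ * (k + 1)))
      (Real.sin (π * ρ) / π * ∫ x, hx ρ X x) := by
  have h := (Gx_hasSum hρ hX).mul_left ((2 * π * Complex.I)⁻¹)
  rw [hk_Gx hρ hρ' hX] at h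
  have hpi : (π : ℂ) ≠ 0 := by exact_mod_cast pi_ne_zero
  rw [← Complex.hasSum_ofReal] 
  refine hasSum_congr_aux h ?_ ?_
  · intro k
    rw [hankel (by positivity)]
    push_cast
    field_simp
  · push_cast
    field_simp

lemma hx_lower {ρ X : ℝ} (hρ : 0 < ρ) (hρ' : ρ < 1) (hX : 0 < X) :
    Real.Gamma (1 + ρ) / X ^ 2 - 5 / 2 * Real.Gamma (1 + 2 * ρ) / X ^ 3 ≤ ∫ x, hx ρ X x := by
  have i1 := (integrable_ee (b := 1 + ρ) (by linarith)).div_const (X ^ 2)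
  have i2 := ((integrable_ee (b := 1 + 2 * ρ) (by linarith)).const_mul (5 / 2)).div_const (X ^ 3)
  have h := integral_mono (i1.sub i2) (hx_int hρ hρ' hX) ?_
  · rw [integral_sub' i1 i2, integral_div, integral_div, integral_const_mul, integral_ee (by linarith),
      integral_ee (by linarith)] at h
    exact h
  · intro x
    simp only [Pi.sub_apply]
    have hQ := Qd_pos hρ hρ' hX (rexp (ρ * x))
    have e2 : rexp (-rexp x + (1 + 2 * ρ) * x) = rexp (-rexp x + (1 + ρ) * x) * rexp (ρ * x) := by
      rw [← Real.exp_add]; congr 1; ring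
    rw [hx, e2]
    have hE := Real.exp_pos (-rexp x + (1 + ρ) * x)
    have hq := Real.exp_pos (ρ * x)
    set q := rexp (ρ * x)
    set E := rexp (-rexp x + (1 + ρ) * x)
    rw [le_div_iff₀ hQ]
    have hid : (E / X ^ 2 - 5 / 2 * (E * q) / X ^ 3) * Qd ρ X q =
        E * (((1 - 5 / 2 * (q / X)) * (1 + 2 * Real.cos (π * ρ) * (q / X) + (q / X) ^ 2))) := by
      unfold Qd; field_simp; ring
    rw [hid]
    have hy : 0 < q / X := by positivity
    set y := q / X
    have hc1 := Real.cos_le_one (π * ρ)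
    have hc2 := Real.neg_one_le_cos (π * ρ)
    set co := Real.cos (π * ρ)
    have hneg : 2 * co + y - 5 / 2 - 5 * co * y - 5 / 2 * y ^ 2 ≤ 0 := by
      have a1 : (1 + co) * (-1 / 2 - 4 * y - 5 / 2 * y ^ 2) ≤ 0 :=
        mul_nonpos_of_nonneg_of_nonpos (by linarith) (by nlinarith)
      have a2 : (1 - co) * (-9 / 2 + 6 * y - 5 / 2 * y ^ 2) ≤ 0 :=
        mul_nonpos_of_nonneg_of_nonpos (by linarith) (by nlinarith [sq_nonneg (y - 6 / 5)])
      linarith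
    have : (1 - 5 / 2 * y) * (1 + 2 * co * y + y ^ 2) ≤ 1 := by nlinarith
    nlinarith

lemma ml_hasDerivAt {ρ X : ℝ} (hρ : 0 < ρ) (hρ' : ρ < 1) (hX : 0 < X) :
    HasDerivAt (mittagLeffler ρ) (ρ⁻¹ * (Real.sin (π * ρ) / π * ∫ x, hx ρ X x)) (-X) := by
  have hG : ∀ k : ℕ, Real.Gamma (ρ * ((k + 1 : ℕ) : ℝ) + 1) = ρ * (k + 1) * Real.Gamma (ρ * (k + 1)) := by
    intro k
    push_cast
    exact Real.Gamma_add_one (by positivity)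
  have hGp : ∀ k : ℕ, 0 < Real.Gamma (ρ * (k + 1)) := fun k => Real.Gamma_pos_of_pos (by positivity)
  have hterm : ∀ (k : ℕ) (z : ℝ), ((k + 1 : ℕ) : ℝ) * z ^ (k + 1 - 1) / Real.Gamma (ρ * ((k + 1 : ℕ) : ℝ) + 1) =
      ρ⁻¹ * (z ^ k / Real.Gamma (ρ * (k + 1))) := by
    intro k z
    have := hGp k
    rw [hG]
    push_cast
    field_simp
  have hu : Summable (fun k : ℕ => (k : ℝ) * (X + 1) ^ (k - 1) / Real.Gamma (ρ * k + 1)) := by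
    rw [← summable_nat_add_iff 1]
    simp_rw [hterm]
    refine Summable.mul_left _ ?_
    refine ((series_rep hρ hρ' (X := X + 1) (by linarith)).summable.norm).congr fun k => ?_
    rw [norm_div, norm_pow, norm_neg, Real.norm_of_nonneg (by linarith : (0:ℝ) ≤ X + 1),
      Real.norm_of_nonneg (hGp k).le]
  have hsum : (∑' k : ℕ, (k : ℝ) * (-X) ^ (k - 1) / Real.Gamma (ρ * k + 1)) =
      ρ⁻¹ * (Real.sin (π * ρ) / π * ∫ x, hx ρ X x) := by
    refine HasSum.tsum_eq ?_
    rw [← hasSum_nat_add_iff' 1]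
    simp_rw [hterm]
    simpa using (series_rep hρ hρ' hX).mul_left ρ⁻¹
  rw [← hsum]
  refine hasDerivAt_tsum_of_isPreconnected (g := fun (k : ℕ) (z : ℝ) => z ^ k / Real.Gamma (ρ * k + 1))
    (g' := fun (k : ℕ) (z : ℝ) => (k : ℝ) * z ^ (k - 1) / Real.Gamma (ρ * k + 1))
    (t := Ioo (-(X + 1)) (X + 1)) (y₀ := 0) hu isOpen_Ioo
    isPreconnected_Ioo ?_ ?_ ?_ ?_ ?_
  · intro n y _
    exact (hasDerivAt_pow n y).div_const _
  · intro n y hy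
    have hg : 0 < Real.Gamma (ρ * n + 1) := Real.Gamma_pos_of_pos (by positivity)
    rw [norm_div, norm_mul, norm_pow, Real.norm_of_nonneg hg.le, Real.norm_of_nonneg (Nat.cast_nonneg n)]
    have : ‖y‖ ≤ X + 1 := by
      rw [Real.norm_eq_abs]; exact abs_le.2 ⟨hy.1.le, hy.2.le⟩
    gcongr
  · constructor <;> linarith
  · refine summable_of_ne_finset_zero (s := {0}) fun k hk => ?_
    have : k ≠ 0 := by simpa using hk
    simp [this]
  · constructor <;> linarith

lemma ml_lower {ρ X : ℝ} (hρ : 0 < ρ) (hρ' : ρ < 1) (hX : 0 < X) :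
    1 / (X * Real.Gamma (1 - ρ)) - 5 / X ^ 2 ≤
      X * (ρ⁻¹ * (Real.sin (π * ρ) / π * ∫ x, hx ρ X x)) := by
  have hs := sin_pos' hρ hρ'
  have hpi := pi_pos
  have hlow := hx_lower hρ hρ' hX
  have hG1 : Real.Gamma (1 + ρ) = ρ * Real.Gamma ρ := by
    rw [add_comm]; exact Real.Gamma_add_one hρ.ne'
  have hg := Real.Gamma_pos_of_pos hρ
  have hg' := Real.Gamma_pos_of_pos (by linarith : 0 < 1 - ρ)
  have href : Real.sin (π * ρ) / π * Real.Gamma ρ = 1 / Real.Gamma (1 - ρ) := by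
    have h := Real.Gamma_mul_Gamma_one_sub ρ
    rw [eq_div_iff hs.ne'] at h
    rw [eq_div_iff hg'.ne']
    calc _ = (Real.Gamma ρ * Real.Gamma (1 - ρ) * Real.sin (π * ρ)) / π := by ring
      _ = 1 := by rw [h, div_self hpi.ne']
  have hG2 : Real.Gamma (1 + 2 * ρ) ≤ 2 := by
    have h := Real.convexOn_Gamma.2 (mem_Ioi.2 (by norm_num : (0:ℝ) < 1))
      (mem_Ioi.2 (by norm_num : (0:ℝ) < 3)) (by linarith : 0 ≤ 1 - ρ) hρ.le (by ring)
    have h3 : Real.Gamma 3 = 2 := by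
      have := Real.Gamma_add_one (s := 2) (by norm_num)
      rw [Real.Gamma_two] at this
      rw [show (3 : ℝ) = 2 + 1 by norm_num, this]
      norm_num
    simp only [smul_eq_mul, Real.Gamma_one, h3] at h
    rw [show (1 - ρ) * 1 + ρ * 3 = 1 + 2 * ρ by ring] at h
    linarith
  have hG2p := Real.Gamma_pos_of_pos (by linarith : 0 < 1 + 2 * ρ)
  have hsin : Real.sin (π * ρ) / (π * ρ) ≤ 1 := by
    rw [div_le_one (by positivity)]
    exact Real.sin_le (by positivity)
  have hsin0 : 0 ≤ Real.sin (π * ρ) / (π * ρ) := by positivity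
  have hstep : X * (ρ⁻¹ * (Real.sin (π * ρ) / π *
      (Real.Gamma (1 + ρ) / X ^ 2 - 5 / 2 * Real.Gamma (1 + 2 * ρ) / X ^ 3))) ≤
      X * (ρ⁻¹ * (Real.sin (π * ρ) / π * ∫ x, hx ρ X x)) := by gcongr
  refine le_trans ?_ hstep
  have hid : X * (ρ⁻¹ * (Real.sin (π * ρ) / π *
      (Real.Gamma (1 + ρ) / X ^ 2 - 5 / 2 * Real.Gamma (1 + 2 * ρ) / X ^ 3))) =
      (Real.sin (π * ρ) / π * Real.Gamma ρ) / X -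
        5 / 2 * (Real.sin (π * ρ) / (π * ρ) * Real.Gamma (1 + 2 * ρ)) / X ^ 2 := by
    rw [hG1]; field_simp
  rw [hid, href, div_div, mul_comm (Real.Gamma (1 - ρ)) X]
  have : Real.sin (π * ρ) / (π * ρ) * Real.Gamma (1 + 2 * ρ) ≤ 1 * 2 := by gcongr
  have : 5 / 2 * (Real.sin (π * ρ) / (π * ρ) * Real.Gamma (1 + 2 * ρ)) / X ^ 2 ≤ 5 / X ^ 2 := by
    gcongr; linarith
  linarith

end MLaux

/-- For `ρ ∈ (0,1)`, `t₀ > 1`, `λ > 1` and `σ ∈ (0,1)`, the function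
`σ ↦ E_ρ(−λ^σ t₀^ρ)` is differentiable at `σ` with
`d/dσ E_ρ(−λ^σ t₀^ρ) < −ln λ/(λ^σ t₀^ρ Γ(1−ρ)) + 5 ln λ/(λ^{2σ} t₀^ρ)`. -/
theorem stmt9 (ρ t₀ lam : ℝ) (hρ : 0 < ρ) (hρ' : ρ < 1) (ht₀ : 1 < t₀) (hlam : 1 < lam) :
    ∀ σ ∈ Set.Ioo (0 : ℝ) 1,
      DifferentiableAt ℝ (fun σ : ℝ => mittagLeffler ρ (-(lam ^ σ * t₀ ^ ρ))) σ ∧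
      deriv (fun σ : ℝ => mittagLeffler ρ (-(lam ^ σ * t₀ ^ ρ))) σ <
        -(Real.log lam) / (lam ^ σ * t₀ ^ ρ * Real.Gamma (1 - ρ)) +
          (5 * Real.log lam) / (lam ^ (2 * σ) * t₀ ^ ρ) := by
  intro σ _
  have hl0 : 0 < lam := by linarith
  have hT : 1 < t₀ ^ ρ := Real.one_lt_rpow ht₀ hρ
  have hA : 0 < lam ^ σ := Real.rpow_pos_of_pos hl0 σ
  have hL : 0 < Real.log lam := Real.log_pos hlam
  have hA2 : lam ^ (2 * σ) = (lam ^ σ) ^ 2 := by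
    rw [mul_comm, Real.rpow_mul hl0.le]; norm_cast
  have hX : 0 < lam ^ σ * t₀ ^ ρ := by positivity
  have hin : HasDerivAt (fun σ : ℝ => -(lam ^ σ * t₀ ^ ρ)) (-(lam ^ σ * Real.log lam * t₀ ^ ρ)) σ := by
    have h1 : HasDerivAt (fun σ : ℝ => lam ^ σ) (lam ^ σ * Real.log lam) σ :=
      (Real.hasStrictDerivAt_const_rpow hl0 σ).hasDerivAt
    exact (h1.mul_const _).neg
  have hd := (MLaux.ml_hasDerivAt hρ hρ' hX).comp σ hin
  have hlow := MLaux.ml_lower hρ hρ' hX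
  have hd' : HasDerivAt (fun σ : ℝ => mittagLeffler ρ (-(lam ^ σ * t₀ ^ ρ))) _ σ := hd
  refine ⟨hd'.differentiableAt, ?_⟩
  rw [hd'.deriv, hA2]
  set S := ρ⁻¹ * (Real.sin (π * ρ) / π * ∫ x, MLaux.hx ρ (lam ^ σ * t₀ ^ ρ) x)
  have hg' := Real.Gamma_pos_of_pos (by linarith : 0 < 1 - ρ)
  have e1 : S * -(lam ^ σ * Real.log lam * t₀ ^ ρ) = -(Real.log lam * ((lam ^ σ * t₀ ^ ρ) * S)) := by ring
  have e2 : -(Real.log lam) / (lam ^ σ * t₀ ^ ρ * Real.Gamma (1 - ρ)) =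
      -(Real.log lam * (1 / (lam ^ σ * t₀ ^ ρ * Real.Gamma (1 - ρ)))) := by ring
  have e3 : Real.log lam * (5 / (lam ^ σ * t₀ ^ ρ) ^ 2) < (5 * Real.log lam) / ((lam ^ σ) ^ 2 * t₀ ^ ρ) := by
    rw [mul_div_assoc', mul_comm (Real.log lam) 5]
    refine div_lt_div_of_pos_left (by positivity) (by positivity) ?_
    rw [mul_pow]
    have : t₀ ^ ρ < (t₀ ^ ρ) ^ 2 := by nlinarith
    gcongr
  rw [e1, e2]
  have := mul_le_mul_of_nonneg_left hlow hL.le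
  rw [mul_sub] at this
  linarith
end
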